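/- arXiv:2001.01874 — 2 statements merged into one kernel-verified Lean document; each statement's English description precedes it below -/
import Mathlib

section
/- Let X be a simply connected, locally simply connected metric space, D ⊂ X countable dense, and f a proper loop in E(X,D) based at x ∈ X. If the associated word W^f is equivalent to the empty word (i.e. W^f_F = 1 in the free group on F for every finite F ⊂ D), then f is null-homotopic in E(X,D). -/
open Classical

noncomputable section

namespace EarringPaper

variable {X : Type*} [MetricSpace X]

/-- The earring space `E(X,D)`: the base copy `X × {o}` together with a copy of the
circle attached at each point `d n` of the countable set `D = range d`. -/
structure ESp (X : Type*) [MetricSpace X] (d : ℕ+ → X) where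
  pt : X × Circle
  mem : pt.2 = 1 ∨ ∃ n : ℕ+, pt.1 = d n

/-- The scaling weight `1/n` at `x = d n` (and `0` off `D`). -/
def wt (d : ℕ+ → X) (x : X) : ℝ :=
  if h : ∃ n : ℕ+, x = d n then 1 / (h.choose : ℝ) else 0

/-- The earring metric `ρ` on `E(X,D)`. -/
def rho (d : ℕ+ → X) (p q : X × Circle) : ℝ :=
  if p.1 = q.1 ∧ ∃ n : ℕ+, p.1 = d n then wt d p.1 * dist p.2 q.2
  else dist p.1 q.1 + wt d p.1 * dist p.2 1 + wt d q.1 * dist q.2 1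

/-- `E(X,D)` carries the topology of the metric `ρ` (generated by the `ρ`-balls). -/
instance (d : ℕ+ → X) : TopologicalSpace (ESp X d) :=
  TopologicalSpace.generateFrom
    {s | ∃ (p : ESp X d) (r : ℝ), s = {q : ESp X d | rho d p.pt q.pt < r}}

/-- The points of the base copy `X × {o}` of `X` inside `E(X,D)`. -/
def InX {d : ℕ+ → X} (p : ESp X d) : Prop := p.pt.2 = 1

/-- The inclusion `X → E(X,D)`, `x ↦ (x,o)`. -/
def emb (d : ℕ+ → X) (x : X) : ESp X d := ⟨(x, 1), Or.inl rfl⟩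

/-- `f` traverses, on `[u,v]`, the fixed winding of the circle attached at `d n`. -/
def IsWinding (d : ℕ+ → X) (f : ℝ → ESp X d) (u v : ℝ) (n : ℕ+) : Prop :=
  ∃ φ : ℝ → ℝ, ContinuousOn φ (Set.Icc u v) ∧ MonotoneOn φ (Set.Icc u v) ∧
    φ u = 0 ∧ φ v = 1 ∧
    ∀ t ∈ Set.Icc u v, (f t).pt = (d n, Circle.exp (2 * Real.pi * φ t))

/-- `f` traverses, on `[u,v]`, the reverse of the fixed winding of the circle at `d n`. -/
def IsRevWinding (d : ℕ+ → X) (f : ℝ → ESp X d) (u v : ℝ) (n : ℕ+) : Prop :=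
  ∃ φ : ℝ → ℝ, ContinuousOn φ (Set.Icc u v) ∧ MonotoneOn φ (Set.Icc u v) ∧
    φ u = 0 ∧ φ v = 1 ∧
    ∀ t ∈ Set.Icc u v, (f t).pt = (d n, Circle.exp (-(2 * Real.pi) * φ t))

/-- A proper path in `E(X,D)` (with domain `[a,b]`): its endpoints lie in `X`, and each
maximal excursion out of `X` returning to the same point is a single winding or reverse
winding of one of the attached circles. -/
def IsProper (d : ℕ+ → X) (f : ℝ → ESp X d) (a b : ℝ) : Prop :=
  ContinuousOn f (Set.Icc a b) ∧ InX (f a) ∧ InX (f b) ∧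
  ∀ u v, a ≤ u → u < v → v ≤ b → InX (f u) → InX (f v) →
    (∀ t ∈ Set.Ioo u v, ¬InX (f t)) → f u = f v →
    ∃ n : ℕ+, IsWinding d f u v n ∨ IsRevWinding d f u v n

/-- Homotopy of paths `[a,b] → E(X,D)` relative to the endpoints. -/
def HtpyRel (d : ℕ+ → X) (f g : ℝ → ESp X d) (a b : ℝ) : Prop :=
  ∃ H : ℝ × ℝ → ESp X d,
    ContinuousOn H (Set.Icc a b ×ˢ Set.Icc (0 : ℝ) 1) ∧
    (∀ s ∈ Set.Icc a b, H (s, 0) = f s ∧ H (s, 1) = g s) ∧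
    (∀ t ∈ Set.Icc (0 : ℝ) 1, H (a, t) = f a ∧ H (b, t) = f b)

/-- `Y` is locally simply connected: every point has a neighborhood basis of simply
connected neighborhoods. -/
def LocSimplyConnected (Y : Type*) [TopologicalSpace Y] : Prop :=
  ∀ y : Y, ∀ U ∈ nhds y, ∃ V ∈ nhds y, V ⊆ U ∧ SimplyConnectedSpace V

end EarringPaper

noncomputable section

namespace EarringPaper

/-- An infinitary word over the alphabet `D`: a function from a countable linearly
ordered index set to the letters `a`/`a⁻` (`(a, true)`/`(a, false)`), in which each
letter occurs only finitely often. -/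
structure InfWord (D : Type*) where
  ι : Type
  [ord : LinearOrder ι]
  [cnt : Countable ι]
  letter : ι → D × Bool
  finOcc : ∀ a : D, {i : ι | (letter i).1 = a}.Finite

attribute [instance] InfWord.ord InfWord.cnt

variable {D : Type*}

lemma InfWord.finF (W : InfWord D) (F : Finset D) :
    {i : W.ι | (W.letter i).1 ∈ F}.Finite := by
  have h : {i : W.ι | (W.letter i).1 ∈ F} = ⋃ a ∈ F, {i : W.ι | (W.letter i).1 = a} := by
    ext i; simp
  rw [h]
  exact F.finite_toSet.biUnion fun a _ => W.finOcc a

/-- The finite word `W_F`: the restriction of `W` to the letters from the finite set `F`,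
evaluated as an element of the free group on `D`. -/
def InfWord.evalF (W : InfWord D) (F : Finset D) : FreeGroup D :=
  (((W.finF F).toFinset.sort (· ≤ ·)).map fun i => FreeGroup.mk [W.letter i]).prod

/-- `W` is equivalent to the empty word: all its finite restrictions `W_F` are trivial. -/
def InfWord.IsNull (W : InfWord D) : Prop := ∀ F : Finset D, W.evalF F = 1

/-- The subword of `W` supported on a set `S` of indices. -/
def InfWord.restrict (W : InfWord D) (S : Set W.ι) : InfWord D where
  ι := S
  letter i := W.letter i.val
  finOcc a := by
    have h : {i : S | (W.letter i.val).1 = a} =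
        Subtype.val ⁻¹' {i : W.ι | (W.letter i).1 = a} := rfl
    rw [h]
    exact (W.finOcc a).preimage Subtype.val_injective.injOn

/-- An order-convex set of indices (the support of a subword). -/
def IsConvexSub {W : InfWord D} (S : Set W.ι) : Prop :=
  ∀ i ∈ S, ∀ j ∈ S, ∀ k, i ≤ k → k ≤ j → k ∈ S

/-- An infinitary word is reduced if no nonempty subword is equivalent to the empty word. -/
def InfWord.Reduced (W : InfWord D) : Prop :=
  ∀ S : Set W.ι, S.Nonempty → IsConvexSub S → ¬(W.restrict S).IsNull

/-- A noncrossing inverse pairing on the infinitary word `W`. -/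
structure InfNCIP (W : InfWord D) (Γ : Set (W.ι × W.ι)) : Prop where
  lt : ∀ p ∈ Γ, p.1 < p.2
  inv : ∀ p ∈ Γ, (W.letter p.1).1 = (W.letter p.2).1 ∧
    (W.letter p.1).2 = !(W.letter p.2).2
  disj : ∀ p ∈ Γ, ∀ q ∈ Γ, p ≠ q → p.1 ≠ q.1 ∧ p.1 ≠ q.2 ∧ p.2 ≠ q.1 ∧ p.2 ≠ q.2
  noncross : ∀ p ∈ Γ, ∀ q ∈ Γ, ¬(p.1 < q.1 ∧ q.1 < p.2 ∧ p.2 < q.2)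
  covered : ∀ p ∈ Γ, ∀ k, p.1 ≤ k → k ≤ p.2 → ∃ q ∈ Γ, q.1 = k ∨ q.2 = k

end EarringPaper

namespace EarringPaper

/-- `W` is the word `W^f` read off from the proper path `f : [a,b] → E(X,D)`, realized by
the family of disjoint open intervals `(u i, v i)`: these intervals are exactly the
components of `f⁻¹(E(X,D)∖X)`, listed in order, and on the `i`-th of them `f` performs the
winding (or reverse winding, according to the sign of the letter) of the circle attached
at `d ((W.letter i).1)`. -/
def Realizes {X : Type*} [MetricSpace X] (d : ℕ+ → X) (f : ℝ → ESp X d) (a b : ℝ)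
    (W : InfWord ℕ+) (u v : W.ι → ℝ) : Prop :=
  (∀ i, a ≤ u i ∧ u i < v i ∧ v i ≤ b) ∧
  (∀ i j, i < j → v i ≤ u j) ∧
  (∀ i, if (W.letter i).2 then IsWinding d f (u i) (v i) (W.letter i).1
        else IsRevWinding d f (u i) (v i) (W.letter i).1) ∧
  (∀ t ∈ Set.Icc a b, InX (f t) ↔ ∀ i, t ∉ Set.Ioo (u i) (v i))

end EarringPaper

/-!
Put the parameter interval `[a, b]` on the parabola `t ↦ (t, t ^ 2)`; the convex lens between the
parabola and its chord over `[a, b]` is the domain of the homotopy. Cancellation in free groups and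
a compactness argument turn triviality of all finite restrictions of the word into a noncrossing
pairing of its letters with inverse letters. Joining the points of paired intervals by chords gives
a closed system of chords along which the base component of `f` is constant. The regions of the lens
between these chords are convex, and the oscillation of the boundary values tends to zero along the
regions, so that simple connectedness fills in every region and local simple connectedness fills in
all but finitely many of them within small sets; the result is a continuous map of the lens to `X`.
On each attached circle, the windings of paired letters cancel across the strip of chords that joins
their intervals, and the strip is mapped to the base point `d n`. So the map to `X` and the maps to
the circles glue to a map from the lens to `E(X,D)` that is `f` on the parabola and constant on the
outer chord.
-/

namespace EarringPaper

open Set Filter Topology Metric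
open scoped ENNReal

section Topology

theorem exists_continuousOn_image_of_isCompact {A B Y : Type*} [TopologicalSpace A]
    [TopologicalSpace B] [T2Space B] [TopologicalSpace Y] [Nonempty Y] {T : Set A}
    (hT : IsCompact T) {p : A → B} (hp : ContinuousOn p T) {F : A → Y} (hF : ContinuousOn F T)
    (hpF : ∀ x ∈ T, ∀ y ∈ T, p x = p y → F x = F y) :
    ∃ k : B → Y, ContinuousOn k (p '' T) ∧ ∀ x ∈ T, k (p x) = F x := by
  have hfactors : (T.domRestrict F).FactorsThrough (T.domRestrict p) :=
    fun x y hxy => hpF x x.2 y y.2 hxy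
  let k : B → Y :=
    Function.extend (T.domRestrict p) (T.domRestrict F) fun _ => Classical.arbitrary Y
  have hk : ∀ x ∈ T, k (p x) = F x := fun x hx => hfactors.extend_apply _ ⟨x, hx⟩
  have : CompactSpace T := isCompact_iff_compactSpace.1 hT
  have hquot : IsQuotientMap ((mapsTo_image p T).restrict) :=
    .of_surjective_continuous (surjective_mapsTo_image_restrict p T) (hp.mapsToRestrict _)
  refine ⟨k, ?_, hk⟩
  rw [continuousOn_iff_continuous_domRestrict, hquot.continuous_iff]
  exact hF.domRestrict.congr fun x => (hk x x.2).symm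

theorem exists_tendsto_zero_of_forall_eventually {ι : Type*} [Countable ι] {α : ι → Type*}
    [∀ i, Nonempty (α i)] {s : ∀ i, α i → ℝ≥0∞}
    (hs : ∀ ε > 0, ∀ᶠ i in cofinite, ∃ c, s i c ≤ ε) :
    ∃ c : ∀ i, α i, Tendsto (fun i => s i (c i)) cofinite (𝓝 0) := by
  obtain ⟨ε, hε, hsum⟩ := ENNReal.exists_pos_sum_of_countable' one_ne_zero ι
  have hnear : ∀ i, ∃ c, s i c ≤ (⨅ c, s i c) + ε i := by
    intro i
    by_cases htop : ⨅ c, s i c = ∞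
    · exact ⟨Classical.arbitrary _, by simp [htop]⟩
    · obtain ⟨c, hc⟩ := iInf_lt_iff.1 (ENNReal.lt_add_right htop (hε i).ne')
      exact ⟨c, hc.le⟩
  choose c hc using hnear
  have hinf : Tendsto (fun i => ⨅ c, s i c) cofinite (𝓝 0) :=
    ENNReal.tendsto_nhds_zero.2 fun δ hδ =>
      (hs δ hδ).mono fun i ⟨c, hc⟩ => iInf_le_of_le c hc
  have hbound := hinf.add (ENNReal.tendsto_cofinite_zero_of_tsum_ne_top hsum.ne_top)
  rw [add_zero] at hbound
  exact ⟨c, tendsto_of_tendsto_of_tendsto_of_le_of_le tendsto_const_nhds hbound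
    (fun _ => zero_le) hc⟩

theorem exists_continuousMap_eqOn_eqOn {Y : Type*} [TopologicalSpace Y] [NormalSpace Y]
    {s t : Set Y} {f g : Y → ℝ} (hs : IsClosed s) (ht : IsClosed t) (hf : ContinuousOn f s)
    (hg : ContinuousOn g t) (hfg : EqOn f g (s ∩ t)) :
    ∃ G : C(Y, ℝ), EqOn G f s ∧ EqOn G g t := by
  have hGs : EqOn (s.piecewise f g) f s := fun y hy => piecewise_eq_of_mem _ _ _ hy
  have hGt : EqOn (s.piecewise f g) g t := fun y hy => by
    by_cases hys : y ∈ s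
    · rw [piecewise_eq_of_mem _ _ _ hys, hfg ⟨hys, hy⟩]
    · rw [piecewise_eq_of_notMem _ _ _ hys]
  have hcont := ((hf.congr hGs).union_of_isClosed (hg.congr hGt) hs ht).domRestrict
  obtain ⟨G, hG⟩ := ContinuousMap.exists_restrict_eq (hs.union ht) ⟨_, hcont⟩
  have hG' : EqOn G (s.piecewise f g) (s ∪ t) := fun y hy => DFunLike.congr_fun hG ⟨y, hy⟩
  exact ⟨G, (hG'.mono subset_union_left).trans hGs, (hG'.mono subset_union_right).trans hGt⟩

theorem nonempty_inter_frontier {E : Type*} [TopologicalSpace E] {s R : Set E}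
    (hs : IsPreconnected s) (hR : IsOpen R) (hsR : (s ∩ R).Nonempty) (hsub : ¬s ⊆ R) :
    (s ∩ frontier R).Nonempty := by
  contrapose! hsub
  refine hs.subset_of_closure_inter_subset hR hsR fun x hx => ?_
  by_contra hxR
  exact (hsub.subset ⟨hx.2, hx.1, hR.interior_eq.symm ▸ hxR⟩).elim

theorem notMem_sUnion_of_tendsto {E ι : Type*} [TopologicalSpace E] {𝓡 : Set (Set E)}
    (hopen : ∀ R ∈ 𝓡, IsOpen R) (hdisj : 𝓡.PairwiseDisjoint id) {l : Filter ι} [l.NeBot]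
    {R : ι → 𝓡} (hR : Tendsto R l cofinite) {m : ι → E} {m₀ : E}
    (hm : ∀ i, m i ∈ closure (R i : Set E)) (hlim : Tendsto m l (𝓝 m₀)) : m₀ ∉ ⋃₀ 𝓡 := by
  rintro ⟨T, hT, hm₀⟩
  obtain ⟨i, hne, hmT⟩ := ((hR.eventually (eventually_cofinite_ne ⟨T, hT⟩)).and
    (hlim.eventually ((hopen T hT).mem_nhds hm₀))).exists
  have hRT : Disjoint (R i : Set E) T := hdisj (R i).2 hT fun h => hne (Subtype.ext h)
  exact (hRT.closure_left (hopen T hT)).le_bot ⟨hm i, hmT⟩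

/-- The connected components of a subset `U` of a topological space, as subsets of the whole
space. -/
def components {E : Type*} [TopologicalSpace E] (U : Set E) : Set (Set E) :=
  connectedComponentIn U '' U

section Components

variable {E : Type*} [TopologicalSpace E] {U R : Set E}

theorem components.nonempty (hR : R ∈ components U) : R.Nonempty := by
  obtain ⟨x, hx, rfl⟩ := hR
  exact ⟨x, mem_connectedComponentIn hx⟩

theorem components.subset (hR : R ∈ components U) : R ⊆ U := by
  obtain ⟨x, -, rfl⟩ := hR
  exact connectedComponentIn_subset U x

theorem components.isPreconnected (hR : R ∈ components U) : IsPreconnected R := by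
  obtain ⟨x, -, rfl⟩ := hR
  exact isPreconnected_connectedComponentIn

theorem components.isOpen [LocallyConnectedSpace E] (hU : IsOpen U) (hR : R ∈ components U) :
    IsOpen R := by
  obtain ⟨x, -, rfl⟩ := hR
  exact hU.connectedComponentIn

theorem components.eq_connectedComponentIn (hR : R ∈ components U) {x : E} (hx : x ∈ R) :
    R = connectedComponentIn U x := by
  obtain ⟨y, -, rfl⟩ := hR
  exact connectedComponentIn_eq hx

theorem pairwiseDisjoint_components : (components U).PairwiseDisjoint id :=
  fun _ hR _ hT hne => disjoint_left.2 fun _ hxR hxT => hne <|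
    (components.eq_connectedComponentIn hR hxR).trans
      (components.eq_connectedComponentIn hT hxT).symm

theorem sUnion_components (U : Set E) : ⋃₀ components U = U :=
  (sUnion_subset fun _ => components.subset).antisymm fun _ hx =>
    ⟨_, mem_image_of_mem _ hx, mem_connectedComponentIn hx⟩

theorem countable_components [LocallyConnectedSpace E]
    [TopologicalSpace.SeparableSpace E] (hU : IsOpen U) :
    (components U).Countable :=
  pairwiseDisjoint_components.countable_of_isOpen (fun _ => components.isOpen hU)
    fun _ => components.nonempty

theorem components.disjoint_frontier [LocallyConnectedSpace E] (hU : IsOpen U)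
    (hR : R ∈ components U) : Disjoint (frontier R) U := by
  refine disjoint_left.2 fun x hx hxU => ?_
  obtain ⟨y, hyx, hyR⟩ := mem_closure_iff.1 hx.1 _ (hU.connectedComponentIn (x := x))
    (mem_connectedComponentIn hxU)
  have hRx : R = connectedComponentIn U x :=
    (components.eq_connectedComponentIn hR hyR).trans (connectedComponentIn_eq hyx).symm
  exact hx.2 <| (components.isOpen hU hR).interior_eq.symm ▸ hRx ▸ mem_connectedComponentIn hxU

end Components

end Topology

section NormedSpace

variable {E X : Type*} [NormedAddCommGroup E] [NormedSpace ℝ E]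

theorem continuousOn_union_sUnion_of_tendsto_ediam [PseudoEMetricSpace X] {L : Set E}
    {𝓡 : Set (Set E)} {K : E → X} (hL : IsClosed L) (hopen : ∀ R ∈ 𝓡, IsOpen R)
    (hfrontier : ∀ R ∈ 𝓡, frontier R ⊆ L) (hKL : ContinuousOn K L)
    (hKR : ∀ R ∈ 𝓡, ContinuousOn K (closure R))
    (hdiam : Tendsto (fun R : 𝓡 => ediam (K '' closure R)) cofinite (𝓝 0)) :
    ContinuousOn K (L ∪ ⋃₀ 𝓡) := by
  intro x hx
  by_cases hxR : x ∈ ⋃₀ 𝓡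
  · obtain ⟨R, hR, hxR⟩ := hxR
    exact ((hKR R hR).continuousAt
      (mem_of_superset ((hopen R hR).mem_nhds hxR) subset_closure)).continuousWithinAt
  have hxL : x ∈ L := hx.resolve_right hxR
  refine EMetric.tendsto_nhds.2 fun ε hε => ?_
  set large : Set 𝓡 := {R | ¬ediam (K '' closure (R : Set E)) < ε / 2}
  have : Finite large := (eventually_cofinite.1 <|
    hdiam.eventually_lt_const (ENNReal.half_pos hε.ne')).to_subtype
  set T : Set E := L ∪ ⋃ R : large, closure (R : Set E)
  have hKT : ContinuousOn K T := hKL.union_of_isClosed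
    ((locallyFinite_of_finite _).continuousOn_iUnion (fun _ => isClosed_closure)
      fun R => hKR R R.1.2) hL (isClosed_iUnion_of_finite fun _ => isClosed_closure)
  obtain ⟨δ, hδ, hball⟩ := Metric.mem_nhdsWithin_iff.1
    (EMetric.tendsto_nhds.1 (hKT x (.inl hxL)) (ε / 2) (ENNReal.half_pos hε.ne'))
  refine Metric.mem_nhdsWithin_iff.2 ⟨δ, hδ, ?_⟩
  rintro y ⟨hyx, hy⟩
  by_cases hyT : y ∈ T
  · exact (hball ⟨hyx, hyT⟩).trans_le ENNReal.half_le_self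
  obtain ⟨R, hR, hyR⟩ := hy.resolve_left fun h => hyT (.inl h)
  have hsmall : ediam (K '' closure R) < ε / 2 := by
    by_contra hRlarge
    exact hyT (.inr (mem_iUnion_of_mem ⟨⟨R, hR⟩, hRlarge⟩ (subset_closure hyR)))
  obtain ⟨w, hw, hwR⟩ := nonempty_inter_frontier (convex_segment y x).isPreconnected (hopen R hR)
    ⟨y, left_mem_segment ℝ y x, hyR⟩ fun h => hxR ⟨R, hR, h (right_mem_segment ℝ y x)⟩
  have hwx : w ∈ ball x δ := (convex_ball x δ).segment_subset hyx (mem_ball_self hδ) hw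
  calc edist (K y) (K x) ≤ edist (K y) (K w) + edist (K w) (K x) := edist_triangle _ _ _
    _ < ε / 2 + ε / 2 := ENNReal.add_lt_add
      ((edist_le_ediam_of_mem (mem_image_of_mem K (subset_closure hyR))
        (mem_image_of_mem K hwR.1)).trans_lt hsmall) (hball ⟨hwx, .inl (hfrontier R hR hwR)⟩)
    _ = ε := ENNReal.add_halves ε

/-- The part of `S` covered by the zero sets of the affine functionals in `𝓐`. For `S` convex these
zero sets cut `S` in slices; they need not be disjoint. -/
def lamination (S : Set E) (𝓐 : Set (E →ᴬ[ℝ] ℝ)) : Set E := {z ∈ S | ∃ ℓ ∈ 𝓐, ℓ z = 0}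

variable {S R : Set E} {𝓐 : Set (E →ᴬ[ℝ] ℝ)} {ℓ : E →ᴬ[ℝ] ℝ} {z w : E}

theorem mul_pos_of_isPreconnected {F : Type*} [TopologicalSpace F] {g : F → ℝ}
    {s : Set F} (hs : IsPreconnected s) (hg : ContinuousOn g s) (hne : ∀ x ∈ s, g x ≠ 0) {x y : F}
    (hx : x ∈ s) (hy : y ∈ s) : 0 < g x * g y := by
  by_contra! hle
  have hmem : (0 : ℝ) ∈ g '' s := by
    rcases mul_nonpos_iff.1 hle with ⟨h₁, h₂⟩ | ⟨h₁, h₂⟩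
    · exact hs.intermediate_value hy hx hg ⟨h₂, h₁⟩
    · exact hs.intermediate_value hx hy hg ⟨h₁, h₂⟩
  obtain ⟨p, hp, hzero⟩ := hmem
  exact hne p hp hzero

theorem mul_pos_of_mem_component (hR : R ∈ components (S \ lamination S 𝓐)) (hℓ : ℓ ∈ 𝓐)
    (hz : z ∈ R) (hw : w ∈ R) : 0 < ℓ z * ℓ w :=
  mul_pos_of_isPreconnected (components.isPreconnected hR) ℓ.continuous.continuousOn
    (fun _ hx h => (components.subset hR hx).2 ⟨(components.subset hR hx).1, ℓ, hℓ, h⟩) hz hw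

theorem convex_of_mem_components (hS : Convex ℝ S)
    (hR : R ∈ components (S \ lamination S 𝓐)) : Convex ℝ R := by
  refine convex_iff_segment_subset.2 fun z hz w hw => ?_
  rw [components.eq_connectedComponentIn hR hz]
  refine (convex_segment z w).isPreconnected.subset_connectedComponentIn
    (left_mem_segment ℝ z w) fun p hp =>
      ⟨hS.segment_subset (components.subset hR hz).1 (components.subset hR hw).1 hp, ?_⟩
  rintro ⟨-, ℓ, hℓ, hpℓ⟩
  have hhalf : Convex ℝ ((ℓ z • ℓ) ⁻¹' Ioi 0) :=
    (convex_Ioi 0).affine_preimage (ℓ z • ℓ : E →ᴬ[ℝ] ℝ).toAffineMap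
  have hpos : 0 < ℓ z * ℓ p := hhalf.segment_subset (mul_pos_of_mem_component hR hℓ hz hz)
    (mul_pos_of_mem_component hR hℓ hz hw) hp
  rw [hpℓ, mul_zero] at hpos
  exact hpos.false

theorem mul_nonneg_of_mem_closure_component (hR : R ∈ components (S \ lamination S 𝓐))
    (hℓ : ℓ ∈ 𝓐) (hz : z ∈ closure R) (hw : w ∈ closure R) : 0 ≤ ℓ z * ℓ w := by
  have hclosed : IsClosed {p : E × E | 0 ≤ ℓ p.1 * ℓ p.2} :=
    isClosed_le continuous_const
      ((ℓ.continuous.comp continuous_fst).mul (ℓ.continuous.comp continuous_snd))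
  have hmem : (z, w) ∈ closure (R ×ˢ R) := by
    rw [closure_prod_eq]
    exact ⟨hz, hw⟩
  exact closure_minimal (fun p hp => (mul_pos_of_mem_component hR hℓ hp.1 hp.2).le) hclosed hmem

theorem frontier_component_subset_lamination (hS : IsClosed S) (hU : IsOpen (S \ lamination S 𝓐))
    (hR : R ∈ components (S \ lamination S 𝓐)) : frontier R ⊆ lamination S 𝓐 := fun x hx => by
  by_contra hxL
  exact disjoint_left.1 (components.disjoint_frontier hU hR) hx
    ⟨closure_minimal ((components.subset hR).trans sdiff_subset) hS hx.1, hxL⟩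

/-- The limit of the midpoints lies on the lamination, hence on some slice. That slice separates no
component, so the limits of the two boundary points cannot lie on opposite sides of it. -/
theorem exists_eq_zero_of_tendsto_frontier_component {ι : Type*} {l : Filter ι} [l.NeBot]
    (hS : Convex ℝ S) (hU : IsOpen (S \ lamination S 𝓐))
    {R : ι → components (S \ lamination S 𝓐)} (hR : Tendsto R l cofinite) {z w : ι → E}
    (hz : ∀ i, z i ∈ closure (R i : Set E)) (hw : ∀ i, w i ∈ closure (R i : Set E))
    {z₀ w₀ : E} (hz₀ : z₀ ∈ S) (hw₀ : w₀ ∈ S) (hzlim : Tendsto z l (𝓝 z₀))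
    (hwlim : Tendsto w l (𝓝 w₀)) : ∃ ℓ ∈ 𝓐, ℓ z₀ = 0 ∧ ℓ w₀ = 0 := by
  have hmid : midpoint ℝ z₀ w₀ ∉ S \ lamination S 𝓐 := by
    rw [← sUnion_components (S \ lamination S 𝓐)]
    exact notMem_sUnion_of_tendsto (fun R => components.isOpen hU) pairwiseDisjoint_components hR
      (fun i => (convex_of_mem_components hS (R i).2).closure.midpoint_mem (hz i) (hw i))
      (hzlim.midpoint hwlim)
  obtain ⟨-, ℓ, hℓ, hmidℓ⟩ := not_not.1 fun h => hmid ⟨hS.midpoint_mem hz₀ hw₀, h⟩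
  have hsum : ℓ z₀ + ℓ w₀ = 0 := by
    rw [← ContinuousAffineMap.coe_toAffineMap, AffineMap.map_midpoint, midpoint_eq_smul_add,
      smul_eq_zero] at hmidℓ
    exact hmidℓ.resolve_left (by norm_num)
  have hprod : 0 ≤ ℓ z₀ * ℓ w₀ :=
    ge_of_tendsto (((ℓ.continuous.tendsto z₀).comp hzlim).mul
      ((ℓ.continuous.tendsto w₀).comp hwlim))
      (.of_forall fun i => mul_nonneg_of_mem_closure_component (R i).2 hℓ (hz i) (hw i))
  exact ⟨ℓ, hℓ, by nlinarith, by nlinarith⟩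

theorem tendsto_ediam_image_frontier_component [PseudoEMetricSpace X] (hS : Convex ℝ S)
    (hSc : IsClosed S) (hL : IsCompact (lamination S 𝓐)) (hU : IsOpen (S \ lamination S 𝓐))
    {k : E → X} (hk : ContinuousOn k (lamination S 𝓐))
    (hslice : ∀ ℓ ∈ 𝓐, ∀ z ∈ S, ∀ w ∈ S, ℓ z = 0 → ℓ w = 0 → k z = k w) :
    Tendsto (fun R : components (S \ lamination S 𝓐) => ediam (k '' frontier (R : Set E)))
      cofinite (𝓝 0) := by
  rw [ENNReal.tendsto_nhds_zero]
  by_contra! hlarge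
  obtain ⟨ε, hε, hlarge⟩ := hlarge
  let ι := {R : components (S \ lamination S 𝓐) // ε < ediam (k '' frontier (R : Set E))}
  have : Infinite ι := infinite_coe_iff.2 (frequently_cofinite_iff_infinite.1 hlarge)
  have hfar : ∀ R : ι, ∃ z ∈ frontier (R : Set E), ∃ w ∈ frontier (R : Set E),
      ε < edist (k z) (k w) := fun R => by
    simpa only [not_le, ediam_image_le_iff, not_forall, exists_prop] using R.2.not_ge
  choose z hz w hw hzw using hfar
  have hfr (R : ι) : frontier (R : Set E) ⊆ lamination S 𝓐 :=
    frontier_component_subset_lamination hSc hU R.1.2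
  have hlimit {y : ι → E} (hy : ∀ R : ι, y R ∈ frontier (R : Set E)) :
      ∃ y₀ ∈ lamination S 𝓐, Tendsto y (hyperfilter ι) (𝓝[lamination S 𝓐] y₀) := by
    have hyL : ∀ᶠ R in hyperfilter ι, y R ∈ lamination S 𝓐 := .of_forall fun R => hfr R (hy R)
    obtain ⟨y₀, hy₀, hlim⟩ :=
      hL.ultrafilter_le_nhds ((hyperfilter ι).map y) (le_principal_iff.2 hyL)
    exact ⟨y₀, hy₀, tendsto_nhdsWithin_iff.2 ⟨hlim, hyL⟩⟩
  obtain ⟨z₀, hz₀, hzlim⟩ := hlimit hz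
  obtain ⟨w₀, hw₀, hwlim⟩ := hlimit hw
  obtain ⟨ℓ, hℓ, hzℓ, hwℓ⟩ := exists_eq_zero_of_tendsto_frontier_component hS hU
    (Subtype.val_injective.tendsto_cofinite.mono_left hyperfilter_le_cofinite)
    (fun R => (hz R).1) (fun R => (hw R).1) hz₀.1 hw₀.1 (hzlim.mono_right inf_le_left)
    (hwlim.mono_right inf_le_left)
  have hkzw : Tendsto (fun R => edist (k (z R)) (k (w R))) (hyperfilter ι) (𝓝 0) := by
    rw [← edist_self (k w₀)]
    nth_rw 1 [← hslice ℓ hℓ z₀ hz₀.1 w₀ hw₀.1 hzℓ hwℓ]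
    exact ((hk z₀ hz₀).tendsto.comp hzlim).edist ((hk w₀ hw₀).tendsto.comp hwlim)
  exact (ge_of_tendsto hkzw (.of_forall fun R => (hzw R).le)).not_gt hε

end NormedSpace

section Lens

/-- The affine functional vanishing on the line through the points of the parabola `y = x ^ 2` with
abscissas `c.1` and `c.2` and positive above it: chords of an interval are encoded as chords of the
parabola, which makes the lens below them convex. -/
def chord (c : ℝ × ℝ) : ℝ × ℝ →ᴬ[ℝ] ℝ :=
  (ContinuousLinearMap.snd ℝ ℝ ℝ -
    (c.1 + c.2) • ContinuousLinearMap.fst ℝ ℝ ℝ).toContinuousAffineMap +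
    ContinuousAffineMap.const ℝ (ℝ × ℝ) (c.1 * c.2)

/-- The convex region between the parabola `y = x ^ 2` and its chord over `[a, b]`. It replaces the
rectangle `[a, b] × [0, 1]` as the domain of homotopies relative to the endpoints. -/
def lens (a b : ℝ) : Set (ℝ × ℝ) := {p | p.1 ^ 2 ≤ p.2 ∧ chord (a, b) p ≤ 0}

/-- The map collapsing the vertical sides of `[a, b] × [0, 1]` to points and sending the bottom and
the top side to the parabola and to the chord. -/
def lensMap (a b : ℝ) (z : ℝ × ℝ) : ℝ × ℝ := (z.1, z.1 ^ 2 + z.2 * ((z.1 - a) * (b - z.1)))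

variable {a b : ℝ} {p : ℝ × ℝ}

theorem chord_apply (c p : ℝ × ℝ) :
    chord c p = (p.2 - p.1 ^ 2) + (p.1 - c.1) * (p.1 - c.2) := by
  simp [chord]
  ring

theorem chord_le_chord {c : ℝ × ℝ} (hc₁ : c.1 ∈ Icc a b) (hc₂ : c.2 ∈ Icc a b)
    (hp : p.1 ∈ Icc a b) : chord (a, b) p ≤ chord c p := by
  obtain ⟨ha₁, hb₁⟩ := hc₁
  obtain ⟨ha₂, hb₂⟩ := hc₂
  obtain ⟨ha, hb⟩ := hp
  simp only [chord_apply]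
  rcases le_total p.1 c.1 with _ | _ <;> rcases le_total p.1 c.2 with _ | _ <;> nlinarith

theorem parabola_mem_lens {t : ℝ} (ht : t ∈ Icc a b) : (t, t ^ 2) ∈ lens a b :=
  ⟨le_rfl, by rw [chord_apply]; nlinarith [ht.1, ht.2]⟩

theorem fst_mem_Icc_of_mem_lens (hab : a ≤ b) (hp : p ∈ lens a b) : p.1 ∈ Icc a b := by
  obtain ⟨hlo, hhi⟩ := hp
  rw [chord_apply] at hhi
  constructor <;> nlinarith

theorem isClosed_lens (a b : ℝ) : IsClosed (lens a b) :=
  (isClosed_le (by fun_prop) continuous_snd).inter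
    (isClosed_le (chord (a, b)).continuous continuous_const)

theorem convex_lens (a b : ℝ) : Convex ℝ (lens a b) := by
  have hpar : Convex ℝ {p : ℝ × ℝ | p.1 ^ 2 ≤ p.2} := by
    simpa using (even_two.convexOn_pow (𝕜 := ℝ)).convex_epigraph
  exact hpar.inter ((convex_Iic 0).affine_preimage (chord (a, b)).toAffineMap)

theorem continuous_lensMap (a b : ℝ) : Continuous (lensMap a b) := by
  unfold lensMap
  fun_prop

theorem lensMap_mem_lens {z : ℝ × ℝ} (hz : z ∈ Icc a b ×ˢ Icc (0 : ℝ) 1) :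
    lensMap a b z ∈ lens a b := by
  obtain ⟨⟨ha, hb⟩, h0, h1⟩ := hz
  have hpos : 0 ≤ (z.1 - a) * (b - z.1) := mul_nonneg (by linarith) (by linarith)
  refine ⟨?_, ?_⟩
  · simpa [lensMap] using mul_nonneg h0 hpos
  · rw [chord_apply, lensMap]
    nlinarith

theorem image_lensMap (hab : a ≤ b) : lensMap a b '' (Icc a b ×ˢ Icc (0 : ℝ) 1) = lens a b := by
  refine (image_subset_iff.2 fun _ => lensMap_mem_lens).antisymm fun p hp => ?_
  have hmem := fst_mem_Icc_of_mem_lens hab hp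
  obtain ⟨hlo, hhi⟩ := hp
  rw [chord_apply] at hhi
  have hpos : 0 ≤ (p.1 - a) * (b - p.1) :=
    mul_nonneg (sub_nonneg.2 hmem.1) (sub_nonneg.2 hmem.2)
  refine ⟨(p.1, (p.2 - p.1 ^ 2) / ((p.1 - a) * (b - p.1))), ⟨hmem, div_nonneg (by linarith) hpos,
    div_le_one_of_le₀ (by linarith) hpos⟩, Prod.ext rfl ?_⟩
  simp only [lensMap]
  rw [div_mul_cancel_of_imp fun h => by linarith]
  ring

theorem isCompact_lens (hab : a ≤ b) : IsCompact (lens a b) := by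
  rw [← image_lensMap hab]
  exact (isCompact_Icc.prod isCompact_Icc).image (continuous_lensMap a b)

theorem interior_lens (a b : ℝ) :
    interior (lens a b) = {p | p.1 ^ 2 < p.2 ∧ chord (a, b) p < 0} := by
  refine Subset.antisymm (fun p hp => ?_) (interior_maximal (fun p hp => ⟨hp.1.le, hp.2.le⟩) ?_)
  · have hvertical : ∀ᶠ t in 𝓝 p.2, (p.1, t) ∈ lens a b :=
      (Continuous.prodMk_right p.1).tendsto p.2 (mem_interior_iff_mem_nhds.1 hp)
    obtain ⟨t, ⟨hlo, -⟩, ht⟩ := ((hvertical.filter_mono nhdsWithin_le_nhds).and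
      (self_mem_nhdsWithin : ∀ᶠ t in 𝓝[<] p.2, t ∈ Iio p.2)).exists
    obtain ⟨s, ⟨-, hhi⟩, hs⟩ := ((hvertical.filter_mono nhdsWithin_le_nhds).and
      (self_mem_nhdsWithin : ∀ᶠ t in 𝓝[>] p.2, t ∈ Ioi p.2)).exists
    simp only [mem_ofPred_eq, chord_apply] at hlo hhi ⊢
    exact ⟨hlo.trans_lt ht, by linarith [show p.2 < s from hs]⟩
  · exact (isOpen_lt (by fun_prop) continuous_snd).inter
      (isOpen_lt (chord (a, b)).continuous continuous_const)

theorem frontier_lens (hab : a ≤ b) :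
    frontier (lens a b) = lensMap a b '' (Icc a b ×ˢ {0, 1}) := by
  ext p
  rw [(isClosed_lens a b).frontier_eq, interior_lens, Set.mem_sdiff, mem_ofPred_eq, not_and_or,
    not_lt, not_lt]
  constructor
  · rintro ⟨hp, hside⟩
    have hmem := fst_mem_Icc_of_mem_lens hab hp
    obtain ⟨hlo, hhi⟩ := hp
    simp only [chord_apply] at hhi hside
    rcases hside with hside | hside
    · exact ⟨(p.1, 0), ⟨hmem, .inl rfl⟩, Prod.ext rfl (by simp only [lensMap]; linarith)⟩
    · exact ⟨(p.1, 1), ⟨hmem, .inr rfl⟩, Prod.ext rfl (by simp only [lensMap]; linarith)⟩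
  · rintro ⟨⟨s, t⟩, ⟨hs, rfl | rfl⟩, rfl⟩
    · exact ⟨lensMap_mem_lens ⟨hs, by simp⟩, .inl (by simp [lensMap])⟩
    · refine ⟨lensMap_mem_lens ⟨hs, by simp⟩, .inr (le_of_eq ?_)⟩
      rw [chord_apply, lensMap]
      ring

theorem eq_or_eq_of_lensMap_eq {s t t' : ℝ} (h : lensMap a b (s, t) = lensMap a b (s, t')) :
    t = t' ∨ s = a ∨ s = b := by
  have hzero : (t - t') * ((s - a) * (b - s)) = 0 := by
    simp only [lensMap, Prod.mk.injEq] at h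
    linarith [h.2]
  simpa [sub_eq_zero, eq_comm (a := b)] using hzero

end Lens

section Extension

open scoped unitInterval in
theorem exists_extension_frontier_lens {Y : Type*} [TopologicalSpace Y] [SimplyConnectedSpace Y]
    {g : ℝ × ℝ → Y} (hg : ContinuousOn g (frontier (lens 0 1))) :
    ∃ G : ℝ × ℝ → Y, ContinuousOn G (lens 0 1) ∧ EqOn G g (frontier (lens 0 1)) := by
  let P (z : I × I) : ℝ × ℝ := lensMap 0 1 (z.2, z.1)
  have hP : Continuous P := (continuous_lensMap 0 1).comp (by fun_prop)
  have hside : ∀ t : I, (t : ℝ) ∈ ({0, 1} : Set ℝ) → ∀ s : I, P (t, s) ∈ frontier (lens 0 1) :=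
    fun t ht s => frontier_lens zero_le_one ▸ mem_image_of_mem _ ⟨s.2, ht⟩
  let side (t : I) (ht : (t : ℝ) ∈ ({0, 1} : Set ℝ)) : Path (g (0, 0)) (g (1, 1)) :=
    { toFun := fun s => g (P (t, s))
      continuous_toFun := hg.comp_continuous (hP.comp (by fun_prop)) (hside t ht)
      source' := by simp [P, lensMap]
      target' := by simp [P, lensMap] }
  obtain ⟨H⟩ := SimplyConnectedSpace.paths_homotopic (side 0 (.inl rfl)) (side 1 (.inr rfl))
  have hfiber : ∀ z w, P z = P w → H z = H w := by
    rintro ⟨t, s⟩ ⟨t', s'⟩ h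
    obtain rfl : s = s' := Subtype.ext (congrArg Prod.fst h)
    rcases eq_or_eq_of_lensMap_eq h with ht | hs | hs
    · obtain rfl : t = t' := Subtype.ext ht
      rfl
    · rw [show s = 0 from Subtype.ext hs, H.source, H.source]
    · rw [show s = 1 from Subtype.ext hs, H.target, H.target]
  have : Nonempty Y := inferInstance
  obtain ⟨G, hG, hGH⟩ := exists_continuousOn_image_of_isCompact isCompact_univ hP.continuousOn
    (map_continuous H).continuousOn fun z _ w _ => hfiber z w
  refine ⟨G, hG.mono fun p hp => ?_, fun p hp => ?_⟩
  · rw [← image_lensMap zero_le_one] at hp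
    obtain ⟨z, hz, rfl⟩ := hp
    exact ⟨(⟨z.2, hz.2⟩, ⟨z.1, hz.1⟩), trivial, rfl⟩
  · rw [frontier_lens zero_le_one] at hp
    obtain ⟨⟨s, t⟩, ⟨hs, rfl | rfl⟩, rfl⟩ := hp
    · exact (hGH (0, ⟨s, hs⟩) trivial).trans (H.apply_zero _)
    · exact (hGH (1, ⟨s, hs⟩) trivial).trans (H.apply_one _)

variable {R : Set (ℝ × ℝ)}

theorem exists_extension_frontier {Y : Type*} [TopologicalSpace Y] [SimplyConnectedSpace Y]
    (hR : Convex ℝ R) (hne : (interior R).Nonempty) (hb : Bornology.IsBounded R) {g : ℝ × ℝ → Y}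
    (hg : ContinuousOn g (frontier R)) :
    ∃ G : ℝ × ℝ → Y, ContinuousOn G (closure R) ∧ EqOn G g (frontier R) := by
  have hne_lens : (interior (lens 0 1)).Nonempty :=
    ⟨(1 / 2, 1 / 3), by rw [interior_lens, mem_ofPred_eq, chord_apply]; norm_num⟩
  obtain ⟨e, -, hcl, hfr⟩ := exists_homeomorph_image_eq hR hne
    (NormedSpace.isVonNBounded_of_isBounded _ hb) (convex_lens 0 1) hne_lens
    (NormedSpace.isVonNBounded_of_isBounded _ (isCompact_lens zero_le_one).isBounded)
  rw [(isClosed_lens 0 1).closure_eq] at hcl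
  have hg' : ContinuousOn (g ∘ e.symm) (frontier (lens 0 1)) := by
    refine hg.comp e.symm.continuous.continuousOn fun z hz => ?_
    rw [← hfr] at hz
    obtain ⟨w, hw, rfl⟩ := hz
    rwa [e.symm_apply_apply]
  obtain ⟨G, hG, hGg⟩ := exists_extension_frontier_lens hg'
  refine ⟨G ∘ e, hG.comp e.continuous.continuousOn fun z hz => hcl ▸ mem_image_of_mem e hz,
    fun z hz => ?_⟩
  simpa using hGg (hfr ▸ mem_image_of_mem e hz : e z ∈ frontier (lens 0 1))

theorem exists_extension_frontier_mapsTo {X : Type*} [TopologicalSpace X] {V : Set X}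
    [SimplyConnectedSpace V] (hR : Convex ℝ R) (hne : (interior R).Nonempty)
    (hb : Bornology.IsBounded R) {g : ℝ × ℝ → X} (hg : ContinuousOn g (frontier R))
    (hV : MapsTo g (frontier R) V) :
    ∃ G : ℝ × ℝ → X, ContinuousOn G (closure R) ∧ EqOn G g (frontier R) ∧
      MapsTo G (closure R) V := by
  have : Nonempty V := inferInstance
  let g' (z : ℝ × ℝ) : V := if h : g z ∈ V then ⟨g z, h⟩ else Classical.arbitrary V
  have hg' : ∀ z ∈ frontier R, (g' z : X) = g z := fun z hz => by simp [g', dif_pos (hV hz)]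
  obtain ⟨G, hG, hGg⟩ := exists_extension_frontier hR hne hb
    (IsInducing.subtypeVal.continuousOn_iff.2 (hg.congr hg'))
  exact ⟨fun z => G z, continuous_subtype_val.comp_continuousOn hG,
    fun z hz => (congrArg Subtype.val (hGg hz)).trans (hg' z hz), fun z _ => (G z).2⟩

theorem exists_small_extension_frontier {X : Type*} [MetricSpace X] (hX : LocSimplyConnected X)
    {T : Set X} (hT : IsCompact T) {ε : ℝ≥0∞} (hε : 0 < ε) :
    ∃ δ > 0, ∀ {R : Set (ℝ × ℝ)}, Convex ℝ R → (interior R).Nonempty → Bornology.IsBounded R →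
      ∀ {g : ℝ × ℝ → X}, ContinuousOn g (frontier R) → MapsTo g (frontier R) T →
        ediam (g '' frontier R) < δ →
        ∃ G : ℝ × ℝ → X, ContinuousOn G (closure R) ∧ EqOn G g (frontier R) ∧
          ediam (G '' closure R) ≤ ε := by
  have hsmall : ∀ x : X, ∃ V ∈ 𝓝 x, V ⊆ eball x (ε / 2) ∧ SimplyConnectedSpace V :=
    fun x => hX x _ (eball_mem_nhds x (ENNReal.half_pos hε.ne'))
  choose V hV hVsmall hVsc using hsmall
  obtain ⟨δ, hδ, hleb⟩ := lebesgue_number_lemma_of_emetric_nhds hT fun x _ => hV x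
  refine ⟨δ, hδ, fun {R} hR hne hb {g} hg hgT hdiam => ?_⟩
  obtain ⟨w, hw⟩ : (frontier R).Nonempty := nonempty_frontier_iff.2
    ⟨hne.mono interior_subset, fun h => NormedSpace.unbounded_univ ℝ (ℝ × ℝ) (h ▸ hb)⟩
  obtain ⟨x, hx⟩ := hleb (g w) (hgT hw)
  have hmaps : MapsTo g (frontier R) (V x) := fun z hz => hx <|
    (edist_le_ediam_of_mem (mem_image_of_mem g hz) (mem_image_of_mem g hw)).trans_lt hdiam
  obtain ⟨G, hG, hGg, hGV⟩ := exists_extension_frontier_mapsTo hR hne hb hg hmaps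
  refine ⟨G, hG, hGg, ?_⟩
  calc ediam (G '' closure R) ≤ ediam (eball x (ε / 2)) :=
        ediam_mono (image_subset_iff.2 fun z hz => hVsmall x (hGV hz))
    _ ≤ 2 * (ε / 2) := ediam_eball_le
    _ = ε := ENNReal.mul_div_cancel two_ne_zero ENNReal.ofNat_ne_top

theorem exists_extension_of_tendsto_ediam_frontier {X : Type*} [MetricSpace X]
    [SimplyConnectedSpace X] (hX : LocSimplyConnected X) {L U : Set (ℝ × ℝ)} (hL : IsCompact L)
    (hU : IsOpen U) (hb : Bornology.IsBounded U) (hLU : Disjoint L U)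
    (hfrontier : ∀ R ∈ components U, frontier R ⊆ L) (hconvex : ∀ R ∈ components U, Convex ℝ R)
    {k : ℝ × ℝ → X} (hk : ContinuousOn k L)
    (hdiam : Tendsto (fun R : components U => ediam (k '' frontier (R : Set (ℝ × ℝ))))
      cofinite (𝓝 0)) :
    ∃ K : ℝ × ℝ → X, ContinuousOn K (L ∪ U) ∧ EqOn K k L := by
  let κ (R : components U) := {κ : ℝ × ℝ → X //
    ContinuousOn κ (closure (R : Set (ℝ × ℝ))) ∧ EqOn κ k (frontier (R : Set (ℝ × ℝ)))}
  have hopen : ∀ R ∈ components U, IsOpen R := fun R => components.isOpen hU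
  have hint : ∀ R ∈ components U, (interior R).Nonempty := fun R hR =>
    (hopen R hR).interior_eq.symm ▸ components.nonempty hR
  have hbdd : ∀ R ∈ components U, Bornology.IsBounded R := fun R hR =>
    hb.subset (components.subset hR)
  have hkR : ∀ R ∈ components U, ContinuousOn k (frontier R) := fun R hR =>
    hk.mono (hfrontier R hR)
  have : Countable (components U) := (countable_components hU).to_subtype
  have (R : components U) : Nonempty (κ R) := nonempty_subtype.2 <|
    exists_extension_frontier (hconvex R R.2) (hint R R.2) (hbdd R R.2) (hkR R R.2)
  obtain ⟨c, hc⟩ := exists_tendsto_zero_of_forall_eventually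
    (s := fun (R : components U) (c : κ R) => ediam (c.1 '' closure (R : Set (ℝ × ℝ))))
    fun ε hε => by
      obtain ⟨δ, hδ, hsmall⟩ := exists_small_extension_frontier hX (hL.image_of_continuousOn hk) hε
      filter_upwards [hdiam.eventually_lt_const hδ] with R hR
      obtain ⟨G, hG, hGk, hGε⟩ := hsmall (hconvex R R.2) (hint R R.2) (hbdd R R.2) (hkR R R.2)
        (fun z hz => mem_image_of_mem k (hfrontier R R.2 hz)) hR
      exact ⟨⟨G, hG, hGk⟩, hGε⟩
  let K (z : ℝ × ℝ) : X := if hz : z ∈ U then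
    (c ⟨connectedComponentIn U z, mem_image_of_mem _ hz⟩).1 z else k z
  have hKk : EqOn K k L := fun z hz => dif_neg (disjoint_left.1 hLU hz)
  have hKc : ∀ R : components U, EqOn K (c R).1 (closure (R : Set (ℝ × ℝ))) := by
    rintro ⟨R, hR⟩ z hz
    by_cases hzR : z ∈ R
    · obtain rfl := components.eq_connectedComponentIn hR hzR
      exact dif_pos (components.subset hR hzR)
    · have hzfr : z ∈ frontier R := ⟨hz, fun h => hzR (interior_subset h)⟩
      exact (hKk (hfrontier R hR hzfr)).trans ((c ⟨R, hR⟩).2.2 hzfr).symm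
  refine ⟨K, ?_, hKk⟩
  rw [← sUnion_components U]
  refine continuousOn_union_sUnion_of_tendsto_ediam hL.isClosed hopen hfrontier (hk.congr hKk)
    (fun R hR => (c ⟨R, hR⟩).2.1.congr (hKc ⟨R, hR⟩)) (hc.congr fun R => ?_)
  rw [(hKc R).image_eq]

end Extension

section Words

variable {D ι : Type*} [LinearOrder ι] {letter : ι → D × Bool} {s : Set ι} {σ : ι → ι}

/-- A noncrossing inverse pairing of all the letters of the subword supported on `s`, encoded as the
involution `σ` exchanging the two letters of each pair. -/
structure IsNoncrossingPairing (letter : ι → D × Bool) (s : Set ι) (σ : ι → ι) : Prop where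
  mapsTo : MapsTo σ s s
  invol : ∀ i ∈ s, σ (σ i) = i
  letter_eq : ∀ i ∈ s, letter (σ i) = ((letter i).1, !(letter i).2)
  noncrossing : ∀ i ∈ s, ∀ j ∈ s, i < j → j < σ i → σ j ≤ σ i

theorem IsNoncrossingPairing.exists_insert (h : IsNoncrossingPairing letter s σ) {i₀ j₀ : ι}
    (hlt : i₀ < j₀) (hs : ∀ i ∈ s, i < i₀ ∨ j₀ < i)
    (hletter : letter j₀ = ((letter i₀).1, !(letter i₀).2)) :
    ∃ τ, IsNoncrossingPairing letter (insert i₀ (insert j₀ s)) τ := by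
  obtain ⟨τ, hτi, hτj, hτ⟩ : ∃ τ : ι → ι, τ i₀ = j₀ ∧ τ j₀ = i₀ ∧ EqOn τ σ s :=
    ⟨fun i => if i = i₀ then j₀ else if i = j₀ then i₀ else σ i, if_pos rfl, by simp [hlt.ne'],
      fun i hi => by grind⟩
  have hmaps : ∀ i ∈ s, σ i ∈ s := h.mapsTo
  have hnc := h.noncrossing
  refine ⟨τ, ?_, ?_, ?_, ?_⟩
  · rintro i (rfl | rfl | hi)
    · simp [hτi]
    · simp [hτj]
    · exact .inr (.inr (hτ hi ▸ hmaps i hi))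
  · rintro i (rfl | rfl | hi)
    · rw [hτi, hτj]
    · rw [hτj, hτi]
    · rw [hτ hi, hτ (hmaps i hi), h.invol i hi]
  · rintro i (rfl | rfl | hi)
    · rw [hτi, hletter]
    · simp [hτj, hletter]
    · rw [hτ hi, h.letter_eq i hi]
  · have hout : ∀ i ∈ s, τ i < i₀ ∨ j₀ < τ i := fun i hi => hτ hi ▸ hs _ (hmaps i hi)
    rintro i (rfl | rfl | hi) j (rfl | rfl | hj) hij hji <;> grind

theorem exists_isNoncrossingPairing_of_red {L : List (D × Bool)} (hL : FreeGroup.Red L []) :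
    ∀ {l : List ι}, l.Pairwise (· < ·) → l.map letter = L →
      ∃ σ, IsNoncrossingPairing letter {i | i ∈ l} σ := by
  induction hL using Relation.ReflTransGen.head_induction_on with
  | refl =>
    rintro l - hl
    obtain rfl := List.map_eq_nil_iff.1 hl
    exact ⟨id, by constructor <;> simp⟩
  | head hstep _ ih =>
    intro l hsorted hl
    obtain ⟨⟩ := hstep
    obtain ⟨A, l₁, rfl, rfl, hl₁⟩ := List.map_eq_append_iff.1 hl
    obtain ⟨i, l₂, rfl, hi, hl₂⟩ := List.map_eq_cons_iff.1 hl₁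
    obtain ⟨j, B, rfl, hj, rfl⟩ := List.map_eq_cons_iff.1 hl₂
    simp only [List.pairwise_append, List.pairwise_cons, List.mem_cons] at hsorted
    obtain ⟨hA, ⟨hiB, hjB, hB⟩, hAB⟩ := hsorted
    obtain ⟨σ, hσ⟩ := ih (l := A ++ B)
      (List.pairwise_append.2 ⟨hA, hB, fun x hx y hy => hAB x hx y (by simp [hy])⟩) (by simp)
    have hout : ∀ k ∈ {k | k ∈ A ++ B}, k < i ∨ j < k := fun k hk =>
      (List.mem_append.1 hk).imp (fun hk => hAB k hk i (by simp)) (hjB k)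
    obtain ⟨τ, hτ⟩ := hσ.exists_insert (hiB j (by simp)) hout (by rw [hi, hj])
    refine ⟨τ, ?_⟩
    convert hτ using 1
    ext k
    simp only [List.mem_append, List.mem_cons, mem_ofPred_eq, mem_insert_iff]
    tauto

theorem exists_isNoncrossingPairing_univ (hfin : ∀ a, {i | (letter i).1 = a}.Finite)
    (h : ∀ F : Finset D, ∃ σ, IsNoncrossingPairing letter {i | (letter i).1 ∈ F} σ) :
    ∃ σ, IsNoncrossingPairing letter univ σ := by
  choose σ hσ using h
  have (i : ι) : Finite {j // (letter j).1 = (letter i).1} := (hfin _).to_subtype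
  let F (s : Finset ι) : Finset D := s.image fun i => (letter i).1
  have hfst : ∀ s i, (letter i).1 ∈ F s → (letter (σ (F s) i)).1 = (letter i).1 :=
    fun s i hi => by rw [(hσ (F s)).letter_eq i hi]
  obtain ⟨χ, hχ⟩ := Finset.rado_selection (β := fun i => {j // (letter j).1 = (letter i).1})
    fun s i => if hi : (letter i).1 ∈ F s then ⟨σ (F s) i, hfst s i hi⟩ else ⟨i, rfl⟩
  have hlocal : ∀ s : Finset ι, ∃ F, ∀ i ∈ s, (letter i).1 ∈ F ∧ (χ i : ι) = σ F i := by
    intro s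
    obtain ⟨t, hst, hχt⟩ := hχ s
    refine ⟨F t, fun i hi => ?_⟩
    have hiF : (letter i).1 ∈ F t := Finset.mem_image_of_mem _ (hst hi)
    exact ⟨hiF, by rw [hχt i hi, dif_pos hiF]⟩
  refine ⟨fun i => χ i, fun _ _ => trivial, fun i _ => ?_, fun i _ => ?_, fun i _ j _ => ?_⟩
  · obtain ⟨F, hF⟩ := hlocal {i, ↑(χ i)}
    obtain ⟨hiF, hi⟩ := hF i (by simp)
    rw [(hF (χ i) (by simp)).2, hi, (hσ F).invol i hiF]
  · obtain ⟨F, hF⟩ := hlocal {i}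
    obtain ⟨hiF, hi⟩ := hF i (by simp)
    rw [hi, (hσ F).letter_eq i hiF]
  · obtain ⟨F, hF⟩ := hlocal {i, j}
    obtain ⟨hiF, hi⟩ := hF i (by simp)
    obtain ⟨hjF, hj⟩ := hF j (by simp)
    rw [hi, hj]
    exact (hσ F).noncrossing i hiF j hjF

theorem InfWord.evalF_eq_mk (W : InfWord D) (F : Finset D) :
    W.evalF F = FreeGroup.mk (((W.finF F).toFinset.sort (· ≤ ·)).map W.letter) := by
  rw [InfWord.evalF]
  induction (W.finF F).toFinset.sort (· ≤ ·) with
  | nil => rfl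
  | cons i l ih => rw [List.map_cons, List.prod_cons, ih, FreeGroup.mul_mk]; rfl

theorem InfWord.IsNull.exists_isNoncrossingPairing {W : InfWord D} (hW : W.IsNull) :
    ∃ σ, IsNoncrossingPairing W.letter univ σ := by
  refine exists_isNoncrossingPairing_univ W.finOcc fun F => ?_
  have hmk := hW F
  rw [W.evalF_eq_mk, FreeGroup.one_eq_mk, FreeGroup.Red.exact] at hmk
  obtain ⟨L, hred, hL⟩ := hmk
  obtain rfl := FreeGroup.Red.nil_iff.1 hL
  simpa using exists_isNoncrossingPairing_of_red hred (Finset.sortedLT_sort _).pairwise rfl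

end Words

section ChordSystem

variable {X : Type*} {a b : ℝ} {q : ℝ → X} {C : Set (ℝ × ℝ)}

/-- A system of chords of the parabola over `[a, b]`, encoded by the abscissas of their endpoints,
along which a path `q` on `[a, b]` can be transported: `q` takes the same value at all the endpoints
of two chords that meet. -/
structure IsChordSystem (a b : ℝ) (q : ℝ → X) (C : Set (ℝ × ℝ)) : Prop where
  fst_mem : ∀ c ∈ C, c.1 ∈ Icc a b
  snd_mem : ∀ c ∈ C, c.2 ∈ Icc a b
  le : ∀ c ∈ C, c.1 ≤ c.2
  diag : ∀ t ∈ Icc a b, (t, t) ∈ C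
  outer : (a, b) ∈ C
  eq : ∀ c ∈ C, q c.1 = q c.2
  cross : ∀ c ∈ C, ∀ c' ∈ C, c.1 < c'.1 → c'.1 < c.2 → c.2 < c'.2 → q c.1 = q c'.1

namespace IsChordSystem

protected theorem closure [TopologicalSpace X] [T2Space X] (h : IsChordSystem a b q C)
    (hq : ContinuousOn q (Icc a b)) : IsChordSystem a b q (closure C) := by
  have hmem₁ : ∀ c ∈ closure C, c.1 ∈ Icc a b :=
    closure_minimal h.fst_mem (isClosed_Icc.preimage continuous_fst)
  have hmem₂ : ∀ c ∈ closure C, c.2 ∈ Icc a b :=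
    closure_minimal h.snd_mem (isClosed_Icc.preimage continuous_snd)
  have hlim₁ : ∀ c ∈ closure C, Tendsto (fun e => q e.1) (𝓝[C] c) (𝓝 (q c.1)) := fun c hc =>
    (hq c.1 (hmem₁ c hc)).tendsto.comp
      (continuous_fst.continuousWithinAt.tendsto_nhdsWithin h.fst_mem)
  have hlim₂ : ∀ c ∈ closure C, Tendsto (fun e => q e.2) (𝓝[C] c) (𝓝 (q c.2)) := fun c hc =>
    (hq c.2 (hmem₂ c hc)).tendsto.comp
      (continuous_snd.continuousWithinAt.tendsto_nhdsWithin h.snd_mem)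
  refine ⟨hmem₁, hmem₂, closure_minimal h.le (isClosed_le continuous_fst continuous_snd),
    fun t ht => subset_closure (h.diag t ht), subset_closure h.outer,
    fun c hc => ?_, fun c hc c' hc' h₁ h₂ h₃ => ?_⟩
  · have := mem_closure_iff_nhdsWithin_neBot.1 hc
    exact tendsto_nhds_unique_of_eventuallyEq (hlim₁ c hc) (hlim₂ c hc)
      (eventually_mem_nhdsWithin.mono h.eq)
  · have := mem_closure_iff_nhdsWithin_neBot.1 hc
    have := mem_closure_iff_nhdsWithin_neBot.1 hc'
    have hopen : IsOpen {e : (ℝ × ℝ) × ℝ × ℝ | e.1.1 < e.2.1 ∧ e.2.1 < e.1.2 ∧ e.1.2 < e.2.2} :=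
      (isOpen_lt (by fun_prop) (by fun_prop)).and <|
        (isOpen_lt (by fun_prop) (by fun_prop)).and (isOpen_lt (by fun_prop) (by fun_prop))
    have hnear := hopen.mem_nhds (show (c, c') ∈ _ from ⟨h₁, h₂, h₃⟩)
    rw [nhds_prod_eq] at hnear
    have heq : ∀ᶠ e in 𝓝[C] c ×ˢ 𝓝[C] c', q e.1.1 = q e.2.1 := by
      filter_upwards [prod_mono nhdsWithin_le_nhds nhdsWithin_le_nhds hnear,
        prod_mem_prod self_mem_nhdsWithin self_mem_nhdsWithin] with e ⟨h₁, h₂, h₃⟩ he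
      exact h.cross e.1 he.1 e.2 he.2 h₁ h₂ h₃
    exact tendsto_nhds_unique_of_eventuallyEq ((hlim₁ c hc).comp tendsto_fst)
      ((hlim₁ c' hc').comp tendsto_snd) heq

theorem eq_of_chord_eq_zero (h : IsChordSystem a b q C) {p c c' : ℝ × ℝ} (hp : p.1 ^ 2 ≤ p.2)
    (hc : c ∈ C) (hc' : c' ∈ C) (hpc : chord c p = 0) (hpc' : chord c' p = 0) :
    q c.1 = q c'.1 := by
  wlog hle : c.1 ≤ c'.1 generalizing c c'
  · exact (this hc' hc hpc' hpc (le_of_not_ge hle)).symm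
  rcases hle.eq_or_lt with heq | hlt
  · rw [heq]
  rcases hp.eq_or_lt with hpar | hpar
  · have hend : ∀ e ∈ C, chord e p = 0 → q e.1 = q p.1 := by
      intro e he hpe
      rw [chord_apply, hpar, sub_self, zero_add, mul_eq_zero, sub_eq_zero, sub_eq_zero] at hpe
      rcases hpe with hpe | hpe
      · rw [hpe]
      · rw [hpe, h.eq e he]
    rw [hend c hc hpc, hend c' hc' hpc']
  · have hcle := h.le c hc
    have hcle' := h.le c' hc'
    rw [chord_apply] at hpc hpc'
    have hbetween : c'.1 < p.1 := by nlinarith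
    have hbetween' : p.1 < c.2 := by nlinarith
    refine h.cross c hc c' hc' hlt (hbetween.trans hbetween') ?_
    by_contra! hge
    nlinarith

theorem exists_continuousOn_lamination [TopologicalSpace X] [T2Space X]
    (h : IsChordSystem a b q C) (hC : IsClosed C) (hq : ContinuousOn q (Icc a b)) :
    IsCompact (lamination (lens a b) (chord '' C)) ∧
      ∃ k : ℝ × ℝ → X, ContinuousOn k (lamination (lens a b) (chord '' C)) ∧
        ∀ c ∈ C, ∀ p ∈ lens a b, chord c p = 0 → k p = q c.1 := by
  let T : Set ((ℝ × ℝ) × ℝ × ℝ) := {t | t.1 ∈ C ∧ t.2 ∈ lens a b ∧ chord t.1 t.2 = 0}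
  have hab : a ≤ b := h.le _ h.outer
  have hT : IsCompact T := by
    refine ((isCompact_Icc.prod isCompact_Icc).prod (isCompact_lens hab)).of_isClosed_subset
      (t := T) ?_ fun t ht => ⟨⟨h.fst_mem _ ht.1, h.snd_mem _ ht.1⟩, ht.2.1⟩
    refine (hC.preimage continuous_fst).and (((isClosed_lens a b).preimage continuous_snd).and ?_)
    simp only [chord_apply]
    exact isClosed_eq (by fun_prop) continuous_const
  have himage : Prod.snd '' T = lamination (lens a b) (chord '' C) := by
    ext p
    exact ⟨fun ⟨t, ⟨hc, hp, hpc⟩, htp⟩ => htp ▸ ⟨hp, _, mem_image_of_mem _ hc, hpc⟩,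
      fun ⟨hp, _, ⟨c, hc, rfl⟩, hpc⟩ => ⟨(c, p), ⟨hc, hp, hpc⟩, rfl⟩⟩
  have : Nonempty X := ⟨q a⟩
  obtain ⟨k, hk, hkq⟩ := exists_continuousOn_image_of_isCompact hT continuous_snd.continuousOn
    (F := fun t : (ℝ × ℝ) × ℝ × ℝ => q t.1.1)
    (hq.comp continuous_fst.fst.continuousOn fun t ht => h.fst_mem _ ht.1) (by
      rintro ⟨c, p⟩ ⟨hc, hp, hpc⟩ ⟨c', _⟩ ⟨hc', -, hpc'⟩ rfl
      exact h.eq_of_chord_eq_zero hp.1 hc hc' hpc hpc')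
  rw [himage] at hk
  exact ⟨himage ▸ hT.image continuous_snd, k, hk, fun c hc p hp hpc => hkq (c, p) ⟨hc, hp, hpc⟩⟩

theorem isOpen_sdiff_lamination (h : IsChordSystem a b q C)
    (hC : IsClosed (lamination (lens a b) (chord '' C))) :
    IsOpen (lens a b \ lamination (lens a b) (chord '' C)) := by
  convert isOpen_interior.sdiff hC using 1
  refine (sdiff_subset_sdiff_left interior_subset).antisymm' fun p ⟨hp, hpL⟩ => ⟨?_, hpL⟩
  have hne : ∀ c ∈ C, chord c p ≠ 0 := fun c hc hpc => hpL ⟨hp, _, mem_image_of_mem _ hc, hpc⟩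
  rw [interior_lens]
  refine ⟨hp.1.lt_of_ne fun hpar => ?_, hp.2.lt_of_ne (hne _ h.outer)⟩
  have hab : a ≤ b := h.le _ h.outer
  refine hne _ (h.diag p.1 (fst_mem_Icc_of_mem_lens hab hp)) ?_
  rw [chord_apply, hpar]
  ring

theorem exists_extension [MetricSpace X] [SimplyConnectedSpace X] (hX : LocSimplyConnected X)
    (h : IsChordSystem a b q C) (hC : IsClosed C) (hq : ContinuousOn q (Icc a b)) :
    ∃ K : ℝ × ℝ → X, ContinuousOn K (lens a b) ∧
      ∀ c ∈ C, ∀ p ∈ lens a b, chord c p = 0 → K p = q c.1 := by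
  obtain ⟨hL, k, hk, hkq⟩ := h.exists_continuousOn_lamination hC hq
  have hab : a ≤ b := h.le _ h.outer
  have hU := h.isOpen_sdiff_lamination hL.isClosed
  have hslice : ∀ ℓ ∈ chord '' C, ∀ z ∈ lens a b, ∀ w ∈ lens a b, ℓ z = 0 → ℓ w = 0 →
      k z = k w := by
    rintro _ ⟨c, hc, rfl⟩ z hz w hw hzc hwc
    rw [hkq c hc z hz hzc, hkq c hc w hw hwc]
  obtain ⟨K, hK, hKk⟩ := exists_extension_of_tendsto_ediam_frontier hX hL hU
    ((isCompact_lens hab).isBounded.subset sdiff_subset) disjoint_sdiff_right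
    (fun R => frontier_component_subset_lamination (isClosed_lens a b) hU)
    (fun R => convex_of_mem_components (convex_lens a b)) hk
    (tendsto_ediam_image_frontier_component (convex_lens a b) (isClosed_lens a b) hL hU hk hslice)
  rw [union_sdiff_cancel fun _ hp => hp.1] at hK
  exact ⟨K, hK, fun c hc p hp hpc =>
    (hKk ⟨hp, _, mem_image_of_mem _ hc, hpc⟩).trans (hkq c hc p hp hpc)⟩

end IsChordSystem

end ChordSystem

section PairingChords

variable {X D ι : Type*} [LinearOrder ι] {letter : ι → D × Bool} {σ : ι → ι}
  {a b : ℝ} {q : ℝ → X} {u v : ι → ℝ}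

/-- The chords joining the points of each interval `[u i, v i]` to those of the interval paired with
it, together with the chords that every `IsChordSystem` over `[a, b]` contains. -/
def pairingChords (a b : ℝ) (σ : ι → ι) (u v : ι → ℝ) : Set (ℝ × ℝ) :=
  {c | c.1 = c.2 ∧ c.1 ∈ Icc a b} ∪ {(a, b)} ∪
    {c | ∃ i, i < σ i ∧ c.1 ∈ Icc (u i) (v i) ∧ c.2 ∈ Icc (u (σ i)) (v (σ i))}

theorem IsNoncrossingPairing.fst_letter_eq_of_le (hσ : IsNoncrossingPairing letter univ σ)
    {i j : ι} (hij : i ≤ j) (hji : j ≤ σ i) (hσij : σ i ≤ σ j) :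
    (letter i).1 = (letter j).1 := by
  rcases hij.eq_or_lt with rfl | hij
  · rfl
  rcases hji.eq_or_lt with rfl | hji
  · rw [hσ.letter_eq i trivial]
  have hpair : σ i = σ j := hσij.antisymm (hσ.noncrossing i trivial j trivial hij hji)
  rw [← hσ.invol i trivial, hpair, hσ.invol j trivial]

theorem IsNoncrossingPairing.isChordSystem (hσ : IsNoncrossingPairing letter univ σ)
    (hab : a ≤ b) (hqab : q a = q b) (hu : ∀ i, a ≤ u i) (hv : ∀ i, v i ≤ b)
    (hvu : ∀ i j, i < j → v i ≤ u j) {y : D → X}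
    (hq : ∀ i, ∀ t ∈ Icc (u i) (v i), q t = y (letter i).1) :
    IsChordSystem a b q (pairingChords a b σ u v) where
  fst_mem := by
    rintro c ((⟨-, hc⟩ | rfl) | ⟨i, -, hc, -⟩)
    · exact hc
    · exact left_mem_Icc.2 hab
    · exact ⟨(hu i).trans hc.1, hc.2.trans (hv i)⟩
  snd_mem := by
    rintro c ((⟨heq, hc⟩ | rfl) | ⟨i, -, -, hc⟩)
    · exact heq ▸ hc
    · exact right_mem_Icc.2 hab
    · exact ⟨(hu _).trans hc.1, hc.2.trans (hv _)⟩
  le := by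
    rintro c ((⟨heq, -⟩ | rfl) | ⟨i, hi, hc₁, hc₂⟩)
    · exact heq.le
    · exact hab
    · exact (hc₁.2.trans (hvu _ _ hi)).trans hc₂.1
  diag t ht := .inl (.inl ⟨rfl, ht⟩)
  outer := .inl (.inr rfl)
  eq := by
    rintro c ((⟨heq, -⟩ | rfl) | ⟨i, -, hc₁, hc₂⟩)
    · rw [heq]
    · exact hqab
    · rw [hq i _ hc₁, hq _ _ hc₂, hσ.letter_eq i trivial]
  cross := by
    have hle : ∀ {i j s t}, s ∈ Icc (u i) (v i) → t ∈ Icc (u j) (v j) → s < t → i ≤ j := by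
      intro i j s t hs ht hst
      by_contra! hji
      exact ((ht.2.trans (hvu j i hji)).trans hs.1).not_gt hst
    rintro c ((⟨heq, -⟩ | rfl) | ⟨i, -, hc₁, hc₂⟩) c'
      ((⟨heq', -⟩ | rfl) | ⟨j, -, hc₁', hc₂'⟩) h₁ h₂ h₃
    · exact absurd heq (h₁.trans h₂).ne
    · exact absurd heq (h₁.trans h₂).ne
    · exact absurd heq (h₁.trans h₂).ne
    · exact absurd heq' (h₂.trans h₃).ne
    · exact absurd h₁ (lt_irrefl a)
    · exact absurd h₃ (hc₂'.2.trans (hv _)).not_gt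
    · exact absurd heq' (h₂.trans h₃).ne
    · exact absurd h₁ ((hu i).trans hc₁.1).not_gt
    · rw [hq i _ hc₁, hq j _ hc₁', hσ.fst_letter_eq_of_le (hle hc₁ hc₁' h₁) (hle hc₁' hc₂ h₂)
        (hle hc₂ hc₂' h₃)]

end PairingChords

theorem eventually_forall_mul_dist_lt {ι Y Z : Type*} [PseudoMetricSpace Z] [BoundedSpace Z]
    {l : Filter Y} {r : ι → ℝ} {g : ι → Y → Z} {z : ι → Z} {ε : ℝ}
    (hr : Tendsto r cofinite (𝓝 0)) (hg : ∀ i, Tendsto (g i) l (𝓝 (z i))) (hε : 0 < ε) :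
    ∀ᶠ y in l, ∀ i, r i * dist (g i y) (z i) < ε := by
  obtain ⟨M, hM, hdist⟩ : ∃ M > 0, ∀ x y : Z, dist x y ≤ M :=
    ⟨diam (univ : Set Z) + 1, by positivity, fun x y =>
      (dist_le_diam_of_mem (Bornology.isBounded_univ.2 ‹_›) trivial trivial).trans (by linarith)⟩
  have hfin : {i | ¬r i < ε / M}.Finite := hr.eventually_lt_const (div_pos hε hM)
  have hfinite : ∀ᶠ y in l, ∀ i ∈ {i | ¬r i < ε / M}, r i * dist (g i y) (z i) < ε := by
    refine (eventually_all_finite hfin).2 fun i _ => ?_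
    have hlim : Tendsto (fun y => r i * dist (g i y) (z i)) l (𝓝 0) := by
      simpa using ((tendsto_iff_dist_tendsto_zero.1 (hg i)).const_mul (r i))
    exact hlim.eventually_lt_const hε
  filter_upwards [hfinite] with y hy i
  by_cases hi : r i < ε / M
  · calc r i * dist (g i y) (z i) ≤ max (r i) 0 * M := by gcongr <;> grind
      _ < ε := by rw [← lt_div_iff₀ hM]; exact max_lt hi (div_pos hε hM)
  · exact hy i hi

theorem wt_apply {X : Type*} {d : ℕ+ → X} (hd : Function.Injective d) (n : ℕ+) :
    wt d (d n) = 1 / (n : ℝ) := by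
  have h : ∃ m : ℕ+, d n = d m := ⟨n, rfl⟩
  rw [wt, dif_pos h, ← hd h.choose_spec]

theorem wt_nonneg {X : Type*} {d : ℕ+ → X} (x : X) : 0 ≤ wt d x := by
  unfold wt
  split_ifs <;> positivity

section EarringSpace

variable {X : Type*} [MetricSpace X] {d : ℕ+ → X}

theorem rho_self (p : ESp X d) : rho d p.pt p.pt = 0 := by
  have hp := p.mem
  unfold rho
  split_ifs with h
  · simp
  · rw [or_iff_left fun hn => h ⟨rfl, hn⟩] at hp
    simp [hp]

theorem dist_fst_le_rho (p q : X × Circle) : dist p.1 q.1 ≤ rho d p q := by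
  have hp := mul_nonneg (wt_nonneg (d := d) p.1) (dist_nonneg (x := p.2) (y := 1))
  have hq := mul_nonneg (wt_nonneg (d := d) q.1) (dist_nonneg (x := q.2) (y := 1))
  unfold rho
  split_ifs with h
  · rw [h.1, dist_self]
    exact mul_nonneg (wt_nonneg _) dist_nonneg
  · linarith

theorem rho_triangle (p q r : X × Circle) : rho d p r ≤ rho d p q + rho d q r := by
  obtain ⟨x, s⟩ := p
  obtain ⟨y, t⟩ := q
  obtain ⟨z, w⟩ := r
  have hx := wt_nonneg (d := d) x
  have hy := wt_nonneg (d := d) y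
  have hz := wt_nonneg (d := d) z
  have ht := mul_nonneg hy (dist_nonneg (x := t) (y := 1))
  have hw := mul_nonneg hz (dist_nonneg (x := w) (y := 1))
  simp only [rho]
  by_cases hxy : x = y ∧ ∃ n, x = d n
  · rw [if_pos hxy]
    obtain ⟨rfl, -⟩ := hxy
    split_ifs
    · nlinarith [dist_triangle s t w]
    · nlinarith [dist_triangle s t 1]
  by_cases hyz : y = z ∧ ∃ n, y = d n
  · rw [if_neg hxy, if_pos hyz]
    obtain ⟨rfl, -⟩ := hyz
    rw [if_neg hxy]
    nlinarith [dist_triangle w t 1, dist_comm w t]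
  rw [if_neg hxy, if_neg hyz]
  split_ifs with hxz
  · obtain ⟨rfl, -⟩ := hxz
    nlinarith [dist_triangle s 1 w, dist_comm w 1, dist_nonneg (x := x) (y := y),
      dist_nonneg (x := y) (y := x)]
  · linarith [dist_triangle x y z]

theorem continuous_pt_fst : Continuous fun p : ESp X d => p.pt.1 := by
  refine continuous_iff_continuousAt.2 fun p => Metric.tendsto_nhds.2 fun ε hε => ?_
  have hopen : IsOpen {q : ESp X d | rho d p.pt q.pt < ε} :=
    TopologicalSpace.isOpen_generateFrom_of_mem ⟨p, ε, rfl⟩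
  have hp : rho d p.pt p.pt < ε := by rwa [rho_self]
  filter_upwards [hopen.mem_nhds hp] with q hq
  rw [dist_comm]
  exact (dist_fst_le_rho _ _).trans_lt hq

/-- The retraction of the earring space onto the circle attached at `d n`, which sends everything
outside this circle to its base point. -/
def ESp.circleCoord (n : ℕ+) (p : ESp X d) : Circle := if p.pt.1 = d n then p.pt.2 else 1

theorem ESp.ext_circleCoord {p q : ESp X d} (hfst : p.pt.1 = q.pt.1)
    (hcoord : ∀ n, p.circleCoord n = q.circleCoord n) : p = q := by
  obtain ⟨⟨x, z⟩, hp⟩ := p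
  obtain ⟨⟨y, w⟩, hq⟩ := q
  obtain rfl : x = y := hfst
  simp only [circleCoord] at hp hq hcoord
  grind

theorem ESp.wt_mul_dist_one_le (hd : Function.Injective d) {p q : ESp X d} {ε : ℝ} (hε : 0 ≤ ε)
    (hcoord : ∀ n : ℕ+, 1 / (n : ℝ) * dist (p.circleCoord n) (q.circleCoord n) ≤ ε)
    (hpq : ¬(p.pt.1 = q.pt.1 ∧ ∃ n, p.pt.1 = d n)) : wt d p.pt.1 * dist p.pt.2 1 ≤ ε := by
  by_cases hn : ∃ n, p.pt.1 = d n
  · obtain ⟨n, hn⟩ := hn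
    have hq : q.pt.1 ≠ d n := fun h => hpq ⟨hn.trans h.symm, n, hn⟩
    simpa [circleCoord, hn, hq, wt_apply hd] using hcoord n
  · rwa [wt, dif_neg hn, zero_mul]

theorem ESp.rho_le_of_circleCoord (hd : Function.Injective d) {p q : ESp X d} {ε : ℝ} (hε : 0 ≤ ε)
    (hcoord : ∀ n : ℕ+, 1 / (n : ℝ) * dist (p.circleCoord n) (q.circleCoord n) ≤ ε) :
    rho d p.pt q.pt ≤ dist p.pt.1 q.pt.1 + 2 * ε := by
  unfold rho
  split_ifs with h
  · obtain ⟨heq, n, hn⟩ := h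
    have hle : wt d p.pt.1 * dist p.pt.2 q.pt.2 ≤ ε := by
      simpa [circleCoord, ← heq, hn, wt_apply hd] using hcoord n
    linarith [dist_nonneg (x := p.pt.1) (y := q.pt.1)]
  · have hp := wt_mul_dist_one_le hd hε hcoord h
    have hq := wt_mul_dist_one_le hd hε (fun n => dist_comm (p.circleCoord n) _ ▸ hcoord n)
      fun h' => h ⟨h'.1.symm, h'.1 ▸ h'.2⟩
    linarith

theorem ESp.continuousOn_of_circleCoord (hd : Function.Injective d) {Y : Type*}
    [TopologicalSpace Y] {S : Set Y} {H : Y → ESp X d} (hfst : ContinuousOn (fun y => (H y).pt.1) S)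
    (hcoord : ∀ n, ContinuousOn (fun y => (H y).circleCoord n) S) : ContinuousOn H S := by
  rw [continuousOn_to_generateFrom_iff]
  rintro y₀ hy₀ _ ⟨p, r, rfl⟩ (hr : rho d p.pt (H y₀).pt < r)
  obtain ⟨ε, hε, hεr⟩ : ∃ ε > 0, 3 * ε < r - rho d p.pt (H y₀).pt :=
    ⟨(r - rho d p.pt (H y₀).pt) / 4, by linarith, by linarith⟩
  have hweight : Tendsto (fun n : ℕ+ => 1 / (n : ℝ)) cofinite (𝓝 0) := by
    have hcast := PNat.coe_injective.tendsto_cofinite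
    rw [Nat.cofinite_eq_atTop] at hcast
    exact tendsto_one_div_atTop_nhds_zero_nat.comp hcast
  filter_upwards [eventually_forall_mul_dist_lt hweight (fun n => hcoord n y₀ hy₀) hε,
    Metric.tendsto_nhds.1 (hfst y₀ hy₀) ε hε] with y hcircle hbase
  have hrho := rho_le_of_circleCoord hd hε.le fun n => dist_comm (α := Circle) _ _ ▸ (hcircle n).le
  change rho d p.pt (H y).pt < r
  rw [dist_comm] at hbase
  linarith [rho_triangle (d := d) p.pt (H y₀).pt (H y).pt]

theorem ESp.exists_circleCoord_eq (hd : Function.Injective d) {x : X} {z : ℕ+ → Circle}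
    (hz : ∀ n, z n ≠ 1 → x = d n) :
    ∃ p : ESp X d, p.pt.1 = x ∧ ∀ n, p.circleCoord n = z n := by
  by_cases hx : ∃ n, x = d n
  · obtain ⟨n, rfl⟩ := hx
    refine ⟨⟨(d n, z n), .inr ⟨n, rfl⟩⟩, rfl, fun m => ?_⟩
    by_cases hm : d n = d m
    · simp [circleCoord, hd hm]
    · simpa [circleCoord, hm] using (not_imp_comm.1 (hz m) hm).symm
  · refine ⟨emb d x, rfl, fun n => ?_⟩
    have hn : x ≠ d n := fun h => hx ⟨n, h⟩
    simpa [circleCoord, emb, hn] using (not_imp_comm.1 (hz n) hn).symm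

theorem ESp.exists_continuousOn_glue (hd : Function.Injective d) {Y : Type*} [TopologicalSpace Y]
    {S : Set Y} {K : Y → X} {θ : ℕ+ → Y → Circle} (hK : ContinuousOn K S)
    (hθ : ∀ n, ContinuousOn (θ n) S) (hKθ : ∀ n, ∀ y ∈ S, θ n y ≠ 1 → K y = d n) :
    ∃ H : Y → ESp X d, ContinuousOn H S ∧
      ∀ y ∈ S, (H y).pt.1 = K y ∧ ∀ n, (H y).circleCoord n = θ n y := by
  have hpoint (y : Y) : ∃ p : ESp X d, y ∈ S → p.pt.1 = K y ∧ ∀ n, p.circleCoord n = θ n y := by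
    by_cases hy : y ∈ S
    · obtain ⟨p, hp⟩ := exists_circleCoord_eq hd fun n => hKθ n y hy
      exact ⟨p, fun _ => hp⟩
    · exact ⟨emb d (K y), fun h => absurd h hy⟩
  choose H hH using hpoint
  exact ⟨H, continuousOn_of_circleCoord hd (hK.congr fun y hy => (hH y hy).1)
    fun n => (hθ n).congr fun y hy => (hH y hy).2 n, hH⟩

end EarringSpace

section Strip

/-- A continuous function that climbs from `0` to `1` over the interval `[u, v]` and is constant on
either side of it. -/
structure IsStep (u v : ℝ) (φ : ℝ → ℝ) : Prop where
  continuous : Continuous φ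
  eq_zero : ∀ t ≤ u, φ t = 0
  eq_one : ∀ t, v ≤ t → φ t = 1

theorem IsStep.lt {u v : ℝ} {φ : ℝ → ℝ} (hφ : IsStep u v φ) : u < v := by
  by_contra! hvu
  exact zero_ne_one ((hφ.eq_zero u le_rfl).symm.trans (hφ.eq_one u hvu))

/-- The point reached at time `r` by the fixed winding of the circle if `s` is true, and by the
reverse winding otherwise. -/
def winding (s : Bool) (r : ℝ) : Circle := Circle.exp ((if s then 1 else -1) * (2 * Real.pi) * r)

theorem winding_zero (s : Bool) : winding s 0 = 1 := by simp [winding]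

theorem winding_one (s : Bool) : winding s 1 = 1 := by cases s <;> simp [winding, Circle.exp_neg]

theorem winding_sub (s : Bool) (r r' : ℝ) :
    winding s (r - r') = winding s r * winding (!s) r' := by
  rw [winding, winding, winding, ← Circle.exp_add]
  congr 1
  cases s <;> simp <;> ring

theorem continuous_winding (s : Bool) : Continuous (winding s) := by
  unfold winding
  fun_prop

theorem IsStep.winding_eq_one {u v t : ℝ} {φ : ℝ → ℝ} (hφ : IsStep u v φ) (s : Bool)
    (ht : t ∉ Ioo u v) : winding s (φ t) = 1 := by
  rcases le_or_gt t u with htu | hut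
  · rw [hφ.eq_zero t htu, winding_zero]
  · rw [hφ.eq_one t (not_lt.1 fun htv => ht ⟨hut, htv⟩), winding_one]

variable {x y z w : ℝ} {φ ψ : ℝ → ℝ}

theorem exists_chord_eq_zero (hxy : x ≤ y) (hzw : z ≤ w) {p : ℝ × ℝ} (hxw : chord (x, w) p ≤ 0)
    (hyz : 0 ≤ chord (y, z) p) :
    ∃ c : ℝ × ℝ, c.1 ∈ Icc x y ∧ c.2 ∈ Icc z w ∧ chord c p = 0 := by
  have hconn : IsPreconnected (Icc x y ×ˢ Icc z w) := isPreconnected_Icc.prod isPreconnected_Icc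
  have hcont : Continuous fun c : ℝ × ℝ => chord c p := by
    simp only [chord_apply]
    fun_prop
  obtain ⟨c, ⟨hc₁, hc₂⟩, hc⟩ := hconn.intermediate_value
    (⟨left_mem_Icc.2 hxy, right_mem_Icc.2 hzw⟩ : (x, w) ∈ Icc x y ×ˢ Icc z w)
    (⟨right_mem_Icc.2 hxy, left_mem_Icc.2 hzw⟩ : (y, z) ∈ Icc x y ×ˢ Icc z w)
    hcont.continuousOn ⟨hxw, hyz⟩
  exact ⟨c, hc₁, hc₂, hc⟩

theorem IsStep.exists_strip (hφ : IsStep x y φ) (hψ : IsStep z w ψ) (hyz : y ≤ z) :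
    ∃ G : C(ℝ × ℝ, ℝ), (∀ t, G (t, t ^ 2) = φ t - ψ t) ∧
      ∀ p : ℝ × ℝ, p.1 ^ 2 ≤ p.2 →
        (chord (y, z) p ≤ 0 → G p = 1) ∧ (0 ≤ chord (x, w) p → G p = 0) := by
  have hxy := hφ.lt
  have hzw := hψ.lt
  have hdiff : Continuous fun p : ℝ × ℝ => φ p.1 - ψ p.1 :=
    (hφ.continuous.comp continuous_fst).sub (hψ.continuous.comp continuous_fst)
  let parabola : Set (ℝ × ℝ) := {p | p.2 = p.1 ^ 2}
  let above : Set (ℝ × ℝ) := {p | 0 ≤ chord (x, w) p}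
  have hparabola : IsClosed parabola := isClosed_eq (by fun_prop) (by fun_prop)
  have habove : IsClosed above := isClosed_le continuous_const (chord (x, w)).cont
  have hinter : EqOn (fun p : ℝ × ℝ => φ p.1 - ψ p.1) (fun _ => 0)
      ((parabola ∪ lens y z) ∩ above) := by
    rintro p ⟨hp | hp, hxw⟩ <;> simp only [above, mem_ofPred_eq, chord_apply] at hxw
    · have hp : p.2 = p.1 ^ 2 := hp
      rcases le_or_gt p.1 x with hpx | hxp
      · simp [hφ.eq_zero _ hpx, hψ.eq_zero p.1 (by linarith)]
      · have hwp : w ≤ p.1 := by nlinarith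
        simp [hφ.eq_one p.1 (by linarith), hψ.eq_one _ hwp]
    · have hfst := fst_mem_Icc_of_mem_lens hyz hp
      have hle := hp.2
      rw [chord_apply] at hle
      nlinarith [hfst.1, hfst.2]
  obtain ⟨G, hG, hG₀⟩ := exists_continuousMap_eqOn_eqOn (hparabola.union (isClosed_lens y z)) habove
    hdiff.continuousOn continuousOn_const hinter
  refine ⟨G, fun t => hG (.inl rfl), fun p hp => ⟨fun hle => ?_, fun hge => hG₀ hge⟩⟩
  have hfst := fst_mem_Icc_of_mem_lens hyz ⟨hp, hle⟩
  refine (hG (.inr ⟨hp, hle⟩)).trans ?_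
  simp [hφ.eq_one _ hfst.1, hψ.eq_zero _ hfst.2]

theorem IsStep.exists_strip_winding (hφ : IsStep x y φ) (hψ : IsStep z w ψ) (hyz : y ≤ z)
    (s : Bool) :
    ∃ Θ : C(ℝ × ℝ, Circle),
      (∀ t, Θ (t, t ^ 2) = winding s (φ t) * winding (!s) (ψ t)) ∧
      ∀ p : ℝ × ℝ, p.1 ^ 2 ≤ p.2 → Θ p ≠ 1 → chord (x, w) p < 0 ∧
        ∃ c : ℝ × ℝ, c.1 ∈ Icc x y ∧ c.2 ∈ Icc z w ∧ chord c p = 0 := by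
  obtain ⟨G, hparabola, hG⟩ := hφ.exists_strip hψ hyz
  refine ⟨⟨_, (continuous_winding s).comp G.continuous⟩, fun t => ?_, fun p hp hne => ?_⟩
  · change winding s (G (t, t ^ 2)) = _
    rw [hparabola, winding_sub]
  · have hxw : chord (x, w) p < 0 := by
      by_contra! hge
      exact hne ((congrArg (winding s) ((hG p hp).2 hge)).trans (winding_zero s))
    have hyz : 0 < chord (y, z) p := by
      by_contra! hle
      exact hne ((congrArg (winding s) ((hG p hp).1 hle)).trans (winding_one s))
    exact ⟨hxw, exists_chord_eq_zero hφ.lt.le hψ.lt.le hxw.le hyz.le⟩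

end Strip

theorem prod_eq_prod_filter_lt_mul {ι M : Type*} [LinearOrder ι] [CommMonoid M] {s : Finset ι}
    {σ : ι → ι} (hmaps : ∀ i ∈ s, σ i ∈ s) (hinvol : ∀ i ∈ s, σ (σ i) = i)
    (hne : ∀ i ∈ s, σ i ≠ i) (g : ι → M) :
    ∏ i ∈ s, g i = ∏ i ∈ s with i < σ i, g i * g (σ i) := by
  rw [Finset.prod_mul_distrib, ← Finset.prod_filter_mul_prod_filter_not s (fun i => i < σ i)]
  congr 1
  refine Finset.prod_nbij' σ σ ?_ ?_ ?_ ?_ ?_ <;> grind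

section Windings

variable {X : Type*} [MetricSpace X] {d : ℕ+ → X} {f : ℝ → ESp X d} {a b : ℝ} {W : InfWord ℕ+}
  {u v : W.ι → ℝ}

theorem Realizes.exists_isStep (hreal : Realizes d f a b W u v) (i : W.ι) :
    ∃ φ, IsStep (u i) (v i) φ ∧ ∀ t ∈ Icc (u i) (v i),
      (f t).pt = (d (W.letter i).1, winding (W.letter i).2 (φ t)) := by
  have huv := (hreal.1 i).2.1.le
  obtain ⟨φ, hφ, hu, hv, hf⟩ : ∃ φ : ℝ → ℝ, ContinuousOn φ (Icc (u i) (v i)) ∧ φ (u i) = 0 ∧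
      φ (v i) = 1 ∧ ∀ t ∈ Icc (u i) (v i),
        (f t).pt = (d (W.letter i).1, winding (W.letter i).2 (φ t)) := by
    have hi := hreal.2.2.1 i
    unfold winding
    split_ifs at hi ⊢
    all_goals
      obtain ⟨φ, hφ, -, hu, hv, hf⟩ := hi
      exact ⟨φ, hφ, hu, hv, by simpa using hf⟩
  refine ⟨IccExtend huv ((Icc (u i) (v i)).domRestrict φ), ⟨hφ.domRestrict.Icc_extend', ?_, ?_⟩, ?_⟩
  · exact fun t ht => (IccExtend_of_le_left huv _ ht).trans hu
  · exact fun t ht => (IccExtend_of_right_le huv _ ht).trans hv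
  · intro t ht
    rw [IccExtend_of_mem huv _ ht]
    exact hf t ht

theorem Realizes.eq_of_mem_Ioo (hreal : Realizes d f a b W u v) {i j : W.ι} {t : ℝ}
    (hi : t ∈ Ioo (u i) (v i)) (hj : t ∈ Ioo (u j) (v j)) : i = j := by
  by_contra hne
  rcases lt_or_gt_of_ne hne with hij | hji
  · exact ((hi.2.trans_le (hreal.2.1 i j hij)).trans hj.1).false
  · exact ((hj.2.trans_le (hreal.2.1 j i hji)).trans hi.1).false

theorem Realizes.circleCoord_eq_prod (hd : Function.Injective d) (hreal : Realizes d f a b W u v)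
    {φ : W.ι → ℝ → ℝ} (hφ : ∀ i, IsStep (u i) (v i) (φ i))
    (hf : ∀ i, ∀ t ∈ Icc (u i) (v i),
      (f t).pt = (d (W.letter i).1, winding (W.letter i).2 (φ i t)))
    (n : ℕ+) {t : ℝ} (ht : t ∈ Icc a b) :
    (f t).circleCoord n = ∏ i ∈ (W.finOcc n).toFinset, winding (W.letter i).2 (φ i t) := by
  by_cases hX : InX (f t)
  · have hnotMem := (hreal.2.2.2 t ht).1 hX
    rw [Finset.prod_eq_one fun i _ => (hφ i).winding_eq_one _ (hnotMem i), ESp.circleCoord,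
      show (f t).pt.2 = 1 from hX, ite_self]
  obtain ⟨k, hk⟩ : ∃ k, t ∈ Ioo (u k) (v k) := by
    by_contra! hnotMem
    exact hX ((hreal.2.2.2 t ht).2 hnotMem)
  have hother (i : W.ι) (hik : i ≠ k) : winding (W.letter i).2 (φ i t) = 1 :=
    (hφ i).winding_eq_one _ fun hi => hik (hreal.eq_of_mem_Ioo hi hk)
  have hpt := hf k t (Ioo_subset_Icc_self hk)
  by_cases hkn : (W.letter k).1 = n
  · rw [Finset.prod_eq_single_of_mem k (by simpa using hkn) fun i _ => hother i, ESp.circleCoord,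
      hpt, if_pos (congrArg d hkn)]
  · rw [Finset.prod_eq_one, ESp.circleCoord, if_neg]
    · rw [hpt]
      exact fun h => hkn (hd h)
    · rintro i hi
      refine hother i ?_
      rintro rfl
      exact hkn (by simpa using hi)

theorem Realizes.exists_circle_extension (hd : Function.Injective d)
    (hreal : Realizes d f a b W u v) {σ : W.ι → W.ι}
    (hσ : IsNoncrossingPairing W.letter univ σ) (n : ℕ+) :
    ∃ θ : C(ℝ × ℝ, Circle), (∀ t ∈ Icc a b, θ (t, t ^ 2) = (f t).circleCoord n) ∧
      ∀ p : ℝ × ℝ, p.1 ^ 2 ≤ p.2 → θ p ≠ 1 → ∃ i, (W.letter i).1 = n ∧ i < σ i ∧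
        chord (u i, v (σ i)) p < 0 ∧
        ∃ c : ℝ × ℝ, c.1 ∈ Icc (u i) (v i) ∧ c.2 ∈ Icc (u (σ i)) (v (σ i)) ∧ chord c p = 0 := by
  choose φ hφ hf using hreal.exists_isStep
  have hstrip (i : W.ι) (hi : i < σ i) :=
    (hφ i).exists_strip_winding (hφ (σ i)) (hreal.2.1 i _ hi) (W.letter i).2
  choose! Θ hΘ hΘne using hstrip
  refine ⟨∏ i ∈ (W.finOcc n).toFinset with i < σ i, Θ i, fun t ht => ?_, fun p hp hne => ?_⟩
  · have hletter (i : W.ι) : W.letter (σ i) = ((W.letter i).1, !(W.letter i).2) :=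
      hσ.letter_eq i trivial
    rw [ContinuousMap.prod_apply, hreal.circleCoord_eq_prod hd hφ hf n ht,
      prod_eq_prod_filter_lt_mul (s := (W.finOcc n).toFinset) (σ := σ)]
    · refine Finset.prod_congr rfl fun i hi => ?_
      rw [hΘ i (Finset.mem_filter.1 hi).2, hletter]
    · intro i hi
      simpa [hletter] using hi
    · exact fun i _ => hσ.invol i trivial
    · intro i _ heq
      simpa [heq] using congrArg Prod.snd (hletter i)
  · rw [ContinuousMap.prod_apply] at hne
    obtain ⟨i, hi, hne⟩ := Finset.exists_ne_one_of_prod_ne_one hne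
    obtain ⟨hin, hi⟩ : (W.letter i).1 = n ∧ i < σ i := by simpa using hi
    exact ⟨i, hin, hi, hΘne i hi p hp hne⟩

end Windings

section NullHomotopy

variable {X : Type*} [MetricSpace X] {d : ℕ+ → X} {f : ℝ → ESp X d} {a b : ℝ} {W : InfWord ℕ+}
  {u v : W.ι → ℝ}

theorem htpyRel_const_of_lens (hab : a ≤ b) {G : ℝ × ℝ → ESp X d}
    (hG : ContinuousOn G (lens a b)) (hparabola : ∀ t ∈ Icc a b, G (t, t ^ 2) = f t)
    (hchord : ∀ p ∈ lens a b, chord (a, b) p = 0 → G p = f a) :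
    HtpyRel d f (fun _ => f a) a b := by
  refine ⟨G ∘ lensMap a b, hG.comp (continuous_lensMap a b).continuousOn
    fun z hz => lensMap_mem_lens hz, fun s hs => ⟨?_, ?_⟩, fun t _ => ⟨?_, ?_⟩⟩
  · simpa [lensMap] using hparabola s hs
  · refine hchord _ (lensMap_mem_lens ⟨hs, right_mem_Icc.2 zero_le_one⟩) ?_
    rw [chord_apply, lensMap]
    ring
  · simpa [lensMap] using hparabola a (left_mem_Icc.2 hab)
  · simpa [lensMap] using hparabola b (right_mem_Icc.2 hab)

theorem Realizes.fst_eq (hreal : Realizes d f a b W u v) (i : W.ι) {t : ℝ}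
    (ht : t ∈ Icc (u i) (v i)) : (f t).pt.1 = d (W.letter i).1 := by
  obtain ⟨φ, -, hφ⟩ := hreal.exists_isStep i
  rw [hφ t ht]

theorem Realizes.circleCoord_left_eq_one (hreal : Realizes d f a b W u v) (hab : a ≤ b) (n : ℕ+) :
    (f a).circleCoord n = 1 := by
  have hX : InX (f a) := (hreal.2.2.2 a (left_mem_Icc.2 hab)).2 fun i hi =>
    hi.1.not_ge (hreal.1 i).1
  rw [ESp.circleCoord, show (f a).pt.2 = 1 from hX, ite_self]

end NullHomotopy

theorem proper_loop_nullhomotopic_general {X : Type*} [MetricSpace X] {d : ℕ+ → X}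
    (hd : Function.Injective d) [SimplyConnectedSpace X] (hlsc : LocSimplyConnected X)
    {f : ℝ → ESp X d} {a b : ℝ} (hab : a ≤ b) (hloop : f a = f b)
    (hf : ContinuousOn f (Icc a b)) {W : InfWord ℕ+} {u v : W.ι → ℝ}
    (hreal : Realizes d f a b W u v) (hnull : W.IsNull) : HtpyRel d f (fun _ => f a) a b := by
  obtain ⟨σ, hσ⟩ := hnull.exists_isNoncrossingPairing
  have hq : ContinuousOn (fun t => (f t).pt.1) (Icc a b) := continuous_pt_fst.comp_continuousOn hf
  have hC := (hσ.isChordSystem hab (congrArg (fun p : ESp X d => p.pt.1) hloop)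
    (fun i => (hreal.1 i).1) (fun i => (hreal.1 i).2.2) hreal.2.1
    fun i t ht => hreal.fst_eq i ht).closure hq
  obtain ⟨K, hK, hKchord⟩ := hC.exists_extension hlsc isClosed_closure hq
  choose θ hθf hθ using hreal.exists_circle_extension hd hσ
  obtain ⟨G, hG, hGcoord⟩ := ESp.exists_continuousOn_glue hd hK
    (fun n => (θ n).continuous.continuousOn) fun n p hp hne => by
      obtain ⟨i, hin, hi, -, c, hc₁, hc₂, hc⟩ := hθ n p hp.1 hne
      rw [hKchord c (subset_closure (.inr ⟨i, hi, hc₁, hc₂⟩)) p hp hc, hreal.fst_eq i hc₁, hin]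
  refine htpyRel_const_of_lens hab hG (fun t ht => ?_) fun p hp hchord => ?_
  · obtain ⟨hfst, hcoord⟩ := hGcoord _ (parabola_mem_lens ht)
    refine ESp.ext_circleCoord (hfst.trans ?_) fun n => (hcoord n).trans (hθf n t ht)
    exact hKchord (t, t) (hC.diag t ht) _ (parabola_mem_lens ht) (by simp [chord_apply])
  · obtain ⟨hfst, hcoord⟩ := hGcoord p hp
    refine ESp.ext_circleCoord (hfst.trans (hKchord (a, b) hC.outer p hp hchord)) fun n => ?_
    rw [hcoord, hreal.circleCoord_left_eq_one hab]
    by_contra hne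
    obtain ⟨i, -, -, hlt, -⟩ := hθ n p hp.1 hne
    have huv := hreal.1
    exact hlt.not_ge (hchord ▸ chord_le_chord ⟨(huv i).1, (huv i).2.1.le.trans (huv i).2.2⟩
      ⟨(huv _).1.trans (huv _).2.1.le, (huv _).2.2⟩ (fst_mem_Icc_of_mem_lens hab hp))

/-- Let `X` be simply connected and locally simply connected, `D` countable dense.  If the
word `W^f` of a proper loop `f` in `E(X,D)` based at a point of `X` is equivalent to the
empty word, then `f` is null-homotopic. -/
theorem proper_loop_nullhomotopic {X : Type*} [MetricSpace X]
    (d : ℕ+ → X) (hd : Function.Injective d) (hdense : DenseRange d)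
    [SimplyConnectedSpace X] (hlsc : LocSimplyConnected X)
    (f : ℝ → ESp X d) (a b : ℝ) (hab : a < b) (hloop : f a = f b)
    (hf : IsProper d f a b)
    (W : InfWord ℕ+) (u v : W.ι → ℝ) (hreal : Realizes d f a b W u v)
    (hnull : W.IsNull) :
    HtpyRel d f (fun _ => f a) a b :=
  proper_loop_nullhomotopic_general hd hlsc hab.le hloop hf.1 hreal hnull

end EarringPaper
end
end
end

section
/- The free σ-product ⨉^σ_{d∈D} ℤ_d (equivalently, the Hawaiian earring group π₁(H)) contains no subgroup isomorphic to the additive group of rationals ℚ, since every nonzero abelian subgroup of ⨉^σ_{d∈D} ℤ_d is isomorphic to ℤ. -/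
/-! Every nontrivial abelian subgroup of the Hawaiian earring group (equivalently, of the
free σ-product `⨉^σ_{d∈D} ℤ_d`) is infinite cyclic; in particular no subgroup of the
Hawaiian earring group is isomorphic to `ℚ`. -/

noncomputable section

namespace EarringPaper

/-- The Hawaiian earring `H = ⋃_{n ≥ 1} C_n ⊆ ℝ²`, `C_n` the circle of radius `1/n`
centered at `(-1/n, 0)`. -/
def HEset : Set (ℝ × ℝ) :=
  {p | ∃ n : ℕ+, (p.1 + 1 / (n : ℝ)) ^ 2 + p.2 ^ 2 = (1 / (n : ℝ)) ^ 2}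

/-- The wild point (origin) of the Hawaiian earring. -/
def h0 : HEset := ⟨(0, 0), 1, by norm_num⟩

/-!
Write each loop of the earring, up to its first `n` circles, as a word in the free product of `n`
real lines, by developing the angle that it travels along each circle. The development is a map from
the interval to the free product, and the distances of its values in the real tree of reduced words
are bounded circle by circle, uniformly in `n`. An ultrafilter limit over `n` is therefore a tree
pseudometric on the interval, continuous and fine enough for the loop to factor through its quotient
tree. If all words of the loop are trivial, then the loop factors through the tree as a closed loop,
so it contracts inside the tree.

Hence the fundamental group embeds into an inverse limit of free groups whose kernels are nested.
Two nontrivial commuting elements of a free group have a nontrivial common power, so a homomorphism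
to one of these free groups that is nontrivial on an abelian subgroup is injective on it.
-/

section FreeProduct

open Monoid

variable {ι : Type*} {M N : ι → Type*} [∀ i, Monoid (M i)] [∀ i, Monoid (N i)]

theorem exists_word_map {f : ∀ i, M i →* N i} (hf : ∀ i, Function.Injective (f i))
    (w : CoprodI.Word M) : ∃ w' : CoprodI.Word N, w'.toList = w.toList.map (Sigma.map id (f ·)) ∧
      w'.prod = CoprodI.lift (fun i ↦ CoprodI.of.comp (f i)) w.prod := by
  refine ⟨⟨w.toList.map (Sigma.map id (f ·)), fun l hl ↦ ?_, ?_⟩, rfl, ?_⟩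
  · obtain ⟨l', hl', rfl⟩ := List.mem_map.1 hl
    exact (map_ne_one_iff (f l'.1) (hf l'.1)).2 (w.ne_one l' hl')
  · exact List.isChain_map _ |>.2 w.chain_ne
  · simp only [CoprodI.Word.prod, map_list_prod, List.map_map]
    refine congrArg List.prod (List.map_congr_left fun l _ ↦ ?_)
    simp only [Function.comp_apply, CoprodI.lift_of]
    rfl

theorem lift_of_comp_injective {f : ∀ i, M i →* N i} (hf : ∀ i, Function.Injective (f i)) :
    Function.Injective (CoprodI.lift fun i ↦ CoprodI.of.comp (f i)) := by
  classical
  intro x y hxy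
  obtain ⟨v, rfl⟩ := CoprodI.Word.equiv.symm.surjective x
  obtain ⟨w, rfl⟩ := CoprodI.Word.equiv.symm.surjective y
  obtain ⟨v', hv', hv⟩ := exists_word_map hf v
  obtain ⟨w', hw', hw⟩ := exists_word_map hf w
  obtain rfl : v' = w' := CoprodI.Word.equiv.symm.injective <| hv.trans <| hxy.trans hw.symm
  have letters_injective : Function.Injective (Sigma.map id (f ·)) :=
    Function.injective_id.sigma_map hf
  exact congrArg CoprodI.Word.prod <| CoprodI.Word.ext <|
    List.map_injective_iff.2 letters_injective (hv'.symm.trans hw')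

end FreeProduct

section FreeGroup

instance : IsFreeGroup (Multiplicative ℤ) :=
  .ofMulEquiv (FreeGroup.mulEquivIntOfUnique (α := Unit))

theorem subsingleton_of_isMulCommutative_freeGroup {α : Type*} [IsMulCommutative (FreeGroup α)] :
    Subsingleton α := by
  classical
  refine ⟨fun a b ↦ of_not_not fun hab ↦ ?_⟩
  have := congrArg FreeGroup.toWord (mul_comm' (FreeGroup.of a) (FreeGroup.of b))
  simp [FreeGroup.toWord_mul, FreeGroup.reduce, hab] at this

theorem nonempty_mulEquiv_int_of_isFreeGroup (F : Type*) [Group F] [IsFreeGroup F] [Nontrivial F]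
    [IsMulCommutative F] : Nonempty (F ≃* Multiplicative ℤ) := by
  let e := IsFreeGroup.toFreeGroup F
  have : IsMulCommutative (FreeGroup (IsFreeGroup.Generators F)) :=
    .of_comm fun a b ↦ e.symm.injective <| by rw [map_mul, map_mul, mul_comm']
  have := subsingleton_of_isMulCommutative_freeGroup (α := IsFreeGroup.Generators F)
  have : Nonempty (IsFreeGroup.Generators F) := not_isEmpty_iff.1 fun _ ↦
    not_subsingleton F e.toEquiv.subsingleton
  have : Unique (IsFreeGroup.Generators F) := Classical.choice (nonempty_unique _)
  exact ⟨e.trans FreeGroup.mulEquivIntOfUnique⟩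

instance isMulTorsionFree_of_isFreeGroup {F : Type*} [Group F] [IsFreeGroup F] :
    IsMulTorsionFree F :=
  (IsFreeGroup.toFreeGroup F).injective.isMulTorsionFree (IsFreeGroup.toFreeGroup F).toMonoidHom

theorem exists_zpow_eq_zpow {F : Type*} [Group F] [IsFreeGroup F] {a b : F} (hab : Commute a b)
    (ha : a ≠ 1) (hb : b ≠ 1) : ∃ m ≠ 0, ∃ n ≠ 0, a ^ (m : ℤ) = b ^ (n : ℤ) := by
  let C := Subgroup.closure {a, b}
  have : IsMulCommutative C := Subgroup.isMulCommutative_closure <| by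
    rintro x (rfl | rfl) y (rfl | rfl)
    exacts [rfl, hab, hab.symm, rfl]
  let a' : C := ⟨a, Subgroup.subset_closure (.inl rfl)⟩
  let b' : C := ⟨b, Subgroup.subset_closure (.inr rfl)⟩
  have ha' : a' ≠ 1 := Subtype.coe_ne_coe.1 ha
  have hb' : b' ≠ 1 := Subtype.coe_ne_coe.1 hb
  have : Nontrivial C := ⟨a', 1, ha'⟩
  obtain ⟨e⟩ := nonempty_mulEquiv_int_of_isFreeGroup C
  have common : a' ^ (e b').toAdd = b' ^ (e a').toAdd := e.injective <| by
    rw [map_zpow, map_zpow]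
    exact congrArg Multiplicative.ofAdd (mul_comm _ _)
  exact ⟨(e b').toAdd, e.map_ne_one_iff.2 hb', (e a').toAdd, e.map_ne_one_iff.2 ha',
    congrArg Subtype.val common⟩

/-- Two commuting elements have a common power as seen by a fine homomorphism, hence as seen by a
coarse one: the coarse one cannot kill just one of them. -/
theorem nonempty_mulEquiv_int_of_iInf_ker {ι G : Type*} [SemilatticeSup ι] {F : ι → Type*} [Group G]
    [∀ i, Group (F i)] [∀ i, IsFreeGroup (F i)] (φ : ∀ i, G →* F i)
    (hφ : Antitone fun i ↦ (φ i).ker) (ker_eq_bot : ⨅ i, (φ i).ker = ⊥) (A : Subgroup G)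
    [Nontrivial A] [IsMulCommutative A] : Nonempty (A ≃* Multiplicative ℤ) := by
  have exists_ne_one : ∀ g ≠ 1, ∃ i, φ i g ≠ 1 := fun g hg ↦ by
    by_contra! killed
    exact hg (ker_eq_bot.le ((Subgroup.mem_iInf).2 killed))
  obtain ⟨g, hg⟩ := exists_ne (1 : A)
  obtain ⟨i, hi⟩ := exists_ne_one g (Subtype.coe_ne_coe.2 hg)
  have injective : Function.Injective ((φ i).comp A.subtype) :=
    (injective_iff_map_eq_one _).2 fun a (ha : φ i a = 1) ↦ by
      by_contra! ha₁
      obtain ⟨j, hj⟩ := exists_ne_one a (Subtype.coe_ne_coe.2 ha₁)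
      have commute : Commute (g : G) a := setLike_mul_comm g.2 a.2
      obtain ⟨m, hm, n, -, hmn⟩ := exists_zpow_eq_zpow (commute.map (φ (i ⊔ j)))
        (mt (@hφ _ _ le_sup_left _) hi) (mt (@hφ _ _ le_sup_right _) hj)
      have fine : (g : G) ^ m * (a ^ n : G)⁻¹ ∈ (φ (i ⊔ j)).ker := by
        rw [MonoidHom.mem_ker, map_mul, map_inv, map_zpow, map_zpow, hmn, mul_inv_cancel]
      have coarse : φ i g ^ m = 1 := by
        simpa [MonoidHom.mem_ker, ha] using hφ le_sup_left fine
      exact hi ((IsMulTorsionFree.zpow_eq_one_iff_left hm).1 coarse)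
  have : IsFreeGroup A := .ofMulEquiv (MonoidHom.ofInjective injective).symm
  exact nonempty_mulEquiv_int_of_isFreeGroup A

theorem not_nonempty_rat_mulEquiv_int : ¬Nonempty (Multiplicative ℚ ≃* Multiplicative ℤ) := by
  rintro ⟨e⟩
  obtain ⟨x, hx⟩ := e.surjective (.ofAdd 1)
  have half : x = .ofAdd (x.toAdd / 2) * .ofAdd (x.toAdd / 2) :=
    congrArg Multiplicative.ofAdd (add_halves x.toAdd).symm
  rw [half, map_mul] at hx
  have := congrArg Multiplicative.toAdd hx
  rw [toAdd_mul, toAdd_ofAdd] at this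
  lia

end FreeGroup

section Development

open Topology

variable {X Z G : Type*} [TopologicalSpace Z] [Group G]

/-- `δ` is a development of `E` along `γ`: near each `z₀` it is transported by the values of `E`.
The transport multiplies on the left because left multiplication is what acts on reduced words. -/
def IsDevelopment (E : X → X → G) (γ : Z → X) (δ : Z → G) : Prop :=
  ∀ z₀, ∀ᶠ z in 𝓝 z₀, δ z = E (γ z₀) (γ z) * δ z₀

theorem eq_of_eventually_eq [PreconnectedSpace Z] {Y : Type*} {f : Z → Y}
    (h : ∀ z₀, ∀ᶠ z in 𝓝 z₀, f z = f z₀) (x y : Z) : f x = f y :=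
  ((IsLocallyConstant.iff_eventually_eq f).2 h).apply_eq_of_preconnectedSpace x y

namespace IsDevelopment

variable {E : X → X → G} {γ : Z → X} {δ δ' : Z → G}

theorem mul_right (h : IsDevelopment E γ δ) (g : G) :
    IsDevelopment E γ (fun z ↦ δ z * g) := fun z₀ ↦
  (h z₀).mono fun z hz ↦ by simp only [hz, mul_assoc]

theorem map {H : Type*} [Group H] (h : IsDevelopment E γ δ) (f : G →* H) :
    IsDevelopment (fun p q ↦ f (E p q)) γ (fun z ↦ f (δ z)) := fun z₀ ↦
  (h z₀).mono fun z hz ↦ by simp only [hz, map_mul]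

theorem comp {W : Type*} [TopologicalSpace W] (h : IsDevelopment E γ δ) {f : W → Z}
    (hf : Continuous f) :
    IsDevelopment E (γ ∘ f) (δ ∘ f) := fun w₀ ↦
  hf.continuousAt.eventually (h (f w₀))

theorem inv_mul_eq [PreconnectedSpace Z] (h : IsDevelopment E γ δ) (h' : IsDevelopment E γ δ')
    (z w : Z) :
    (δ z)⁻¹ * δ' z = (δ w)⁻¹ * δ' w := by
  refine eq_of_eventually_eq (f := fun z ↦ (δ z)⁻¹ * δ' z) (fun z₀ ↦ ?_) z w
  filter_upwards [h z₀, h' z₀] with z hz hz'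
  rw [hz, hz', mul_inv_rev, mul_assoc, inv_mul_cancel_left]

theorem unique [PreconnectedSpace Z] (h : IsDevelopment E γ δ) (h' : IsDevelopment E γ δ') {z₀ : Z}
    (h₀ : δ z₀ = δ' z₀) : δ = δ' :=
  funext fun z ↦ inv_mul_eq_one.1 <| (h.inv_mul_eq h' z z₀).trans (inv_mul_eq_one.2 h₀)

end IsDevelopment

/-- `E` is a local cocycle with respect to the open neighbourhoods `U p`: these are the domains on
which `E p` can serve as a chart for developments. -/
structure IsLocalCocycle [TopologicalSpace X] (E : X → X → G) (U : X → Set X) : Prop where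
  isOpen : ∀ p, IsOpen (U p)
  mem : ∀ p, p ∈ U p
  self : ∀ p, E p p = 1
  mul : ∀ p, ∀ q₀ ∈ U p, ∀ᶠ q in 𝓝 q₀, E p q = E q₀ q * E p q₀

end Development

namespace IsLocalCocycle

open Topology unitInterval

variable {X Z G : Type*} [TopologicalSpace X] [TopologicalSpace Z] [Group G]
  [TopologicalSpace G] [DiscreteTopology G] {E : X → X → G} {U : X → Set X}

/-- The principal bundle with discrete fibre `G` and transition functions
`q ↦ (E p' q)⁻¹ * E p q`; its sections along a map are the developments along it. -/
def bundle (h : IsLocalCocycle E U) : FiberBundleCore X X G where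
  baseSet := U
  isOpen_baseSet := h.isOpen
  indexAt := id
  mem_baseSet_at := h.mem
  coordChange p p' q v := (E p' q)⁻¹ * E p q * v
  coordChange_self p q _ v := by rw [inv_mul_cancel, one_mul]
  continuousOn_coordChange p p' := by
    rintro ⟨q₀, v₀⟩ ⟨⟨hq, hq'⟩, -⟩
    have locally_const : ∀ᶠ y : X × G in 𝓝 (q₀, v₀),
        (E p' q₀)⁻¹ * E p q₀ * v₀ = (E p' y.1)⁻¹ * E p y.1 * y.2 := by
      rw [nhds_prod_eq, nhds_discrete G]
      filter_upwards [((h.mul p q₀ hq).and (h.mul p' q₀ hq')).prod_mk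
        (Filter.eventually_pure.2 rfl : ∀ᶠ v in pure v₀, v = v₀)] with y ⟨⟨h1, h2⟩, h3⟩
      rw [h1, h2, h3]
      group
    exact (continuousAt_const.congr locally_const).continuousWithinAt
  coordChange_comp i j k q _ v := by group

/-- The total space of `IsLocalCocycle.bundle`. -/
abbrev Total (h : IsLocalCocycle E U) : Type _ := Bundle.TotalSpace G h.bundle.Fiber

theorem isCoveringMap (h : IsLocalCocycle E U) :
    IsCoveringMap (Bundle.TotalSpace.proj : h.Total → X) :=
  FiberBundle.isCoveringMap (F := G) (E := h.bundle.Fiber)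

/-- The fibre coordinate of a point of the bundle in the trivialisation centred at its
projection. -/
def coord (h : IsLocalCocycle E U) (e : h.Total) : G := e.2

theorem isDevelopment_of_continuous (h : IsLocalCocycle E U) {Γ : Z → h.Total} (hΓ : Continuous Γ) :
    IsDevelopment E (fun z ↦ (Γ z).1) (fun z ↦ h.coord (Γ z)) := fun z₀ ↦ by
  let T := h.bundle.localTriv (Γ z₀).1
  have chart_continuous : ContinuousAt (fun z ↦ (T (Γ z)).2) z₀ := by
    refine continuousAt_snd.comp ((T.continuousAt ?_).comp hΓ.continuousAt)
    exact (h.bundle.mem_localTriv_source _ _).2 (h.mem _)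
  have chart_const : ∀ᶠ z in 𝓝 z₀, (T (Γ z)).2 = (T (Γ z₀)).2 :=
    chart_continuous.eventually (p := (· = (T (Γ z₀)).2)) (by simp [nhds_discrete])
  filter_upwards [chart_const] with z hz
  have hz' : (E (Γ z₀).1 (Γ z).1)⁻¹ * E (Γ z).1 (Γ z).1 * h.coord (Γ z) =
    (E (Γ z₀).1 (Γ z₀).1)⁻¹ * E (Γ z₀).1 (Γ z₀).1 * h.coord (Γ z₀) := hz
  rwa [h.self, mul_one, inv_mul_cancel, one_mul, inv_mul_eq_iff_eq_mul] at hz'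

variable {x y w : X}

/-- The lift of a path to the bundle; its fibre coordinate is the development of the path. -/
def lift (h : IsLocalCocycle E U) (γ : Path x y) (g : G) : C(I, h.Total) :=
  h.isCoveringMap.liftPath γ ⟨x, g⟩ γ.source

theorem proj_lift (h : IsLocalCocycle E U) (γ : Path x y) (g : G) (t : I) :
    (h.lift γ g t).1 = γ t :=
  congrFun (h.isCoveringMap.liftPath_lifts γ ⟨x, g⟩ γ.source) t

theorem coord_lift_zero (h : IsLocalCocycle E U) (γ : Path x y) (g : G) :
    h.coord (h.lift γ g 0) = g :=
  congrArg h.coord (h.isCoveringMap.liftPath_zero γ ⟨x, g⟩ γ.source)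

theorem isDevelopment_lift (h : IsLocalCocycle E U) (γ : Path x y) (g : G) :
    IsDevelopment E γ (fun t ↦ h.coord (h.lift γ g t)) := by
  simpa only [h.proj_lift] using h.isDevelopment_of_continuous (h.lift γ g).continuous

/-- The terminal value of the development of a path that starts at `1`. -/
def endpoint (h : IsLocalCocycle E U) (γ : Path x y) : G := h.coord (h.lift γ 1 1)

theorem endpoint_mul_zero (h : IsLocalCocycle E U) {γ : Path x y} {δ : I → G}
    (hδ : IsDevelopment E γ δ) : h.endpoint γ * δ 0 = δ 1 := by
  have agree : (fun t ↦ h.coord (h.lift γ 1 t) * δ 0) = δ :=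
    ((h.isDevelopment_lift γ 1).mul_right (δ 0)).unique hδ (z₀ := 0) <| by
      simp only [coord_lift_zero, one_mul]
  exact congrFun agree 1

theorem coord_lift_one (h : IsLocalCocycle E U) (γ : Path x y) (g : G) :
    h.coord (h.lift γ g 1) = h.endpoint γ * g := by
  rw [← h.endpoint_mul_zero (h.isDevelopment_lift γ g), h.coord_lift_zero]

theorem endpoint_eq_of_homotopic (h : IsLocalCocycle E U) {γ γ' : Path x y}
    (hom : γ.Homotopic γ') : h.endpoint γ = h.endpoint γ' :=
  congrArg h.coord <|
    h.isCoveringMap.liftPath_apply_one_eq_of_homotopicRel hom ⟨x, (1 : G)⟩ γ.source γ'.source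

theorem endpoint_trans (h : IsLocalCocycle E U) (γ : Path x y) (γ' : Path y w) :
    h.endpoint (γ.trans γ') = h.endpoint γ' * h.endpoint γ := by
  have lift_one : h.lift γ 1 1 = ⟨y, h.endpoint γ⟩ :=
    Bundle.TotalSpace.ext ((h.proj_lift γ 1 1).trans γ.target) HEq.rfl
  have lift_trans : h.lift (γ.trans γ') 1 1 = h.lift γ' (h.endpoint γ) 1 := by
    have := congr($(h.isCoveringMap.liftPath_trans (e := ⟨x, (1 : G)⟩) rfl γ γ') 1)
    rw [ContinuousMap.coe_coe, Path.target] at this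
    refine this.trans ?_
    change h.isCoveringMap.liftPath γ' (h.lift γ 1 1) _ 1 = _
    simp only [lift_one]
    rfl
  rw [endpoint, lift_trans, coord_lift_one]

/-- The holonomy homomorphism of a local cocycle. -/
def holonomy (h : IsLocalCocycle E U) (x : X) : FundamentalGroup X x →* G :=
  MonoidHom.mk' (Quotient.lift h.endpoint fun _ _ ↦ h.endpoint_eq_of_homotopic) fun p q ↦ by
    induction p using Quotient.inductionOn with | _ γ =>
    induction q using Quotient.inductionOn with | _ γ' =>
    exact h.endpoint_trans γ' γ

theorem exists_loop_isDevelopment (h : IsLocalCocycle E U) (g : FundamentalGroup X x) :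
    ∃ (γ : Path x x) (δ : I → G), g = ⟦γ⟧ ∧ IsDevelopment E γ δ ∧ δ 0 = 1 := by
  induction g using Quotient.inductionOn with | _ γ =>
  exact ⟨γ, _, rfl, h.isDevelopment_lift γ 1, h.coord_lift_zero γ 1⟩

theorem holonomy_mk (h : IsLocalCocycle E U) {γ : Path x x} {δ : I → G} (hδ : IsDevelopment E γ δ)
    (h₀ : δ 0 = 1) : h.holonomy x ⟦γ⟧ = δ 1 := by
  rw [← h.endpoint_mul_zero hδ, h₀, mul_one]
  rfl

end IsLocalCocycle

section RealWords

open Monoid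

/-- The free product of copies of the real line indexed by `ι`. -/
abbrev RealProd (ι : Type*) : Type _ := CoprodI fun _ : ι ↦ Multiplicative ℝ

/-- A power `l ^ a` of a generator `l` with real exponent `a`, as the pair `⟨l, a⟩`. -/
abbrev RealLetter (ι : Type*) : Type _ := Σ _ : ι, Multiplicative ℝ

variable {ι : Type*} [DecidableEq ι]

/-- Twice the length of the common part of the segments `[0, a]` and `[0, b]`. -/
def overlap (a b : ℝ) : ℝ := |a| + |b| - |a - b|

theorem overlap_comm (a b : ℝ) : overlap a b = overlap b a := by
  rw [overlap, overlap, abs_sub_comm, add_comm |a|]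

theorem overlap_nonneg (a b : ℝ) : 0 ≤ overlap a b := sub_nonneg.2 (abs_sub a b)

theorem overlap_self (a : ℝ) : overlap a a = |a| + |a| := by simp [overlap]

theorem overlap_zero_left (a : ℝ) : overlap 0 a = 0 := by simp [overlap]

theorem overlap_zero_right (a : ℝ) : overlap a 0 = 0 := by simp [overlap]

theorem overlap_le_left (a b : ℝ) : overlap a b ≤ |a| + |a| := by
  have := abs_sub_abs_le_abs_sub b a
  rw [overlap, abs_sub_comm]
  linarith

theorem overlap_ultra (a b c : ℝ) : overlap a b ≤ overlap a c ∨ overlap b c ≤ overlap a c := by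
  unfold overlap
  grind

/-- The exponent vector of a letter. -/
def letterVec (p : RealLetter ι) : ι → ℝ := Pi.single p.1 p.2.toAdd

/-- The total exponent of each generator in a word. -/
def wordSum (x : List (RealLetter ι)) : ι → ℝ := (x.map letterVec).sum

/-- The total absolute exponent of each generator in a word. -/
def wordLength (x : List (RealLetter ι)) : ι → ℝ := (x.map fun p ↦ |letterVec p|).sum

/-- Twice the length, generator by generator, of the common initial segment of two words. -/
def wordCommon : List (RealLetter ι) → List (RealLetter ι) → ι → ℝ
  | p :: x, q :: y => fun j ↦ overlap (letterVec p j) (letterVec q j) +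
      if p = q then wordCommon x y j else 0
  | [], _ => 0
  | _ :: _, [] => 0

/-- The length, generator by generator, of the path between two words in the tree of all words. -/
def wordDist (x y : List (RealLetter ι)) : ι → ℝ := wordLength x + wordLength y - wordCommon x y

theorem wordLength_cons (p : RealLetter ι) (x : List (RealLetter ι)) :
    wordLength (p :: x) = |letterVec p| + wordLength x := by
  simp only [wordLength, List.map_cons, List.sum_cons]

theorem wordSum_cons (p : RealLetter ι) (x : List (RealLetter ι)) :
    wordSum (p :: x) = letterVec p + wordSum x := by
  simp only [wordSum, List.map_cons, List.sum_cons]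

theorem wordLength_nonneg (x : List (RealLetter ι)) : 0 ≤ wordLength x :=
  List.sum_nonneg <| List.forall_mem_map.2 fun _ _ ↦ abs_nonneg _

theorem abs_wordSum_le (x : List (RealLetter ι)) : |wordSum x| ≤ wordLength x := by
  induction x with
  | nil => simp [wordSum, wordLength]
  | cons p x ih =>
    rw [wordSum_cons, wordLength_cons]
    exact (abs_add_le _ _).trans (add_le_add_right ih _)

theorem wordCommon_nil_right (x : List (RealLetter ι)) : wordCommon x [] = 0 := by
  cases x <;> rfl

theorem wordCommon_nonneg (x y : List (RealLetter ι)) : 0 ≤ wordCommon x y := by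
  induction x, y using wordCommon.induct with
  | case1 p x q y ih =>
    intro j
    have := overlap_nonneg (letterVec p j) (letterVec q j)
    have := ih j
    simp only [wordCommon, Pi.zero_apply] at *
    split_ifs <;> linarith
  | case2 => exact le_rfl
  | case3 => exact le_rfl

theorem wordCommon_comm (x y : List (RealLetter ι)) : wordCommon x y = wordCommon y x := by
  induction x, y using wordCommon.induct with
  | case1 p x q y ih => simp only [wordCommon, overlap_comm (letterVec p _), ih, eq_comm (a := p)]
  | case2 y => rw [wordCommon_nil_right, wordCommon]
  | case3 p x => rw [wordCommon_nil_right, wordCommon]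

theorem wordCommon_self (x : List (RealLetter ι)) :
    wordCommon x x = wordLength x + wordLength x := by
  induction x with
  | nil => simp [wordCommon, wordLength]
  | cons p x ih =>
    ext j
    simp only [wordCommon, overlap_self, ↓reduceIte, ih, wordLength_cons, Pi.add_apply,
      Pi.abs_apply]
    ring

theorem wordCommon_le_left (x y : List (RealLetter ι)) :
    wordCommon x y ≤ wordLength x + wordLength x := by
  induction x, y using wordCommon.induct with
  | case1 p x q y ih =>
    intro j
    have := overlap_le_left (letterVec p j) (letterVec q j)
    have := ih j
    have := wordLength_nonneg x j
    simp only [wordCommon, wordLength_cons, Pi.add_apply, Pi.abs_apply, Pi.zero_apply] at *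
    split_ifs <;> linarith
  | case2 => simp [wordCommon, wordLength]
  | case3 p x => exact add_nonneg (wordLength_nonneg _) (wordLength_nonneg _)

theorem letterVec_overlap_ultra (p q r : RealLetter ι) :
    (∀ j, overlap (letterVec p j) (letterVec q j) ≤ overlap (letterVec p j) (letterVec r j)) ∨
      ∀ j, overlap (letterVec q j) (letterVec r j) ≤ overlap (letterVec p j) (letterVec r j) := by
  have disjoint : ∀ {s t : RealLetter ι}, s.1 ≠ t.1 → ∀ j,
      overlap (letterVec s j) (letterVec t j) = 0 := fun {s t} hst j ↦ by
    obtain hs | ht : j ≠ s.1 ∨ j ≠ t.1 := by grind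
    · rw [letterVec, Pi.single_eq_of_ne hs, overlap_zero_left]
    · rw [letterVec, letterVec, Pi.single_eq_of_ne ht, overlap_zero_right]
  by_cases hpq : p.1 = q.1
  · by_cases hqr : q.1 = r.1
    · refine (overlap_ultra p.2.toAdd q.2.toAdd r.2.toAdd).imp (fun h j ↦ ?_) fun h j ↦ ?_ <;>
      · simp only [letterVec, Pi.single_apply, hpq, hqr]
        split_ifs
        exacts [h, le_rfl]
    · exact .inr fun j ↦ (disjoint hqr j).trans_le (overlap_nonneg _ _)
  · exact .inl fun j ↦ (disjoint hpq j).trans_le (overlap_nonneg _ _)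

theorem wordCommon_ultra (x y z : List (RealLetter ι)) :
    wordCommon x y ≤ wordCommon x z ∨ wordCommon y z ≤ wordCommon x z := by
  induction x generalizing y z with
  | nil => exact .inl le_rfl
  | cons p x ih =>
    rcases y with _ | ⟨q, y⟩
    · exact .inl (wordCommon_nonneg _ _)
    rcases z with _ | ⟨r, z⟩
    · exact .inr le_rfl
    by_cases hpq : p = q
    · subst hpq
      by_cases hpr : p = r
      · subst hpr
        refine (ih y z).imp (fun h j ↦ ?_) fun h j ↦ ?_ <;>
          simpa only [wordCommon, ↓reduceIte, add_le_add_iff_left] using h j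
      · exact .inr fun j ↦ by simp only [wordCommon, hpr, ↓reduceIte, le_rfl]
    · by_cases hqr : q = r
      · subst hqr
        exact .inl fun j ↦ by simp only [wordCommon, hpq, ↓reduceIte, le_rfl]
      · have tail_nonneg (j : ι) : 0 ≤ if p = r then wordCommon x z j else 0 := by
          split_ifs
          exacts [wordCommon_nonneg x z j, le_rfl]
        refine (letterVec_overlap_ultra p q r).imp (fun h j ↦ ?_) fun h j ↦ ?_ <;>
          simpa only [wordCommon, hpq, hqr, ↓reduceIte, add_zero] using
            le_add_of_le_of_nonneg (h j) (tail_nonneg j)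

theorem wordDist_nil_left (x : List (RealLetter ι)) : wordDist [] x = wordLength x := by
  simp [wordDist, wordCommon, wordLength]

theorem wordDist_self (x : List (RealLetter ι)) : wordDist x x = 0 := by
  rw [wordDist, wordCommon_self, sub_self]

theorem wordDist_comm (x y : List (RealLetter ι)) : wordDist x y = wordDist y x := by
  rw [wordDist, wordDist, wordCommon_comm, add_comm (wordLength x)]

theorem wordDist_triangle (x y z : List (RealLetter ι)) :
    wordDist x z ≤ wordDist x y + wordDist y z := by
  intro j
  have hx := wordCommon_comm x y ▸ wordCommon_le_left y x j
  have hz := wordCommon_le_left y z j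
  have ultra := (wordCommon_ultra x y z).imp (· j) (· j)
  simp only [wordDist, Pi.add_apply, Pi.sub_apply] at *
  rcases ultra with h | h <;> linarith

theorem wordDist_append_left (l x y : List (RealLetter ι)) :
    wordDist (l ++ x) (l ++ y) = wordDist x y := by
  induction l with
  | nil => rfl
  | cons p l ih =>
    rw [← ih]
    ext j
    simp only [wordDist, List.cons_append, wordCommon, overlap_self, wordLength_cons, ↓reduceIte,
      Pi.add_apply, Pi.sub_apply, Pi.abs_apply]
    ring

theorem wordDist_singleton (p q : RealLetter ι) :
    wordDist [p] [q] = |letterVec p - letterVec q| := by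
  ext j
  simp [wordDist, wordLength, wordCommon, overlap]

theorem abs_wordSum_sub_le (x y : List (RealLetter ι)) :
    |wordSum x - wordSum y| ≤ wordDist x y := by
  induction x, y using wordCommon.induct with
  | case1 p x q y ih =>
    by_cases hpq : p = q
    · subst hpq
      rw [wordSum_cons, wordSum_cons, add_sub_add_left_eq_sub]
      exact ih.trans_eq (wordDist_append_left [p] x y).symm
    · have split : wordDist (p :: x) (q :: y) =
          |letterVec p - letterVec q| + (wordLength x + wordLength y) := by
        ext j
        simp only [wordDist, wordCommon, hpq, ↓reduceIte, overlap, wordLength_cons, Pi.add_apply,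
          Pi.sub_apply, Pi.abs_apply]
        ring
      rw [split, wordSum_cons, wordSum_cons, add_sub_add_comm]
      refine (abs_add_le _ _).trans (add_le_add_right ?_ _)
      rw [sub_eq_add_neg]
      refine (abs_add_le _ _).trans (add_le_add (abs_wordSum_le x) ?_)
      exact (abs_neg (wordSum y)).trans_le (abs_wordSum_le y)
  | case2 y =>
    rw [wordDist_nil_left]
    simpa [wordSum] using abs_wordSum_le y
  | case3 p x =>
    rw [wordDist_comm, wordDist_nil_left]
    simpa [wordSum] using abs_wordSum_le (p :: x)

end RealWords

section TreePseudometric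

/-- Twice the length of the common part of the geodesics from `o` to `s` and to `t`. -/
def commonPart {T V : Type*} [AddCommGroup V] (o : T) (d : T → T → V) (s t : T) : V :=
  d o s + d o t - d s t

/-- `d` is a `V`-valued pseudometric that is `0`-hyperbolic with respect to `o`, like the distances
between points of a tree with root `o`: `ultra` says that two geodesics from `o` that both follow a
third one follow each other. -/
structure IsTreePseudometric {T V : Type*} [AddCommGroup V] [PartialOrder V]
    (o : T) (d : T → T → V) : Prop where
  self : ∀ s, d s s = 0
  comm : ∀ s t, d s t = d t s
  triangle : ∀ s t u, d s u ≤ d s t + d t u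
  ultra : ∀ s t u, commonPart o d s t ≤ commonPart o d s u ∨ commonPart o d t u ≤ commonPart o d s u

theorem IsTreePseudometric.comap {S T V : Type*} [AddCommGroup V] [PartialOrder V] {o : T}
    {d : T → T → V} (hd : IsTreePseudometric o d) (f : S → T) {o' : S} (ho : f o' = o) :
    IsTreePseudometric o' fun s t ↦ d (f s) (f t) where
  self s := hd.self _
  comm s t := hd.comm _ _
  triangle s t u := hd.triangle _ _ _
  ultra s t u := by simpa only [commonPart, ho] using hd.ultra (f s) (f t) (f u)

end TreePseudometric

section TreeDist

open Monoid

variable {ι : Type*} [DecidableEq ι]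

/-- The reduced word of an element of the free product, read from right to left. -/
def revWord (x : RealProd ι) : List (RealLetter ι) := (CoprodI.Word.equiv x).toList.reverse

/-- The distance, generator by generator, of two elements of the free product of lines in the real
tree of reduced words. -/
def treeDist (x y : RealProd ι) : ι → ℝ := wordDist (revWord x) (revWord y)

theorem revWord_prod (w : CoprodI.Word fun _ : ι ↦ Multiplicative ℝ) :
    revWord w.prod = w.toList.reverse :=
  congrArg (fun v : CoprodI.Word _ ↦ v.toList.reverse) (CoprodI.Word.equiv.apply_symm_apply w)

theorem revWord_one : revWord (1 : RealProd ι) = [] := revWord_prod CoprodI.Word.empty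

theorem isTreePseudometric_wordDist :
    IsTreePseudometric [] (wordDist : List (RealLetter ι) → _ → _) where
  self := wordDist_self
  comm := wordDist_comm
  triangle := wordDist_triangle
  ultra x y z := by
    have (x y : List (RealLetter ι)) : commonPart [] wordDist x y = wordCommon x y := by
      rw [commonPart, wordDist_nil_left, wordDist_nil_left, wordDist, sub_sub_cancel]
    simpa only [this] using wordCommon_ultra x y z

theorem isTreePseudometric_treeDist :
    IsTreePseudometric 1 (treeDist : RealProd ι → RealProd ι → _) :=
  isTreePseudometric_wordDist.comap revWord revWord_one

theorem revWord_of_mul_prod {k : ι} {w : CoprodI.Word fun _ : ι ↦ Multiplicative ℝ}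
    (hw : w.fstIdx ≠ some k) (a : Multiplicative ℝ) :
    revWord (CoprodI.of (i := k) a * w.prod) =
      w.toList.reverse ++ if a = 1 then [] else [⟨k, a⟩] := by
  rw [← CoprodI.Word.prod_rcons (M := fun _ ↦ Multiplicative ℝ) ⟨a, w, hw⟩, revWord_prod,
    CoprodI.Word.rcons]
  split_ifs with h
  · rw [List.append_nil]
  · rw [CoprodI.Word.cons, List.reverse_cons]

theorem wordDist_power (k : ι) (a b : Multiplicative ℝ) :
    wordDist (if a = 1 then [] else [⟨k, a⟩]) (if b = 1 then [] else [⟨k, b⟩]) =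
      |Pi.single k (a.toAdd - b.toAdd)| := by
  have dist_nil (c : Multiplicative ℝ) :
      wordDist [] [⟨k, c⟩] = |Pi.single (M := fun _ ↦ ℝ) k c.toAdd| := by
    rw [wordDist_nil_left, wordLength_cons, wordLength, List.map_nil, List.sum_nil, add_zero,
      letterVec]
  split_ifs with ha hb hb
  · simp [ha, hb, wordDist_self]
  · simp [ha, dist_nil, Pi.single_neg]
  · simp [hb, wordDist_comm _ [], dist_nil]
  · rw [wordDist_singleton, letterVec, letterVec, Pi.single_sub]

theorem treeDist_of_mul (k : ι) (a b : Multiplicative ℝ) (x : RealProd ι) :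
    treeDist (CoprodI.of (i := k) a * x) (CoprodI.of (i := k) b * x) =
      |Pi.single k (a.toAdd - b.toAdd)| := by
  obtain ⟨v, rfl⟩ := CoprodI.Word.equiv.symm.surjective x
  obtain ⟨⟨c, w, hw⟩, rfl⟩ := (CoprodI.Word.equivPair k).symm.surjective v
  have split (d : Multiplicative ℝ) : CoprodI.of (i := k) d * CoprodI.Word.equiv.symm
      ((CoprodI.Word.equivPair k).symm ⟨c, w, hw⟩) = CoprodI.of (i := k) (d * c) * w.prod := by
    rw [map_mul, mul_assoc]
    exact congrArg _ (CoprodI.Word.prod_rcons (M := fun _ ↦ Multiplicative ℝ) ⟨c, w, hw⟩)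
  rw [split, split, treeDist, revWord_of_mul_prod hw, revWord_of_mul_prod hw,
    wordDist_append_left, wordDist_power, toAdd_mul, toAdd_mul, add_sub_add_right_eq_sub]

/-- The total exponent of each generator. -/
def exponentSum : RealProd ι →* Multiplicative (ι → ℝ) :=
  CoprodI.lift fun k ↦ (AddMonoidHom.single (fun _ : ι ↦ ℝ) k).toMultiplicative

theorem toAdd_exponentSum (x : RealProd ι) : (exponentSum x).toAdd = wordSum (revWord x) := by
  obtain ⟨w, rfl⟩ := CoprodI.Word.equiv.symm.surjective x
  rw [revWord, CoprodI.Word.equiv.apply_symm_apply, wordSum, List.map_reverse, List.sum_reverse]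
  change (exponentSum w.prod).toAdd = _
  rw [CoprodI.Word.prod, map_list_prod, toAdd_list_sum, List.map_map, List.map_map]
  congr 2

theorem abs_exponentSum_sub_le (x y : RealProd ι) :
    |(exponentSum x).toAdd - (exponentSum y).toAdd| ≤ treeDist x y := by
  simpa only [toAdd_exponentSum, treeDist] using abs_wordSum_sub_le (revWord x) (revWord y)

end TreeDist

namespace IsTreePseudometric

open Topology Filter Set

section Limits

variable {T V W : Type*} [AddCommGroup V] [PartialOrder V] [AddCommGroup W] [PartialOrder W]
  {o : T} {d : T → T → V}

theorem map (hd : IsTreePseudometric o d) (f : V →+ W) (hf : Monotone f) :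
    IsTreePseudometric o fun s t ↦ f (d s t) where
  self s := by rw [hd.self, map_zero]
  comm s t := by rw [hd.comm]
  triangle s t u := (hf (hd.triangle s t u)).trans_eq (map_add f _ _)
  ultra s t u := by
    have (s t : T) : commonPart o (fun s t ↦ f (d s t)) s t = f (commonPart o d s t) := by
      simp only [commonPart, map_add, map_sub]
    simpa only [this] using (hd.ultra s t u).imp (fun h ↦ hf h) fun h ↦ hf h

theorem of_tendsto [TopologicalSpace V] [IsTopologicalAddGroup V] [OrderClosedTopology V]
    {N : Type*} {l : Ultrafilter N} {dn : N → T → T → V} (hdn : ∀ n, IsTreePseudometric o (dn n))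
    (lim : ∀ s t, Tendsto (dn · s t) l (𝓝 (d s t))) : IsTreePseudometric o d where
  self s := tendsto_nhds_unique (lim s s) (by simpa only [(hdn _).self] using tendsto_const_nhds)
  comm s t := tendsto_nhds_unique (lim s t) (by simpa only [(hdn _).comm s t] using lim t s)
  triangle s t u :=
    le_of_tendsto_of_tendsto' (lim s u) ((lim s t).add (lim t u)) fun n ↦ (hdn n).triangle s t u
  ultra s t u := by
    have lim_commonPart (s t : T) :
        Tendsto (fun n ↦ commonPart o (dn n) s t) l (𝓝 (commonPart o d s t)) :=
      ((lim o s).add (lim o t)).sub (lim s t)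
    exact (Ultrafilter.eventually_or.1 (.of_forall fun n ↦ (hdn n).ultra s t u)).imp
      (le_of_tendsto_of_tendsto (lim_commonPart s t) (lim_commonPart s u))
      (le_of_tendsto_of_tendsto (lim_commonPart t u) (lim_commonPart s u))

theorem tsum {κ : Type*} {d : T → T → κ → ℝ} (hd : IsTreePseudometric o d)
    (summable : ∀ s t, Summable (d s t)) : IsTreePseudometric o fun s t ↦ ∑' k, d s t k where
  self s := by simp only [hd.self, Pi.zero_apply, tsum_zero]
  comm s t := by rw [hd.comm]
  triangle s t u := hasSum_le (hd.triangle s t u) (summable s u).hasSum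
    ((summable s t).hasSum.add (summable t u).hasSum)
  ultra s t u := by
    have hasSum_commonPart (s t : T) : HasSum (commonPart o d s t)
        (commonPart o (fun s t ↦ ∑' k, d s t k) s t) :=
      ((summable o s).hasSum.add (summable o t).hasSum).sub (summable s t).hasSum
    exact (hd.ultra s t u).imp (fun h ↦ hasSum_le h (hasSum_commonPart s t) (hasSum_commonPart s u))
      fun h ↦ hasSum_le h (hasSum_commonPart t u) (hasSum_commonPart s u)

end Limits

section Coordinates

variable {T κ : Type*} {o : T} {d : T → T → κ → ℝ}

theorem coordinate (hd : IsTreePseudometric o d) (k : κ) : IsTreePseudometric o (d · · k) :=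
  hd.map (Pi.evalAddMonoidHom _ k) (Function.monotone_eval k)

end Coordinates

section Real

variable {T : Type*} {o : T} {d : T → T → ℝ}

theorem nonneg (hd : IsTreePseudometric o d) (s t : T) : 0 ≤ d s t := by
  linarith [hd.triangle s t s, hd.self s, hd.comm s t]

theorem abs_sub_le (hd : IsTreePseudometric o d) (u s t : T) : |d u s - d u t| ≤ d s t :=
  abs_sub_le_iff.2 ⟨by linarith [hd.triangle u t s, hd.comm s t], by linarith [hd.triangle u s t]⟩

theorem continuous_of_eventually_le [TopologicalSpace T] (hd : IsTreePseudometric o d)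
    (small : ∀ s, ∀ ε > 0, ∀ᶠ t in 𝓝 s, d s t ≤ ε) (u : T) : Continuous (d u) := by
  refine continuous_iff_continuousAt.2 fun s ↦ Metric.tendsto_nhds.2 fun ε hε ↦ ?_
  filter_upwards [small s (ε / 2) (half_pos hε)] with t ht
  rw [dist_comm, Real.dist_eq]
  exact ((hd.abs_sub_le u s t).trans ht).trans_lt (half_lt_self hε)

end Real

theorem exists_limit {N T κ : Type*} {o : T} {d : N → T → T → κ → ℝ}
    (hd : ∀ n, IsTreePseudometric o (d n)) (l : Ultrafilter N)
    (bounded : ∀ k s t, ∃ B, ∀ᶠ n in l, d n s t k ≤ B) :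
    ∃ D : T → T → κ → ℝ, IsTreePseudometric o D ∧ ∀ s t, Tendsto (d · s t) l (𝓝 (D s t)) := by
  have converges (s t : T) (k : κ) : ∃ r, Tendsto (d · s t k) l (𝓝 r) := by
    obtain ⟨B, hB⟩ := bounded k s t
    obtain ⟨r, -, hr⟩ := (isCompact_Icc (a := 0) (b := B)).ultrafilter_le_nhds
      (l.map (d · s t k)) <| le_principal_iff.2 <| mem_map.2 <|
        hB.mono fun n hn ↦ ⟨((hd n).coordinate k).nonneg s t, hn⟩
    exact ⟨r, hr⟩
  choose D hD using converges
  have lim (s t : T) : Tendsto (d · s t) l (𝓝 (D s t)) := tendsto_pi_nhds.2 (hD s t)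
  exact ⟨D, of_tendsto hd lim, lim⟩

theorem exists_bound {T : Type*} [TopologicalSpace T] [CompactSpace T] {o : T} {d : T → T → ℝ}
    (hd : IsTreePseudometric o d) (hc : Continuous (d o)) : ∃ B, ∀ s t, d s t ≤ B := by
  obtain ⟨B, hB⟩ := (isCompact_range hc).bddAbove
  refine ⟨B + B, fun s t ↦ (hd.triangle s o t).trans ?_⟩
  rw [hd.comm s o]
  exact add_le_add (hB ⟨s, rfl⟩) (hB ⟨t, rfl⟩)

/-- Sum the coordinates with weights that decrease fast enough. -/
theorem exists_real {T : Type*} [TopologicalSpace T] [CompactSpace T] {o : T} {d : T → T → ℕ → ℝ}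
    (hd : IsTreePseudometric o d) (hc : ∀ s, Continuous (d s)) :
    ∃ D : T → T → ℝ, IsTreePseudometric o D ∧ (∀ s, Continuous (D s)) ∧
      ∀ s t, D s t = 0 ↔ d s t = 0 := by
  have hc' (s : T) (k : ℕ) : Continuous (d s · k) := (continuous_apply k).comp (hc s)
  choose B hB using fun k ↦ (hd.coordinate k).exists_bound (hc' o k)
  have hB₀ (k : ℕ) : 0 ≤ B k := ((hd.coordinate k).nonneg o o).trans (hB k o o)
  let w (k : ℕ) : ℝ := (1 / 2) ^ k / (B k + 1)
  have hw (k : ℕ) : 0 < w k := by have := hB₀ k; positivity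
  have wd_nonneg (s t : T) (k : ℕ) : 0 ≤ w k * d s t k :=
    mul_nonneg (hw k).le ((hd.coordinate k).nonneg s t)
  have wd_le (s t : T) (k : ℕ) : w k * d s t k ≤ (1 / 2) ^ k := by
    have := hB₀ k
    rw [div_mul_eq_mul_div, div_le_iff₀ (by positivity)]
    gcongr
    exact (hB k s t).trans (le_add_of_nonneg_right zero_le_one)
  have summable (s t : T) : Summable fun k ↦ w k * d s t k :=
    .of_nonneg_of_le (wd_nonneg s t) (wd_le s t) summable_geometric_two
  refine ⟨fun s t ↦ ∑' k, w k * d s t k, ?_, fun s ↦ ?_, fun s t ↦ ?_⟩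
  · exact (hd.map (AddMonoidHom.mulLeft w)
      (monotone_mul_left_of_nonneg fun k ↦ (hw k).le)).tsum summable
  · refine continuous_tsum (fun k ↦ (hc' s k).const_mul (w k)) summable_geometric_two fun k t ↦ ?_
    exact (abs_of_nonneg (wd_nonneg s t k)).trans_le (wd_le s t k)
  · rw [← (summable s t).hasSum_iff, hasSum_zero_iff_of_nonneg (wd_nonneg s t), funext_iff,
      funext_iff]
    simp [(hw _).ne']

section Geodesics

variable {T : Type*} {o : T} {d : T → T → ℝ}

/-- `y` represents the point at height `ρ` of the geodesic from the root to `s`. -/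
def IsPointAt (o : T) (d : T → T → ℝ) (s : T) (ρ : ℝ) (y : T) : Prop :=
  d o y = ρ ∧ d y s = d o s - ρ

/-- The points whose geodesic from the root agrees with that of `s` up to height `ρ` form a clopen
set; if height `ρ` were missed, this set would contain `s` but not the root. -/
theorem exists_isPointAt [TopologicalSpace T] [PreconnectedSpace T] (hd : IsTreePseudometric o d)
    (hc : ∀ s, Continuous (d s)) {s : T} {ρ : ℝ} (hρ₀ : 0 ≤ ρ) (hρ : ρ ≤ d o s) :
    ∃ y, IsPointAt o d s ρ y := by
  by_contra! missed
  let S : Set T := {y | 2 * ρ ≤ commonPart o d y s}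
  have height_gt : ∀ y ∈ S, ρ < d o y := fun y (hy : 2 * ρ ≤ d o y + d o s - d y s) ↦ by
    by_contra! hle
    have := hd.triangle o y s
    exact missed y ⟨by linarith, by linarith⟩
  have isClosed : IsClosed S := by
    simp only [S, commonPart, hd.comm _ s]
    exact isClosed_le continuous_const (((hc o).add continuous_const).sub (hc s))
  have isOpen : IsOpen S := isOpen_iff_mem_nhds.2 fun y hy ↦ by
    have near : ∀ᶠ t in 𝓝 y, d y t < d o y - ρ :=
      (hc y).continuousAt.eventually_lt_const (by rw [hd.self]; exact sub_pos.2 (height_gt y hy))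
    filter_upwards [near] with t ht
    have ht_common : 2 * ρ ≤ commonPart o d t y := by
      have := hd.triangle o t y
      rw [hd.comm t y] at this
      rw [commonPart, hd.comm t y]
      linarith
    exact (hd.ultra t y s).elim ht_common.trans (le_trans hy)
  have s_mem : s ∈ S := show _ ≤ d o s + d o s - d s s by rw [hd.self]; linarith
  have o_mem : o ∈ S := (IsClopen.eq_univ ⟨isClosed, isOpen⟩ ⟨s, s_mem⟩) ▸ mem_univ o
  exact hρ₀.not_gt ((height_gt o o_mem).trans_eq (hd.self o))

theorem dist_point_le (hd : IsTreePseudometric o d) {s s' y y' : T} {ρ ρ' : ℝ}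
    (hρ : ρ ≤ d o s) (hρ' : ρ' ≤ d o s') (hy : IsPointAt o d s ρ y) (hy' : IsPointAt o d s' ρ' y') :
    d y y' ≤ |ρ - ρ'| + d s s' := by
  have near_s := hd.ultra y s s'
  have near_y' := hd.ultra y s' y'
  have heights := abs_sub_le_iff.1 (hd.abs_sub_le o s s')
  have := neg_abs_le (ρ - ρ')
  have := le_abs_self (ρ - ρ')
  have := hd.nonneg s s'
  obtain ⟨hy, hys⟩ := hy
  obtain ⟨hy', hys'⟩ := hy'
  simp only [commonPart, hd.comm s' y'] at near_s near_y'
  rcases near_s with h | h <;> rcases near_y' with h' | h' <;> linarith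

theorem exists_ball_mapsTo [TopologicalSpace T] [CompactSpace T] {X : Type*} [TopologicalSpace X]
    (hd : IsTreePseudometric o d) (hc : ∀ s, Continuous (d s)) {f : T → X} (hf : Continuous f)
    (sep : ∀ s t, d s t = 0 → f s = f t) {y : T} {O : Set X} (hO : IsOpen O) (hy : f y ∈ O) :
    ∃ ε > 0, ∀ t, d y t < ε → f t ∈ O := by
  have isCompact : IsCompact (f ⁻¹' Oᶜ) := (hO.isClosed_compl.preimage hf).isCompact
  rcases (f ⁻¹' Oᶜ).eq_empty_or_nonempty with empty | nonempty
  · exact ⟨1, one_pos, fun t _ ↦ of_not_not fun ht ↦ (empty.subset ht :)⟩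
  · obtain ⟨t₀, ht₀, hmin⟩ := isCompact.exists_isMinOn nonempty (hc y).continuousOn
    refine ⟨d y t₀, (hd.nonneg y t₀).lt_of_ne fun h ↦ ht₀ ?_, fun t ht ↦ ?_⟩
    · rwa [← sep y t₀ h.symm]
    · exact of_not_not fun h ↦ ht.not_ge (hmin h)

/-- Points of nearby heights on nearby geodesics are close, so sliding along geodesics is
continuous after applying `f`. -/
theorem continuous_comp_point [TopologicalSpace T] [CompactSpace T] {X P : Type*}
    [TopologicalSpace X] [TopologicalSpace P] (hd : IsTreePseudometric o d)
    (hc : ∀ s, Continuous (d s)) {f : T → X} (hf : Continuous f)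
    (sep : ∀ s t, d s t = 0 → f s = f t) {ρ : P → ℝ} (hρ : Continuous ρ) {e : P → T}
    (he : Continuous e) (hρe : ∀ p, ρ p ≤ d o (e p)) {y : P → T}
    (hy : ∀ p, IsPointAt o d (e p) (ρ p) (y p)) : Continuous (f ∘ y) := by
  refine continuous_iff_continuousAt.2 fun p ↦ tendsto_nhds.2 fun O hO hpO ↦ ?_
  obtain ⟨ε, hε, ball⟩ := hd.exists_ball_mapsTo hc hf sep hO hpO
  have bound_continuous : Continuous fun q ↦ |ρ p - ρ q| + d (e p) (e q) :=
    (continuous_const.sub hρ).abs.add ((hc (e p)).comp he)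
  have near : ∀ᶠ q in 𝓝 p, |ρ p - ρ q| + d (e p) (e q) < ε :=
    bound_continuous.continuousAt.eventually_lt_const (by simpa [hd.self] using hε)
  filter_upwards [near] with q hq
  exact ball _ ((hd.dist_point_le (hρe p) (hρe q) (hy p) (hy q)).trans_lt hq)

end Geodesics

open unitInterval

/-- Contract the tree by lowering every point to height at most `(1 - τ) * M` at time `τ`. -/
theorem homotopic_refl {X : Type*} [TopologicalSpace X] {x : X} {d : I → I → ℝ}
    (hd : IsTreePseudometric 0 d) (hc : ∀ s, Continuous (d s)) (γ : Path x x) (closed : d 0 1 = 0)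
    (sep : ∀ s t, d s t = 0 → γ s = γ t) : γ.Homotopic (Path.refl x) := by
  obtain ⟨M, hM⟩ := hd.exists_bound (hc 0)
  have hM₀ : 0 ≤ M := (hd.nonneg 0 0).trans (hM 0 0)
  let ρ (p : I × I) : ℝ := min ((1 - p.1) * M) (d 0 p.2)
  have ρ_nonneg (p : I × I) : 0 ≤ ρ p :=
    le_min (mul_nonneg (sub_nonneg.2 p.1.2.2) hM₀) (hd.nonneg _ _)
  have ρ_le (p : I × I) : ρ p ≤ d 0 p.2 := min_le_right _ _
  have ρ_continuous : Continuous ρ := by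
    have := hc 0
    fun_prop
  choose y hy using fun p : I × I ↦ hd.exists_isPointAt hc (ρ_nonneg p) (ρ_le p)
  have at_root {p : I × I} (h : ρ p = 0) : γ (y p) = x := by
    rw [← sep 0 (y p) ((hy p).1.trans h), γ.source]
  have at_ends (τ : I) {s : I} (hs : d 0 s = 0) : γ (y (τ, s)) = x :=
    at_root (le_antisymm ((ρ_le _).trans_eq hs) (ρ_nonneg _))
  have at_start (s : I) : γ (y (0, s)) = γ s := by
    have : ρ (0, s) = d 0 s := min_eq_right (by simpa using hM 0 s)
    exact sep _ _ (by rw [(hy (0, s)).2, this, sub_self])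
  have at_end (s : I) : γ (y (1, s)) = x :=
    at_root (le_antisymm ((min_le_left _ _).trans_eq (by simp)) (ρ_nonneg _))
  have slide_continuous : Continuous (γ ∘ y) :=
    hd.continuous_comp_point hc γ.continuous sep ρ_continuous continuous_snd ρ_le hy
  refine ⟨⟨⟨⟨γ ∘ y, slide_continuous⟩, at_start, at_end⟩, fun τ s hs ↦ ?_⟩⟩
  rcases hs with rfl | rfl
  · exact (at_ends τ (hd.self 0)).trans γ.source.symm
  · exact (at_ends τ closed).trans γ.target.symm

end IsTreePseudometric

section Angle

open Topology

variable {X : Type*} [TopologicalSpace X] {f : C(X, Circle)} {p q : X}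

/-- The angle in `(-π, π]` from `f p` to `f q`. -/
def angle (f : C(X, Circle)) (p q : X) : Multiplicative ℝ :=
  .ofAdd (Complex.arg ↑(f q / f p))

/-- The points that are less than half a turn away from `p`, as seen by `f`. -/
def nearSide (f : C(X, Circle)) (p : X) : Set X :=
  {q | ((f q / f p : Circle) : ℂ) ∈ Complex.slitPlane}

theorem continuous_coe_div : Continuous fun q ↦ ((f q / f p : Circle) : ℂ) :=
  continuous_subtype_val.comp (f.continuous.div_const (f p))

theorem isOpen_nearSide : IsOpen (nearSide f p) :=
  Complex.isOpen_slitPlane.preimage continuous_coe_div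

theorem mem_nearSide_self : p ∈ nearSide f p := by
  rw [nearSide, Set.mem_ofPred_eq, div_self', Circle.coe_one]
  exact Complex.one_mem_slitPlane

theorem angle_eq_one (h : f p = f q) : angle f p q = 1 := by
  rw [angle, h, div_self', Circle.coe_one, Complex.arg_one, ofAdd_zero]

theorem exp_angle (f : C(X, Circle)) (p q : X) : Circle.exp (angle f p q).toAdd = f q / f p :=
  Circle.exp_arg _

theorem continuousAt_angle (hq : q ∈ nearSide f p) :
    ContinuousAt (fun q ↦ (angle f p q).toAdd) q :=
  ContinuousAt.comp (g := Complex.arg) (Complex.continuousAt_arg hq)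
    continuous_coe_div.continuousAt

theorem eventually_angle_mul (hq : q ∈ nearSide f p) :
    ∀ᶠ q' in 𝓝 q, angle f p q' = angle f q q' * angle f p q := by
  have sum_continuous : ContinuousAt (fun q' ↦ (angle f q q').toAdd + (angle f p q).toAdd) q :=
    (continuousAt_angle mem_nearSide_self).add continuousAt_const
  have sum_mem : (angle f q q).toAdd + (angle f p q).toAdd ∈ Set.Ioo (-Real.pi) Real.pi := by
    rw [angle_eq_one rfl, toAdd_one, zero_add]
    exact ⟨Complex.neg_pi_lt_arg _,
      (Complex.arg_le_pi _).lt_of_ne (Complex.mem_slitPlane_iff_arg.1 hq).1⟩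
  filter_upwards [sum_continuous.eventually_mem (Ioo_mem_nhds sum_mem.1 sum_mem.2)] with q' hq'
  refine congrArg Multiplicative.ofAdd ?_
  have := Complex.arg_mul (Circle.coe_ne_zero (f q' / f q)) (Circle.coe_ne_zero (f q / f p))
    ⟨hq'.1, hq'.2.le⟩
  rwa [← Circle.coe_mul, div_mul_div_cancel] at this

end Angle

section Bouquet

open Topology Monoid

variable {X : Type*} [TopologicalSpace X] {z : ℕ → C(X, Circle)} {x₀ p q : X} {j k n m : ℕ}

/-- All coordinates of `p` but the `j`-th one are trivial. -/
def IsOnCircle (z : ℕ → C(X, Circle)) (j : ℕ) (p : X) : Prop := ∀ l, l ≠ j → z l p = 1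

/-- The maps `z k` are coordinates on a bouquet of circles with base point `x₀`: they embed the
space continuously into the wedge of circles inside the product `Circle ^ ℕ`. -/
structure IsBouquet (z : ℕ → C(X, Circle)) (x₀ : X) : Prop where
  base : ∀ k, z k x₀ = 1
  exists_isOnCircle : ∀ p, ∃ j, IsOnCircle z j p
  injective : Function.Injective fun p k ↦ z k p

/-- The local cocycle recording the angles of the first `n` coordinates. -/
def angleCocycle (z : ℕ → C(X, Circle)) (n : ℕ) (p q : X) : RealProd ℕ :=
  ((List.range n).map fun l ↦ (CoprodI.of (i := l) (angle (z l) p q) : RealProd ℕ)).prod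

/-- The domain on which `angleCocycle z n p` serves as a chart. -/
def angleDomain (z : ℕ → C(X, Circle)) (n : ℕ) (p : X) : Set X :=
  {q | (∀ l < n, q ∈ nearSide (z l) p) ∧ ∀ l, z l p ≠ 1 → z l q ≠ 1}

theorem prod_map_range_eq {M : Type*} [Monoid M] (f : ℕ → M) (h : ∀ l, l ≠ j → f l = 1) :
    ((List.range n).map f).prod = if j < n then f j else 1 := by
  rw [List.prod_map_eq_pow_single j f fun l hl _ ↦ h l hl, List.count_range]
  split_ifs <;> simp

theorem angleCocycle_eq (hp : IsOnCircle z j p) (hq : IsOnCircle z j q) :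
    angleCocycle z n p q = if j < n then CoprodI.of (i := j) (angle (z j) p q) else 1 :=
  prod_map_range_eq _ fun l hl ↦ by rw [angle_eq_one ((hp l hl).trans (hq l hl).symm), map_one]

/-- The homomorphism that kills the letters `≥ n`. -/
def truncation (n : ℕ) : RealProd ℕ →* RealProd ℕ :=
  CoprodI.lift fun k ↦ if k < n then CoprodI.of (M := fun _ : ℕ ↦ Multiplicative ℝ) (i := k) else 1

theorem truncation_angleCocycle (hnm : n ≤ m) (p q : X) :
    truncation n (angleCocycle z m p q) = angleCocycle z n p q := by
  induction m, hnm using Nat.le_induction with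
  | base =>
    rw [angleCocycle, map_list_prod, List.map_map]
    refine congrArg List.prod (List.map_congr_left fun l hl ↦ ?_)
    rw [Function.comp_apply, truncation, CoprodI.lift_of, if_pos (List.mem_range.1 hl)]
  | succ m hm ih =>
    rw [← ih, angleCocycle, List.range_succ, List.map_append, List.prod_append, map_mul]
    simp [angleCocycle, truncation, hm.not_gt]

theorem exponentSum_angleCocycle (hk : k < n) (p q : X) :
    (exponentSum (angleCocycle z n p q)).toAdd k = (angle (z k) p q).toAdd := by
  let φ : RealProd ℕ →* Multiplicative ℝ :=
    (AddMonoidHom.toMultiplicative (Pi.evalAddMonoidHom (fun _ : ℕ ↦ ℝ) k)).comp exponentSum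
  have φ_of (l : ℕ) (a : Multiplicative ℝ) :
      φ (CoprodI.of (i := l) a) = .ofAdd (Pi.single (M := fun _ ↦ ℝ) l a.toAdd k) := by
    rw [MonoidHom.comp_apply, exponentSum, CoprodI.lift_of]
    rfl
  change (φ _).toAdd = _
  rw [angleCocycle, map_list_prod, List.map_map, prod_map_range_eq (j := k), if_pos hk]
  · simp [φ_of]
  · intro l hl
    simp [φ_of, hl.symm]

namespace IsBouquet

theorem isOnCircle_of_ne (h : IsBouquet z x₀) (hp : z j p ≠ 1) : IsOnCircle z j p := by
  obtain ⟨i, hi⟩ := h.exists_isOnCircle p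
  obtain rfl : j = i := of_not_not fun hji ↦ hp (hi j hji)
  exact hi

theorem isOnCircle_base (h : IsBouquet z x₀) (j : ℕ) : IsOnCircle z j x₀ := fun l _ ↦ h.base l

theorem eventually_isOnCircle (h : IsBouquet z x₀) (p : X) :
    ∀ᶠ q in 𝓝 p, ∃ j, IsOnCircle z j p ∧ IsOnCircle z j q := by
  by_cases hp : ∃ j, z j p ≠ 1
  · obtain ⟨j, hj⟩ := hp
    filter_upwards [(z j).continuous.continuousAt.eventually_ne hj] with q hq
    exact ⟨j, h.isOnCircle_of_ne hj, h.isOnCircle_of_ne hq⟩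
  · push Not at hp
    filter_upwards with q
    exact (h.exists_isOnCircle q).imp fun j hj ↦ ⟨fun l _ ↦ hp l, hj⟩

theorem isOpen_angleDomain (h : IsBouquet z x₀) (n : ℕ) (p : X) : IsOpen (angleDomain z n p) := by
  have isOpen_near : IsOpen {q | ∀ l < n, q ∈ nearSide (z l) p} := by
    simpa only [Set.ofPred_forall, Set.mem_Iio, Set.ofPred_mem_eq] using
      (Set.finite_Iio n).isOpen_biInter fun l _ ↦ isOpen_nearSide (f := z l) (p := p)
  suffices IsOpen {q | ∀ l, z l p ≠ 1 → z l q ≠ 1} from isOpen_near.inter this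
  by_cases hp : ∃ j, z j p ≠ 1
  · obtain ⟨j, hj⟩ := hp
    have : {q | ∀ l, z l p ≠ 1 → z l q ≠ 1} = {q | z j q ≠ 1} := by
      ext q
      refine ⟨fun hq ↦ hq j hj, fun hq l hl ↦ ?_⟩
      obtain rfl : l = j := of_not_not fun hlj ↦ hl (h.isOnCircle_of_ne hj l hlj)
      exact hq
    rw [this]
    exact isOpen_ne_fun (z j).continuous continuous_const
  · push Not at hp
    simp [hp]

theorem isLocalCocycle (h : IsBouquet z x₀) (n : ℕ) :
    IsLocalCocycle (angleCocycle z n) (angleDomain z n) where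
  isOpen := h.isOpen_angleDomain n
  mem p := ⟨fun l _ ↦ mem_nearSide_self, fun l ↦ id⟩
  self p := by
    obtain ⟨j, hj⟩ := h.exists_isOnCircle p
    rw [angleCocycle_eq hj hj, angle_eq_one rfl, map_one, ite_self]
  mul p q hq := by
    have angles : ∀ᶠ q' in 𝓝 q, ∀ l < n,
        angle (z l) p q' = angle (z l) q q' * angle (z l) p q :=
      (Set.finite_Iio n).eventually_all.2 fun l hl ↦ eventually_angle_mul (hq.1 l hl)
    have same_circle : ∀ᶠ q' in 𝓝 q,
        ∃ j, IsOnCircle z j p ∧ IsOnCircle z j q ∧ IsOnCircle z j q' := by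
      by_cases hp : ∃ j, z j p ≠ 1
      · obtain ⟨j, hj⟩ := hp
        filter_upwards [(z j).continuous.continuousAt.eventually_ne (hq.2 j hj)] with q' hq'
        exact ⟨j, h.isOnCircle_of_ne hj, h.isOnCircle_of_ne (hq.2 j hj), h.isOnCircle_of_ne hq'⟩
      · push Not at hp
        exact (h.eventually_isOnCircle q).mono fun q' ↦ .imp fun j hj ↦ ⟨fun l _ ↦ hp l, hj⟩
    filter_upwards [angles, same_circle] with q' hq' ⟨j, hjp, hjq, hjq'⟩
    rw [angleCocycle_eq hjp hjq', angleCocycle_eq hjq hjq', angleCocycle_eq hjp hjq]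
    split_ifs with hjn
    · rw [hq' j hjn, map_mul]
    · rw [one_mul]

end IsBouquet

end Bouquet

section Turns

open Monoid

/-- The multiples of `2π`. -/
def turns : Multiplicative ℤ →* Multiplicative ℝ :=
  AddMonoidHom.toMultiplicative (zmultiplesHom ℝ (2 * Real.pi))

/-- The words all of whose exponents are multiples of `2π`. -/
def turnWords : CoprodI (fun _ : ℕ ↦ Multiplicative ℤ) →* RealProd ℕ :=
  CoprodI.lift fun k ↦ (CoprodI.of (M := fun _ : ℕ ↦ Multiplicative ℝ) (i := k)).comp turns

theorem mem_range_turns {t : Multiplicative ℝ} : t ∈ turns.range ↔ Circle.exp t.toAdd = 1 := by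
  simp only [Circle.exp_eq_one, MonoidHom.mem_range, ← zsmul_eq_mul]
  exact ⟨fun ⟨m, hm⟩ ↦ ⟨m.toAdd, hm.symm⟩, fun ⟨m, hm⟩ ↦ ⟨.ofAdd m, hm.symm⟩⟩

theorem of_mem_range_turnWords {t : Multiplicative ℝ} (ht : Circle.exp t.toAdd = 1) (j : ℕ) :
    (CoprodI.of (i := j) t : RealProd ℕ) ∈ turnWords.range := by
  obtain ⟨m, rfl⟩ := mem_range_turns.2 ht
  exact ⟨CoprodI.of (i := j) m, by rw [turnWords, CoprodI.lift_of]; rfl⟩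

theorem turns_injective : Function.Injective turns := fun a b hab ↦ by
  simpa [turns, Real.pi_ne_zero] using congrArg Multiplicative.toAdd hab

instance : IsFreeGroup turnWords.range :=
  .ofMulEquiv (MonoidHom.ofInjective (lift_of_comp_injective fun _ ↦ turns_injective))

end Turns

section BouquetDevelopment

open Topology Monoid

variable {X Z : Type*} [TopologicalSpace X] [TopologicalSpace Z] {z : ℕ → C(X, Circle)} {x₀ : X}
  {k n : ℕ} {γ : Z → X} {δ : Z → RealProd ℕ}

theorem exp_exponentSum_sub [PreconnectedSpace Z] (hk : k < n)
    (hδ : IsDevelopment (angleCocycle z n) γ δ) (s t : Z) :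
    Circle.exp ((exponentSum (δ s)).toAdd k - (exponentSum (δ t)).toAdd k) =
      z k (γ s) / z k (γ t) := by
  have const := eq_of_eventually_eq
    (f := fun s ↦ Circle.exp ((exponentSum (δ s)).toAdd k) / z k (γ s)) (fun s₀ ↦ ?_) s t
  · rwa [Circle.exp_sub, div_eq_div_iff_div_eq_div]
  · filter_upwards [hδ s₀] with s hs
    rw [hs, map_mul, toAdd_mul, Pi.add_apply, exponentSum_angleCocycle hk, Circle.exp_add,
      exp_angle, div_eq_div_iff_div_eq_div, mul_div_cancel_right]

theorem IsBouquet.mem_range_turnWords [PreconnectedSpace Z] (h : IsBouquet z x₀)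
    (hγ : Continuous γ) (hδ : IsDevelopment (angleCocycle z n) γ δ) {s t : Z} (hs : γ s = x₀)
    (ht : γ t = x₀) (h₁ : δ s = 1) : δ t ∈ turnWords.range := by
  have const := eq_of_eventually_eq
    (f := fun s ↦ (angleCocycle z n x₀ (γ s))⁻¹ * δ s ∈ turnWords.range) (fun s₀ ↦ ?_) s t
  · simpa [hs, ht, h₁, (h.isLocalCocycle n).self] using const
  filter_upwards [hδ s₀, hγ.continuousAt.eventually (h.eventually_isOnCircle (γ s₀))]
    with s hs ⟨j, hj₀, hj⟩
  have factor : (angleCocycle z n x₀ (γ s))⁻¹ * δ s =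
      (angleCocycle z n x₀ (γ s))⁻¹ * angleCocycle z n (γ s₀) (γ s) * angleCocycle z n x₀ (γ s₀) *
        ((angleCocycle z n x₀ (γ s₀))⁻¹ * δ s₀) := by
    rw [hs]
    group
  rw [factor, eq_iff_iff]
  refine Subgroup.mul_mem_cancel_left _ ?_
  have hx₀ := h.isOnCircle_base j
  rw [angleCocycle_eq hx₀ hj, angleCocycle_eq hj₀ hj, angleCocycle_eq hx₀ hj₀]
  split_ifs
  · rw [← map_inv, ← map_mul, ← map_mul]
    refine of_mem_range_turnWords ?_ j
    simp only [toAdd_mul, toAdd_inv, Circle.exp_add, Circle.exp_neg, exp_angle]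
    rw [mul_assoc, div_mul_div_cancel, inv_mul_cancel]
  · simp only [inv_one, mul_one, one_mem]

/-- Undo the angle of the `k`-th coordinate along a short path: what remains moves only in the
directions of the other letters. -/
theorem IsBouquet.eventually_treeDist_of_angle_inv_mul (h : IsBouquet z x₀) {p q₀ : X} (k : ℕ)
    (near : q₀ ∈ nearSide (z k) p) (ne_one : z k p ≠ 1 → z k q₀ ≠ 1) :
    ∀ᶠ q in 𝓝 q₀, ∀ n > k, ∀ x : RealProd ℕ,
      treeDist (CoprodI.of (i := k) (angle (z k) p q₀)⁻¹ * x)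
        (CoprodI.of (i := k) (angle (z k) p q)⁻¹ * (angleCocycle z n q₀ q * x)) k = 0 := by
  filter_upwards [h.eventually_isOnCircle q₀, eventually_angle_mul near]
    with q ⟨j, hj₀, hj⟩ hq n hn x
  rw [angleCocycle_eq hj₀ hj]
  obtain rfl | hjk := eq_or_ne k j
  · rw [if_pos hn, ← mul_assoc, ← map_mul, hq, mul_inv, inv_mul_cancel_comm,
      isTreePseudometric_treeDist.self, Pi.zero_apply]
  · have hp : z k p = 1 := of_not_not fun hp ↦ ne_one hp (hj₀ k hjk)
    rw [angle_eq_one (hp.trans (hj₀ k hjk).symm), angle_eq_one (hp.trans (hj k hjk).symm), inv_one,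
      map_one, one_mul, one_mul]
    split_ifs
    · simpa [Pi.single_apply, hjk] using congrFun (treeDist_of_mul j 1 (angle (z j) q₀ q) x) k
    · rw [one_mul, isTreePseudometric_treeDist.self, Pi.zero_apply]

end BouquetDevelopment

namespace IsBouquet

open Topology Monoid Filter

variable {X Z : Type*} [TopologicalSpace X] [TopologicalSpace Z] {z : ℕ → C(X, Circle)} {x₀ p : X}
  {k n : ℕ} {γ : Z → X}

theorem treeDist_of_angle_inv_mul [PreconnectedSpace Z] (h : IsBouquet z x₀) (hγ : Continuous γ)
    (near : ∀ s, γ s ∈ nearSide (z k) p) (ne_one : z k p ≠ 1 → ∀ s, z k (γ s) ≠ 1) (hk : k < n)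
    {δ : Z → RealProd ℕ} (hδ : IsDevelopment (angleCocycle z n) γ δ) (s t : Z) :
    treeDist (CoprodI.of (i := k) (angle (z k) p (γ s))⁻¹ * δ s)
      (CoprodI.of (i := k) (angle (z k) p (γ t))⁻¹ * δ t) k = 0 := by
  let g (s : Z) : RealProd ℕ := CoprodI.of (i := k) (angle (z k) p (γ s))⁻¹ * δ s
  have hd := (isTreePseudometric_treeDist (ι := ℕ)).coordinate k
  have const := eq_of_eventually_eq (f := fun t ↦ treeDist (g s) (g t) k) (fun t₀ ↦ ?_) t s
  · exact const.trans (hd.self _)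
  filter_upwards [hδ t₀, hγ.continuousAt.eventually
    (h.eventually_treeDist_of_angle_inv_mul k (near t₀) fun hp ↦ ne_one hp t₀)] with t ht zero
  have stationary : treeDist (g t₀) (g t) k = 0 := by
    simpa only [g, ht] using zero n hk (δ t₀)
  rw [← sub_eq_zero, ← abs_nonpos_iff, ← stationary, hd.comm (g t₀)]
  exact hd.abs_sub_le _ _ _

theorem treeDist_le_abs_angle [PreconnectedSpace Z] (h : IsBouquet z x₀) (hγ : Continuous γ)
    {s : Z} (near : ∀ t, γ t ∈ nearSide (z k) (γ s))
    (ne_one : z k (γ s) ≠ 1 → ∀ t, z k (γ t) ≠ 1) (hk : k < n)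
    {δ : Z → RealProd ℕ} (hδ : IsDevelopment (angleCocycle z n) γ δ) (t : Z) :
    treeDist (δ s) (δ t) k ≤ |(angle (z k) (γ s) (γ t)).toAdd| := by
  have rest := h.treeDist_of_angle_inv_mul hγ near ne_one hk hδ s t
  have last := congrFun (treeDist_of_mul k (angle (z k) (γ s) (γ t))⁻¹ 1 (δ t)) k
  rw [angle_eq_one rfl, inv_one, map_one, one_mul] at rest
  simp only [map_one, one_mul, toAdd_inv, toAdd_one, sub_zero, Pi.abs_apply, Pi.single_eq_same,
    abs_neg] at last
  exact (isTreePseudometric_treeDist.triangle _ _ _ k).trans_eq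
    ((congrArg₂ (· + ·) rest last).trans (zero_add _))

theorem eventually_treeDist_le [LocallyConnectedSpace Z] (h : IsBouquet z x₀) (hγ : Continuous γ)
    (k : ℕ) (s : Z) {ε : ℝ} (hε : 0 < ε) :
    ∀ᶠ t in 𝓝 s, ∀ n > k, ∀ δ : Z → RealProd ℕ, IsDevelopment (angleCocycle z n) γ δ →
      treeDist (δ s) (δ t) k ≤ ε := by
  have near : ∀ᶠ t in 𝓝 s, γ t ∈ nearSide (z k) (γ s) :=
    hγ.continuousAt.eventually_mem (isOpen_nearSide.mem_nhds mem_nearSide_self)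
  have ne_one : ∀ᶠ t in 𝓝 s, z k (γ s) ≠ 1 → z k (γ t) ≠ 1 :=
    eventually_imp_distrib_left.2 fun hs ↦
      ((z k).continuous.comp hγ).continuousAt.eventually_ne hs
  have angle_small : ∀ᶠ t in 𝓝 s, |(angle (z k) (γ s) (γ t)).toAdd| < ε := by
    refine ((continuousAt_angle mem_nearSide_self).comp hγ.continuousAt).abs.eventually_lt_const ?_
    simpa [angle_eq_one] using hε
  obtain ⟨V, ⟨hV, hs, hVc⟩, hVsub⟩ := (LocallyConnectedSpace.open_connected_basis s).mem_iff.1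
    (near.and (ne_one.and angle_small))
  have : PreconnectedSpace V := isPreconnected_iff_preconnectedSpace.1 hVc.isPreconnected
  filter_upwards [hV.mem_nhds hs] with t ht n hk δ hδ
  exact (h.treeDist_le_abs_angle (s := (⟨s, hs⟩ : V)) (hγ.comp continuous_subtype_val)
    (fun t ↦ (hVsub t.2).1) (fun hp t ↦ (hVsub t.2).2.1 hp) hk
    (hδ.comp continuous_subtype_val) ⟨t, ht⟩).trans (hVsub ht).2.2.le

theorem exists_treeDist_le [LocallyConnectedSpace Z] [PreconnectedSpace Z] (h : IsBouquet z x₀)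
    (hγ : Continuous γ) {δ : ℕ → Z → RealProd ℕ}
    (hδ : ∀ n, IsDevelopment (angleCocycle z n) γ (δ n))
    (k : ℕ) (s t : Z) : ∃ B, ∀ n > k, treeDist (δ n s) (δ n t) k ≤ B := by
  have hd (n : ℕ) := ((isTreePseudometric_treeDist (ι := ℕ)).coordinate k).triangle (δ n s)
  have const := eq_of_eventually_eq
    (f := fun t ↦ ∃ B, ∀ n > k, treeDist (δ n s) (δ n t) k ≤ B) (fun t₀ ↦ ?_) t s
  · refine const.mpr ⟨0, fun n _ ↦ ?_⟩
    rw [isTreePseudometric_treeDist.self, Pi.zero_apply]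
  filter_upwards [h.eventually_treeDist_le hγ k t₀ one_pos] with t ht
  refine propext ⟨fun ⟨B, hB⟩ ↦ ⟨B + 1, fun n hn ↦ ?_⟩, fun ⟨B, hB⟩ ↦ ⟨B + 1, fun n hn ↦ ?_⟩⟩
  · refine (hd n _ _).trans (add_le_add (hB n hn) ?_)
    rw [isTreePseudometric_treeDist.comm]
    exact ht n hn _ (hδ n)
  · exact (hd n _ _).trans (add_le_add (hB n hn) (ht n hn _ (hδ n)))

end IsBouquet

section Triviality

open Topology Monoid Filter unitInterval

variable {X : Type*} [TopologicalSpace X] {z : ℕ → C(X, Circle)} {x₀ : X}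

namespace IsBouquet

theorem eq_of_tendsto_treeDist {Z : Type*} [TopologicalSpace Z] [PreconnectedSpace Z]
    (h : IsBouquet z x₀) {γ : Z → X} {δ : ℕ → Z → RealProd ℕ}
    (hδ : ∀ n, IsDevelopment (angleCocycle z n) γ (δ n)) {l : Filter ℕ} [l.NeBot]
    (hl : l ≤ atTop) {s t : Z}
    (lim : Tendsto (fun n ↦ treeDist (δ n s) (δ n t)) l (𝓝 0)) : γ s = γ t := by
  refine h.injective <| funext fun k ↦ div_eq_one.1 ?_
  have sums : Tendsto (fun n ↦
      (exponentSum (δ n s)).toAdd k - (exponentSum (δ n t)).toAdd k) l (𝓝 0) :=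
    squeeze_zero_norm (fun n ↦ abs_exponentSum_sub_le (δ n s) (δ n t) k) (tendsto_pi_nhds.1 lim k)
  refine tendsto_nhds_unique_of_eventuallyEq tendsto_const_nhds
    (Circle.exp_zero ▸ (Circle.exp.continuous.tendsto 0).comp sums) ?_
  filter_upwards [hl (eventually_gt_atTop k)] with n hn
  exact (exp_exponentSum_sub hn (hδ n) s t).symm

instance : LocallyConnectedSpace I :=
  (isQuotientMap_projIcc (h := zero_le_one)).isCoinducing.locallyConnectedSpace

/-- The words of the developments need not converge, but their distances do along an ultrafilter. -/
theorem homotopic_refl (h : IsBouquet z x₀) (γ : Path x₀ x₀) {δ : ℕ → I → RealProd ℕ}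
    (hδ : ∀ n, IsDevelopment (angleCocycle z n) γ (δ n)) (h₀ : ∀ n, δ n 0 = 1)
    (h₁ : ∀ n, δ n 1 = 1) :
    γ.Homotopic (Path.refl x₀) := by
  have gt (k : ℕ) : ∀ᶠ n in hyperfilter ℕ, k < n :=
    Nat.hyperfilter_le_atTop (eventually_gt_atTop k)
  obtain ⟨D, hD, lim⟩ := IsTreePseudometric.exists_limit
    (fun n ↦ isTreePseudometric_treeDist.comap (δ n) (h₀ n)) (hyperfilter ℕ) fun k s t ↦ by
      obtain ⟨B, hB⟩ := h.exists_treeDist_le γ.continuous hδ k s t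
      exact ⟨B, (gt k).mono hB⟩
  have continuous (s : I) : Continuous (D s) := continuous_pi fun k ↦ by
    refine (hD.coordinate k).continuous_of_eventually_le (fun s ε hε ↦ ?_) s
    filter_upwards [h.eventually_treeDist_le γ.continuous k s hε] with t ht
    exact le_of_tendsto (tendsto_pi_nhds.1 (lim s t) k)
      ((gt k).mono fun n hn ↦ ht n hn _ (hδ n))
  obtain ⟨d, hd, hc, hdD⟩ := hD.exists_real continuous
  refine hd.homotopic_refl hc γ ((hdD 0 1).2 ?_) fun s t hst ↦ ?_
  · refine tendsto_nhds_unique (lim 0 1) ?_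
    simp only [h₀, h₁, isTreePseudometric_treeDist.self, tendsto_const_nhds]
  · exact h.eq_of_tendsto_treeDist hδ Nat.hyperfilter_le_atTop ((hdD s t).1 hst ▸ lim s t)

end IsBouquet

end Triviality

namespace IsBouquet

open Monoid unitInterval

variable {X : Type*} [TopologicalSpace X] {z : ℕ → C(X, Circle)} {x₀ : X} {n m : ℕ}

instance : TopologicalSpace (RealProd ℕ) := ⊥

instance : DiscreteTopology (RealProd ℕ) := ⟨rfl⟩

/-- The word read off the first `n` coordinates along a loop. -/
def word (h : IsBouquet z x₀) (n : ℕ) : FundamentalGroup X x₀ →* RealProd ℕ :=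
  (h.isLocalCocycle n).holonomy x₀

theorem word_mem_range_turnWords (h : IsBouquet z x₀) (n : ℕ) (g : FundamentalGroup X x₀) :
    h.word n g ∈ turnWords.range := by
  obtain ⟨γ, δ, rfl, hδ, h₀⟩ := (h.isLocalCocycle n).exists_loop_isDevelopment g
  rw [word, (h.isLocalCocycle n).holonomy_mk hδ h₀]
  exact h.mem_range_turnWords γ.continuous hδ γ.source γ.target h₀

theorem truncation_word (h : IsBouquet z x₀) (hnm : n ≤ m) (g : FundamentalGroup X x₀) :
    truncation n (h.word m g) = h.word n g := by
  obtain ⟨γ, δ, rfl, hδ, h₀⟩ := (h.isLocalCocycle m).exists_loop_isDevelopment g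
  have truncated : IsDevelopment (angleCocycle z n) γ fun t ↦ truncation n (δ t) := by
    simpa only [truncation_angleCocycle hnm] using hδ.map (truncation n)
  rw [word, word, (h.isLocalCocycle m).holonomy_mk hδ h₀,
    (h.isLocalCocycle n).holonomy_mk truncated (by rw [h₀, map_one])]

theorem eq_one_of_word_eq_one (h : IsBouquet z x₀) {g : FundamentalGroup X x₀}
    (hg : ∀ n, h.word n g = 1) : g = 1 := by
  induction g using Quotient.inductionOn with | _ γ =>
  have hδ (n : ℕ) := (h.isLocalCocycle n).isDevelopment_lift γ 1
  have h₀ (n : ℕ) := (h.isLocalCocycle n).coord_lift_zero γ 1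
  exact Quotient.sound <| h.homotopic_refl γ hδ h₀ fun n ↦
    ((h.isLocalCocycle n).holonomy_mk (hδ n) (h₀ n)).symm.trans (hg n)

end IsBouquet

namespace IsBouquet

variable {X : Type*} [TopologicalSpace X] {z : ℕ → C(X, Circle)} {x₀ : X}

theorem nonempty_mulEquiv_int (h : IsBouquet z x₀) (A : Subgroup (FundamentalGroup X x₀))
    [Nontrivial A] [IsMulCommutative A] : Nonempty (A ≃* Multiplicative ℤ) := by
  refine nonempty_mulEquiv_int_of_iInf_ker
    (fun n ↦ (h.word n).codRestrict turnWords.range (h.word_mem_range_turnWords n)) ?_ ?_ A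
  all_goals simp only [MonoidHom.ker_codRestrict]
  · intro n m hnm g (hg : h.word m g = 1)
    rw [MonoidHom.mem_ker, ← h.truncation_word hnm, hg, map_one]
  · exact eq_bot_iff.2 fun g hg ↦ h.eq_one_of_word_eq_one (Subgroup.mem_iInf.1 hg)

theorem not_nonempty_mulEquiv_rat (h : IsBouquet z x₀) (A : Subgroup (FundamentalGroup X x₀)) :
    ¬Nonempty (A ≃* Multiplicative ℚ) := by
  rintro ⟨e⟩
  have : Nontrivial A := e.toEquiv.nontrivial
  have : IsMulCommutative A := .of_comm fun a b ↦ e.injective <| by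
    rw [map_mul, map_mul, mul_comm]
  exact not_nonempty_rat_mulEquiv_int ((h.nonempty_mulEquiv_int A).map e.symm.trans)

end IsBouquet

section Earring

open Topology

variable {k l : ℕ} {p q : HEset}

/-- The squared distance to the wild point. -/
def sqNorm (p : HEset) : ℝ := p.1.1 ^ 2 + p.1.2 ^ 2

/-- `p` lies on the circle of radius `1 / (k + 1)` of the earring. -/
def OnEarringCircle (k : ℕ) (p : HEset) : Prop := -2 * p.1.1 = (k + 1) * sqNorm p

theorem continuous_sqNorm : Continuous sqNorm := by
  unfold sqNorm
  fun_prop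

theorem sqNorm_pos (hp : p ≠ h0) : 0 < sqNorm p := by
  refine (add_nonneg (sq_nonneg _) (sq_nonneg _)).lt_of_ne fun h ↦ hp ?_
  have := (add_eq_zero_iff_of_nonneg (sq_nonneg p.1.1) (sq_nonneg p.1.2)).1 h.symm
  exact Subtype.ext (Prod.ext (sq_eq_zero_iff.1 this.1) (sq_eq_zero_iff.1 this.2))

theorem onEarringCircle_h0 (k : ℕ) : OnEarringCircle k h0 := by
  simp [OnEarringCircle, sqNorm, h0]

theorem exists_onEarringCircle (p : HEset) : ∃ k, OnEarringCircle k p := by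
  obtain ⟨⟨x, y⟩, n, hn⟩ := p
  refine ⟨n.natPred, ?_⟩
  have natPred_add_one : (n.natPred + 1 : ℝ) = n := mod_cast n.natPred_add_one
  have n_ne_zero : (n : ℝ) ≠ 0 := mod_cast n.ne_zero
  rw [OnEarringCircle, sqNorm, natPred_add_one]
  field_simp at hn
  exact mul_left_cancel₀ n_ne_zero (by linear_combination -hn)

theorem onEarringCircle_and_ne_h0_iff : OnEarringCircle k p ∧ p ≠ h0 ↔
    k * sqNorm p < -2 * p.1.1 ∧ -2 * p.1.1 < (k + 2) * sqNorm p := by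
  constructor
  · rintro ⟨hk, hp⟩
    have := sqNorm_pos hp
    constructor <;> rw [hk] <;> linarith
  · rintro ⟨lower, upper⟩
    have ne : p ≠ h0 := by
      rintro rfl
      simp [h0, sqNorm] at lower
    obtain ⟨m, hm⟩ := exists_onEarringCircle p
    rw [hm, mul_lt_mul_iff_left₀ (sqNorm_pos ne)] at lower upper
    norm_cast at lower upper
    obtain rfl : m = k := by lia
    exact ⟨hm, ne⟩

theorem eq_h0_of_onEarringCircle (hkl : k ≠ l) (hk : OnEarringCircle k p)
    (hl : OnEarringCircle l p) : p = h0 := by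
  by_contra hp
  have := mul_right_cancel₀ (sqNorm_pos hp).ne' (hk.symm.trans hl)
  exact hkl (Nat.succ_injective (mod_cast this))

theorem eq_h0_of_mem_frontier (hp : p ∈ frontier {p | OnEarringCircle k p}) : p = h0 := by
  by_contra hne
  have isClosed : IsClosed {p | OnEarringCircle k p} :=
    isClosed_eq (by fun_prop) (continuous_const.mul continuous_sqNorm)
  have isOpen : IsOpen {p : HEset |
      k * sqNorm p < -2 * p.1.1 ∧ -2 * p.1.1 < (k + 2) * sqNorm p} :=
    (isOpen_lt (continuous_const.mul continuous_sqNorm) (by fun_prop)).inter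
      (isOpen_lt (by fun_prop) (continuous_const.mul continuous_sqNorm))
  refine hp.2 (mem_interior.2 ⟨_, fun q hq ↦ ?_, isOpen, ?_⟩)
  · exact (onEarringCircle_and_ne_h0_iff.2 hq).1
  · exact onEarringCircle_and_ne_h0_iff.1 ⟨isClosed.frontier_subset hp, hne⟩

/-- The similarity of the plane that carries the circle of radius `1 / (k + 1)` to the unit circle
and the wild point to `1`. -/
def rescale (k : ℕ) (p : HEset) : ℂ := 1 + (k + 1) * Complex.equivRealProd.symm p

theorem rescale_injective (k : ℕ) : Function.Injective (rescale k) := fun p q hpq ↦ by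
  have hk : (k + 1 : ℂ) ≠ 0 := k.cast_add_one_ne_zero
  exact Subtype.ext <| Complex.equivRealProd.symm.injective <|
    mul_left_cancel₀ hk (add_left_cancel hpq)

theorem rescale_h0 (k : ℕ) : rescale k h0 = 1 := by
  simp [rescale, h0]

theorem continuous_rescale (k : ℕ) : Continuous (rescale k) := by
  have := Complex.equivRealProdCLM.symm.continuous.comp (continuous_subtype_val (p := (· ∈ HEset)))
  exact continuous_const.add (continuous_const.mul this)

theorem norm_rescale (hp : OnEarringCircle k p) : ‖rescale k p‖ = 1 := by
  have re : (rescale k p).re = 1 + (k + 1) * p.1.1 := by simp [rescale]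
  have im : (rescale k p).im = (k + 1) * p.1.2 := by simp [rescale]
  rw [Complex.norm_def, Real.sqrt_eq_one, Complex.normSq_apply, re, im]
  rw [OnEarringCircle, sqNorm] at hp
  linear_combination (-(k : ℝ) - 1) * hp

open Classical in
/-- The projection of the earring to its circle of radius `1 / (k + 1)`, which collapses the other
circles to the wild point. -/
def earringCoord (k : ℕ) : C(HEset, Circle) where
  toFun p := ⟨if OnEarringCircle k p then rescale k p else 1, mem_sphere_zero_iff_norm.2 <| by
    split_ifs with hp
    exacts [norm_rescale hp, norm_one]⟩
  continuous_toFun := .subtype_mk (.if (fun p hp ↦ by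
    rw [eq_h0_of_mem_frontier hp, rescale_h0]) (continuous_rescale k) continuous_const) _

theorem coe_earringCoord (hp : OnEarringCircle k p) : (earringCoord k p : ℂ) = rescale k p :=
  if_pos hp

theorem earringCoord_of_not (hp : ¬OnEarringCircle k p) : earringCoord k p = 1 :=
  Circle.ext (if_neg hp)

theorem earringCoord_h0 (k : ℕ) : earringCoord k h0 = 1 :=
  Circle.ext ((coe_earringCoord (onEarringCircle_h0 k)).trans (rescale_h0 k))

theorem isOnCircle_earringCoord (hp : OnEarringCircle k p) : IsOnCircle earringCoord k p := by
  intro l hlk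
  by_cases hl : OnEarringCircle l p
  · rw [eq_h0_of_onEarringCircle hlk hl hp, earringCoord_h0]
  · exact earringCoord_of_not hl

theorem eq_of_earringCoord_eq (hp : OnEarringCircle k p) (hq : OnEarringCircle k q)
    (h : earringCoord k p = earringCoord k q) : p = q :=
  rescale_injective k <| by rw [← coe_earringCoord hp, ← coe_earringCoord hq, h]

theorem isBouquet_earringCoord : IsBouquet earringCoord h0 where
  base := earringCoord_h0
  exists_isOnCircle p := (exists_onEarringCircle p).imp fun _ ↦ isOnCircle_earringCoord
  injective p q hpq := by
    obtain ⟨k, hk⟩ := exists_onEarringCircle p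
    obtain ⟨l, hl⟩ := exists_onEarringCircle q
    by_cases hkq : OnEarringCircle k q
    · exact eq_of_earringCoord_eq hk hkq (congrFun hpq k)
    · have hp : p = h0 := eq_of_earringCoord_eq hk (onEarringCircle_h0 k) <|
        (congrFun hpq k).trans <| (earringCoord_of_not hkq).trans (earringCoord_h0 k).symm
      exact eq_of_earringCoord_eq (hp ▸ onEarringCircle_h0 l) hl (congrFun hpq l)

end Earring

/-- Every nonzero abelian subgroup of the Hawaiian earring group `π₁(H)` is isomorphic to
`ℤ`; consequently `π₁(H)` has no subgroup isomorphic to the additive group `ℚ`. -/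
theorem hawaiian_group_abelian_subgroups :
    (∀ G : Subgroup (FundamentalGroup HEset h0), G ≠ ⊥ →
      (∀ a b : G, a * b = b * a) → Nonempty (G ≃* Multiplicative ℤ)) ∧
    (∀ G : Subgroup (FundamentalGroup HEset h0),
      ¬Nonempty (G ≃* Multiplicative ℚ)) := by
  refine ⟨fun G nontrivial comm ↦ ?_, isBouquet_earringCoord.not_nonempty_mulEquiv_rat⟩
  have : Nontrivial G := G.nontrivial_iff_ne_bot.2 nontrivial
  have : IsMulCommutative G := .of_comm comm
  exact isBouquet_earringCoord.nonempty_mulEquiv_int G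

end EarringPaper
end
end
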